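/- Every finite dimensional compact metric space K satisfies 2·dim K − 1 ≤ dim K² ≤ 2·dim K; consequently either dim K² = 2·dim K or dim K² = 2·dim K − 1. -/

import Mathlib

open Filter Set
open scoped ENNReal

namespace MeanDimPaper

variable {X : Type*} [TopologicalSpace X]

/-- `α` is an open cover of `X`. -/
def IsOpenCover (α : Set (Set X)) : Prop :=
  (∀ U ∈ α, IsOpen U) ∧ ⋃₀ α = Set.univ

/-- The order of a cover `α`: the maximum `n ≥ 0` such that there exist `n + 1`
pairwise distinct members of `α` with nonempty common intersection. -/
noncomputable def ord (α : Set (Set X)) : ℕ∞ :=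
  ⨆ n ∈ {n : ℕ | ∃ f : Fin (n + 1) → Set X,
      Function.Injective f ∧ (∀ i, f i ∈ α) ∧ (⋂ i, f i).Nonempty}, (n : ℕ∞)

/-- `β` refines `α`: every member of `β` is contained in some member of `α`. -/
def Refines (β α : Set (Set X)) : Prop := ∀ V ∈ β, ∃ U ∈ α, V ⊆ U

/-- `D(α)`: the minimum of `ord β` over open covers `β` refining `α`. -/
noncomputable def covD (α : Set (Set X)) : ℕ∞ :=
  ⨅ β ∈ {β : Set (Set X) | IsOpenCover β ∧ Refines β α}, ord β

/-- Topological (covering) dimension: the supremum of `D(α)` over open covers `α`. -/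
noncomputable def topDim (X : Type*) [TopologicalSpace X] : ℕ∞ :=
  ⨆ α ∈ {α : Set (Set X) | IsOpenCover α}, covD α

/-- Diameter of a set with respect to a distance function `d`. -/
noncomputable def diamD (d : X → X → ℝ) (U : Set X) : ℝ :=
  sSup {r | ∃ x ∈ U, ∃ y ∈ U, r = d x y}

/-- Mesh of a cover: the supremum of the diameters of its members. -/
noncomputable def mesh (d : X → X → ℝ) (α : Set (Set X)) : ℝ :=
  sSup (diamD d '' α)

/-- `widim_ε(X, d)`: the minimum of `D(α)` over open covers `α` with `mesh(α, d) < ε`. -/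
noncomputable def widim (ε : ℝ) (d : X → X → ℝ) : ℕ∞ :=
  ⨅ α ∈ {α : Set (Set X) | IsOpenCover α ∧ mesh d α < ε}, covD α

/-- `d` is a metric on `X` compatible with the topology of `X`. -/
structure IsCompatMetric {X : Type*} [TopologicalSpace X] (d : X → X → ℝ) : Prop where
  refl : ∀ x, d x x = 0
  eq_of : ∀ x y, d x y = 0 → x = y
  symm : ∀ x y, d x y = d y x
  triangle : ∀ x y z, d x z ≤ d x y + d y z
  isOpen_iff : ∀ U : Set X, IsOpen U ↔ ∀ x ∈ U, ∃ ε > 0, ∀ y, d x y < ε → y ∈ U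

/-- The dynamical distance `d_n(x, y) = max_{0 ≤ i < n} d(Tⁱ x, Tⁱ y)`. -/
noncomputable def dynDist (d : X → X → ℝ) (T : X → X) (n : ℕ) (x y : X) : ℝ :=
  sSup {r | ∃ i < n, r = d (T^[i] x) (T^[i] y)}

/-- Mean dimension `mdim(X, T)` computed with the metric `d`:
`lim_{ε → 0} lim_{n → ∞} widim_ε(X, d_n) / n`.  The inner limit exists (by
subadditivity of `n ↦ widim_ε(X, d_n)`) so it coincides with the liminf, and the inner
quantity is monotone as `ε` decreases, so the limit as `ε → 0` is the supremum over
`ε > 0`. -/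
noncomputable def mdim (T : X → X) (d : X → X → ℝ) : ℝ≥0∞ :=
  ⨆ (ε : ℝ) (_ : 0 < ε),
    Filter.liminf (fun n : ℕ => (widim ε (dynDist d T n) : ℝ≥0∞) / (n : ℝ≥0∞)) Filter.atTop

/-- The full shift `σ` on the alphabet `K`: `σ((xₙ)ₙ) = (xₙ₊₁)ₙ`. -/
def shift (K : Type*) : (ℤ → K) → ℤ → K := fun x n => x (n + 1)

/-!
Suppose that `n = dim K ≥ 2` and `dim (K × K) ≤ 2 n - 2`. Let `f` map `K` to the `n`-simplex and let
`A` be the preimage of the boundary of the simplex. The obstruction to extending `f` from `A` to a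
map of `K` to the boundary is the class `c` in `Hⁿ(K, A)` pulled back from the simplex.

The cross product `c × c` lives in degree `2 n`, so it vanishes on the nerve of a fine cover of
`K × K`; a diagonal approximation by acyclic carriers turns this into an equation on the nerve of a
cover of `K`, whose consequence is that `c` is torsion. A torsion class produces, by the Künneth
formula, a class of degree `2 n - 1` on `K × K`, and since this one vanishes too, `c = 0`. By the
Hopf extension theorem `f` can then be changed, relative to `A`, to a map into the boundary. As this
holds for every `f`, also on closed subsets of `K`, the simplices of dimension `n` can be removed
from the nerves of covers, and `dim K ≤ n - 1`.
-/

section CoveringDimension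

variable {ι κ : Type*}

/-- An indexed open cover. Unlike the set-of-sets covers of `IsOpenCover`, it may repeat members. -/
structure IsIndexedCover (U : ι → Set X) : Prop where
  isOpen : ∀ i, IsOpen (U i)
  exists_mem : ∀ x, ∃ i, x ∈ U i

/-- An indexed open cover of order at most `n`; members are counted by their indices, so that a
repeated member counts several times. -/
structure IsCoverOfOrderLE (n : ℕ) (U : ι → Set X) : Prop extends IsIndexedCover U where
  card_le : ∀ x (s : Finset ι), (∀ i ∈ s, x ∈ U i) → s.card ≤ n + 1

/-- `DimLE n X`: the covering dimension is at most `n`, in terms of finite indexed covers. -/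
def DimLE (n : ℕ) (X : Type*) [TopologicalSpace X] : Prop :=
  ∀ (k : ℕ) (U : Fin k → Set X), IsIndexedCover U →
    ∃ (m : ℕ) (V : Fin m → Set X), IsCoverOfOrderLE n V ∧ ∀ i, ∃ j, V i ⊆ U j

theorem IsIndexedCover.comp_equiv {U : ι → Set X} (hU : IsIndexedCover U) (e : κ ≃ ι) :
    IsIndexedCover (U ∘ e) where
  isOpen _ := hU.isOpen _
  exists_mem x := by
    obtain ⟨i, hi⟩ := hU.exists_mem x
    exact ⟨e.symm i, by simpa using hi⟩

theorem IsCoverOfOrderLE.comp_equiv {n : ℕ} {U : ι → Set X} (hU : IsCoverOfOrderLE n U)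
    (e : κ ≃ ι) : IsCoverOfOrderLE n (U ∘ e) where
  toIsIndexedCover := hU.toIsIndexedCover.comp_equiv e
  card_le x s hs := by
    simpa using hU.card_le x (s.map e.toEmbedding) fun i hi => by
      obtain ⟨j, hj, rfl⟩ := Finset.mem_map.1 hi
      exact hs j hj

theorem IsIndexedCover.prod_inter {U : ι → Set X} {W : κ → Set X} (hU : IsIndexedCover U)
    (hW : IsIndexedCover W) : IsIndexedCover fun p : ι × κ => U p.1 ∩ W p.2 where
  isOpen _ := (hU.isOpen _).inter (hW.isOpen _)
  exists_mem x := by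
    obtain ⟨i, hi⟩ := hU.exists_mem x
    obtain ⟨j, hj⟩ := hW.exists_mem x
    exact ⟨(i, j), hi, hj⟩

theorem IsIndexedCover.exists_finset [CompactSpace X] {U : ι → Set X} (hU : IsIndexedCover U) :
    ∃ T : Finset ι, IsIndexedCover fun i : T => U i := by
  obtain ⟨T, hT⟩ := isCompact_univ.elim_finite_subcover U hU.isOpen
    fun x _ => mem_iUnion.2 (hU.exists_mem x)
  refine ⟨T, fun i => hU.isOpen i, fun x => ?_⟩
  obtain ⟨i, hi, hx⟩ := mem_iUnion₂.1 (hT (mem_univ x))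
  exact ⟨⟨i, hi⟩, hx⟩

theorem IsIndexedCover.isOpenCover_range {U : ι → Set X} (hU : IsIndexedCover U) :
    IsOpenCover (range U) :=
  ⟨forall_mem_range.2 hU.isOpen, by simpa [sUnion_range, eq_univ_iff_forall] using hU.exists_mem⟩

theorem IsOpenCover.isIndexedCover {α : Set (Set X)} (hα : IsOpenCover α) :
    IsIndexedCover fun U : α => (U : Set X) where
  isOpen U := hα.1 U U.2
  exists_mem x := by
    obtain ⟨U, hU, hx⟩ := mem_sUnion.1 (hα.2 ▸ mem_univ x)
    exact ⟨⟨U, hU⟩, hx⟩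

theorem ord_le_iff {S : Type*} {α : Set (Set S)} {n : ℕ} :
    ord α ≤ n ↔ ∀ x (s : Finset (Set S)), ↑s ⊆ α → (∀ U ∈ s, x ∈ U) → s.card ≤ n + 1 := by
  simp only [ord, iSup₂_le_iff, Nat.cast_le, mem_ofPred_eq]
  constructor
  · intro h x s hsα hsx
    rcases hs : s.card with _ | m
    · exact zero_le
    refine Nat.succ_le_succ (h m ⟨fun i => s.equivFinOfCardEq hs |>.symm i, ?_, ?_, x, ?_⟩)
    · exact Subtype.val_injective.comp (Equiv.injective _)
    · exact fun i => hsα (Subtype.prop _)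
    · exact mem_iInter.2 fun i => hsx _ (Subtype.prop _)
  · rintro h m ⟨f, hf, hfα, x, hx⟩
    simpa using h x (Finset.univ.map ⟨f, hf⟩) (by simpa [range_subset_iff] using hfα)
      (by simpa using hx)

theorem IsCoverOfOrderLE.ord_range_le {n : ℕ} {U : ι → Set X} (hU : IsCoverOfOrderLE n U) :
    ord (range U) ≤ n := by
  classical
  refine ord_le_iff.2 fun x s hs hx => ?_
  choose g hg using fun V : s => hs V.2
  have hginj : Function.Injective g := fun V W h => Subtype.ext ((hg V).symm.trans (h ▸ hg W))
  simpa using hU.card_le x (s.attach.map ⟨g, hginj⟩) fun i hi => by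
    obtain ⟨V, -, rfl⟩ := Finset.mem_map.1 hi
    exact (hg V).symm ▸ hx _ V.2

theorem covD_le_iff {α : Set (Set X)} {n : ℕ} :
    covD α ≤ n ↔ ∃ β, (IsOpenCover β ∧ Refines β α) ∧ ord β ≤ n := by
  have lt_succ_iff (a : ℕ∞) : a ≤ n ↔ a < (n : ℕ∞) + 1 :=
    (ENat.lt_add_one_iff (ENat.natCast_ne_top n)).symm
  simp only [lt_succ_iff, covD, iInf_lt_iff, exists_prop, mem_ofPred_eq]

theorem topDim_le_iff_forall_covD_le {n : ℕ∞} :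
    topDim X ≤ n ↔ ∀ α : Set (Set X), IsOpenCover α → covD α ≤ n := by
  simp [topDim]

theorem DimLE.exists_refinement {n : ℕ} (h : DimLE n X) [Finite ι] {U : ι → Set X}
    (hU : IsIndexedCover U) :
    ∃ (m : ℕ) (V : Fin m → Set X), IsCoverOfOrderLE n V ∧ ∀ i, ∃ j, V i ⊆ U j := by
  obtain ⟨k, ⟨e⟩⟩ := Finite.exists_equiv_fin ι
  obtain ⟨m, V, hV, hVU⟩ := h k (U ∘ e.symm) (hU.comp_equiv _)
  exact ⟨m, V, hV, fun i => (hVU i).imp' e.symm fun _ hj => hj⟩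

theorem DimLE.of_finite {n : ℕ}
    (h : ∀ (k : ℕ) (U : Fin k → Set X), IsIndexedCover U → ∃ (ι : Type) (_ : Finite ι)
      (V : ι → Set X), IsCoverOfOrderLE n V ∧ ∀ i, ∃ j, V i ⊆ U j) : DimLE n X := by
  intro k U hU
  obtain ⟨ι, _, V, hV, hVU⟩ := h k U hU
  obtain ⟨m, ⟨e⟩⟩ := Finite.exists_equiv_fin ι
  exact ⟨m, V ∘ e.symm, hV.comp_equiv e.symm, fun i => hVU _⟩

theorem topDim_le_iff_dimLE [CompactSpace X] {n : ℕ} : topDim X ≤ n ↔ DimLE n X := by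
  rw [topDim_le_iff_forall_covD_le]
  constructor
  · intro h k U hU
    obtain ⟨β, ⟨hβ, hβU⟩, hord⟩ := covD_le_iff.1 (h _ hU.isOpenCover_range)
    obtain ⟨T, hT⟩ := hβ.isIndexedCover.exists_finset
    have hTn : IsCoverOfOrderLE n fun i : T => (i.1.1 : Set X) := by
      refine ⟨hT, fun x s hs => ?_⟩
      let val : T ↪ Set X := (Function.Embedding.subtype _).trans (Function.Embedding.subtype _)
      simpa using ord_le_iff.1 hord x (s.map val)
        (by rintro _ hV; obtain ⟨i, -, rfl⟩ := Finset.mem_map.1 hV; exact i.1.2)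
        (by rintro _ hV; obtain ⟨i, hi, rfl⟩ := Finset.mem_map.1 hV; exact hs i hi)
    let e := T.equivFin.symm
    refine ⟨_, _, hTn.comp_equiv e, fun i => ?_⟩
    obtain ⟨_, ⟨j, rfl⟩, hj⟩ := hβU _ (e i).1.2
    exact ⟨j, hj⟩
  · intro h α hα
    obtain ⟨T, hT⟩ := hα.isIndexedCover.exists_finset
    obtain ⟨m, V, hV, hVα⟩ := h.exists_refinement hT
    refine covD_le_iff.2 ⟨range V, ⟨hV.isOpenCover_range, ?_⟩, hV.ord_range_le⟩
    rintro _ ⟨i, rfl⟩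
    obtain ⟨j, hj⟩ := hVα i
    exact ⟨_, j.1.2, hj⟩

theorem DimLE.exists_monotone_refinement {n : ℕ} (h : DimLE n X) {k : ℕ} {U : Fin k → Set X}
    (hU : IsIndexedCover U) [Finite ι] {W : ι → Set X} (hW : IsIndexedCover W) :
    ∃ (m : ℕ) (V : Fin m → Set X) (t : Fin m → Fin k), IsCoverOfOrderLE n V ∧ Monotone t ∧
      (∀ i, V i ⊆ U (t i)) ∧ ∀ i, ∃ j, V i ⊆ W j := by
  obtain ⟨m, V, hV, hVUW⟩ := h.exists_refinement (hU.prod_inter hW)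
  choose t ht using hVUW
  let σ : Equiv.Perm (Fin m) := Tuple.sort fun i => (t i).1
  exact ⟨m, V ∘ σ, (fun i => (t i).1) ∘ σ, hV.comp_equiv σ, Tuple.monotone_sort _,
    fun i => (ht _).trans inter_subset_left, fun i => ⟨_, (ht (σ i)).trans inter_subset_right⟩⟩

theorem DimLE.of_isClosedEmbedding {Y : Type*} [TopologicalSpace Y] {n : ℕ} (h : DimLE n Y)
    {f : X → Y} (hf : Topology.IsClosedEmbedding f) : DimLE n X := by
  intro k U hU
  rcases isEmpty_or_nonempty X with hX | ⟨⟨x₀⟩⟩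
  · exact ⟨k, U, ⟨hU, fun x => hX.elim x⟩, fun i => ⟨i, subset_rfl⟩⟩
  obtain ⟨i₀, -⟩ := hU.exists_mem x₀
  choose O hO hOU using fun i => hf.isInducing.isOpen_iff.1 (hU.isOpen i)
  have hcover : IsIndexedCover fun i => O i ∪ (range f)ᶜ := by
    refine ⟨fun i => (hO i).union hf.isClosed_range.isOpen_compl, fun y => ?_⟩
    by_cases hy : y ∈ range f
    · obtain ⟨x, rfl⟩ := hy
      obtain ⟨i, hi⟩ := hU.exists_mem x
      exact ⟨i, Or.inl (by rwa [← hOU] at hi)⟩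
    · exact ⟨i₀, Or.inr hy⟩
  obtain ⟨m, V, hV, hVO⟩ := h k _ hcover
  refine ⟨m, fun i => f ⁻¹' V i, ⟨⟨fun i => (hV.isOpen i).preimage hf.continuous,
    fun x => hV.exists_mem (f x)⟩, fun x => hV.card_le (f x)⟩, fun i => ?_⟩
  obtain ⟨j, hj⟩ := hVO i
  refine ⟨j, fun x hx => ?_⟩
  rcases hj hx with hxO | hxf
  · exact hOU j ▸ hxO
  · exact absurd (mem_range_self x) hxf

end CoveringDimension

section Product

variable {ι : Type*}

/-- A colouring subordinate to `U` with `N` colours: each colour carries a disjoint family of open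
sets shrinking `U`, and every point is covered by at least `r` of the colours. -/
structure IsColoring (U : ι → Set X) (N r : ℕ) (V : Fin N → ι → Set X) : Prop where
  isOpen : ∀ c i, IsOpen (V c i)
  subset : ∀ c i, V c i ⊆ U i
  disjoint : ∀ c, Pairwise (Function.onFun Disjoint (V c))
  le_ncard : ∀ x, r ≤ {c | ∃ i, x ∈ V c i}.ncard

theorem IsColoring.index_eq {U : ι → Set X} {N r : ℕ} {V : Fin N → ι → Set X}
    (hV : IsColoring U N r V) {c : Fin N} {i j : ι} {x : X} (hi : x ∈ V c i) (hj : x ∈ V c j) :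
    i = j := by
  by_contra hij
  exact disjoint_left.1 (hV.disjoint c hij) hi hj

theorem IsIndexedCover.exists_partitionOfUnity [NormalSpace X] [Finite ι] {U : ι → Set X}
    (hU : IsIndexedCover U) : ∃ f : PartitionOfUnity ι X, ∀ i x, 0 < f i x → x ∈ U i := by
  obtain ⟨f, hf⟩ := PartitionOfUnity.exists_isSubordinate_of_locallyFinite isClosed_univ U
    hU.isOpen (locallyFinite_of_finite U) fun x _ => mem_iUnion.2 (hU.exists_mem x)
  exact ⟨f, fun i x hx => hf i (subset_tsupport _ hx.ne')⟩

/-- The open star, in the barycentric subdivision, of the barycentre of the face `S`. -/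
def dominanceSet (f : ι → X → ℝ) (S : Finset ι) : Set X :=
  {x | (∀ i ∈ S, 0 < f i x) ∧ ∀ i ∈ S, ∀ j ∉ S, f j x < f i x}

theorem isOpen_dominanceSet [Finite ι] {f : ι → X → ℝ} (hf : ∀ i, Continuous (f i))
    (S : Finset ι) : IsOpen (dominanceSet f S) := by
  simp only [dominanceSet, ofPred_and, ofPred_forall]
  refine (isOpen_biInter_finset fun i _ => isOpen_lt continuous_const (hf i)).inter ?_
  exact isOpen_biInter_finset fun i _ => isOpen_iInter_of_finite fun j =>
    isOpen_iInter_of_finite fun _ => isOpen_lt (hf j) (hf i)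

theorem eq_of_mem_dominanceSet_of_card_eq {S : Type*} {f : ι → S → ℝ} {A B : Finset ι} {x : S}
    (hA : x ∈ dominanceSet f A) (hB : x ∈ dominanceSet f B) (hAB : A.card = B.card) : A = B := by
  by_contra hne
  obtain ⟨i, hiA, hiB⟩ := Finset.not_subset.1 fun h =>
    hne (Finset.eq_of_subset_of_card_le h hAB.ge)
  obtain ⟨j, hjB, hjA⟩ := Finset.not_subset.1 fun h =>
    hne (Finset.eq_of_subset_of_card_le h hAB.le).symm
  exact lt_asymm (hA.2 i hiA j hjA) (hB.2 j hjB i hiB)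

theorem IsCoverOfOrderLE.exists_isColoring [NormalSpace X] [Finite ι] {n : ℕ} {U : ι → Set X}
    (hU : IsCoverOfOrderLE n U) : ∃ V, IsColoring U (n + 1) 1 V := by
  classical
  have := Fintype.ofFinite ι
  obtain ⟨f, hf⟩ := hU.exists_partitionOfUnity
  let D := dominanceSet fun i => f i
  refine ⟨fun c i => ⋃ A ∈ {A : Finset ι | A.card = c + 1 ∧ ∃ hA : A.Nonempty, hA.choose = i},
    D A, fun c i => ?_, fun c i x hx => ?_, fun c i j hij => ?_, fun x => ?_⟩
  · exact isOpen_biUnion fun A _ => isOpen_dominanceSet (fun i => (f i).continuous) A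
  · obtain ⟨A, ⟨-, hA, rfl⟩, hxA⟩ := mem_iUnion₂.1 hx
    exact hf _ x (hxA.1 _ hA.choose_spec)
  · refine disjoint_left.2 fun x hxi hxj => hij ?_
    obtain ⟨A, ⟨hAc, _, rfl⟩, hA⟩ := mem_iUnion₂.1 hxi
    obtain ⟨B, ⟨hBc, _, rfl⟩, hB⟩ := mem_iUnion₂.1 hxj
    obtain rfl := eq_of_mem_dominanceSet_of_card_eq hA hB (hAc.trans hBc.symm)
    rfl
  · let A : Finset ι := Finset.univ.filter fun i => 0 < f i x
    have hA (i) : i ∈ A ↔ 0 < f i x := by simp [A]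
    have hcard : A.card ≤ n + 1 := hU.card_le x A fun i hi => hf i x ((hA i).1 hi)
    obtain ⟨i, hi⟩ := f.exists_pos (mem_univ x)
    have hne : A.Nonempty := ⟨i, (hA i).2 hi⟩
    have hpos : 0 < A.card := hne.card_pos
    have hxA : x ∈ D A := ⟨fun i => (hA i).1, fun i hi j hj =>
      (not_lt.1 fun h => hj ((hA j).2 h)).trans_lt ((hA i).1 hi)⟩
    refine (Set.ncard_pos (toFinite _)).2 ⟨⟨A.card - 1, by omega⟩, hne.choose, ?_⟩
    exact mem_biUnion ⟨(Nat.sub_add_cancel hpos).symm, hne, rfl⟩ hxA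

theorem exists_disjoint_open_of_le_ncard [NormalSpace X] {κ : Type*} [Finite κ] {A : κ → Set X}
    (hA : ∀ c, IsOpen (A c)) {r : ℕ} (hr : ∀ x, r ≤ {c | x ∈ A c}.ncard) :
    ∃ O : {J : Set κ // J.ncard = r} → Set X, (∀ J, IsOpen (O J)) ∧
      Pairwise (Function.onFun Disjoint O) ∧ ∀ x J, {c | x ∈ A c} = J.1 → x ∈ O J := by
  let G : {J : Set κ // J.ncard = r} → Set X := fun J => ⋂ c ∈ J.1, A c
  have hGopen (J) : IsOpen (G J) := (toFinite _).isOpen_biInter fun c _ => hA c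
  have hGcover : ⋃ J, G J = univ := by
    refine eq_univ_of_forall fun x => ?_
    obtain ⟨J, hJ, hJr⟩ := Set.exists_subset_card_eq (hr x)
    exact mem_iUnion.2 ⟨⟨J, hJr⟩, mem_iInter₂.2 hJ⟩
  obtain ⟨H, hHcover, hHclosed, hHG⟩ :=
    exists_iUnion_eq_closed_subset hGopen (fun _ => toFinite _) hGcover
  refine ⟨fun J => G J \ ⋃ K ∈ ({J}ᶜ : Set _), H K, fun J => ?_, fun J K hJK => ?_,
    fun x J hxJ => ⟨mem_iInter₂.2 fun c hc => hxJ.ge hc, fun hx => ?_⟩⟩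
  · exact (hGopen J).sdiff ((toFinite _).isClosed_biUnion fun K _ => hHclosed K)
  · refine disjoint_left.2 fun x hxJ hxK => ?_
    obtain ⟨L, hL⟩ := mem_iUnion.1 (hHcover ▸ mem_univ x)
    by_cases hLJ : L = J
    · exact hxK.2 (mem_biUnion (hLJ ▸ hJK) hL)
    · exact hxJ.2 (mem_biUnion hLJ hL)
  · obtain ⟨K, hKJ, hxK⟩ := mem_iUnion₂.1 hx
    have hKsub : K.1 ⊆ J.1 := fun c hc => hxJ.le (mem_iInter₂.1 (hHG K hxK) c hc)
    exact hKJ (Subtype.ext (eq_of_subset_of_ncard_le hKsub (J.2.trans K.2.symm).le))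

theorem IsColoring.snoc {U : ι → Set X} {N r : ℕ} {V : Fin N → ι → Set X}
    (hV : IsColoring U N r V) {V' : ι → Set X} (hopen : ∀ i, IsOpen (V' i))
    (hsub : ∀ i, V' i ⊆ U i) (hdisj : Pairwise (Function.onFun Disjoint V'))
    (hmem : ∀ x, {c | ∃ i, x ∈ V c i}.ncard = r → ∃ i, x ∈ V' i) :
    IsColoring U (N + 1) (r + 1) (Fin.snoc V V') where
  isOpen := Fin.forall_fin_succ'.2 (by simpa using ⟨hV.isOpen, hopen⟩)
  subset := Fin.forall_fin_succ'.2 (by simpa using ⟨hV.subset, hsub⟩)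
  disjoint := Fin.forall_fin_succ'.2 (by simpa using ⟨hV.disjoint, hdisj⟩)
  le_ncard x := by
    set C := {c | ∃ i, x ∈ V c i}
    set C' : Set (Fin (N + 1)) := {c | ∃ i, x ∈ (Fin.snoc V V' : Fin (N + 1) → ι → Set X) c i}
    have hCC' : Fin.castSucc '' C ⊆ C' := by
      rintro _ ⟨c, ⟨i, hi⟩, rfl⟩
      exact ⟨i, by simpa using hi⟩
    have hcard : (Fin.castSucc '' C).ncard = C.ncard :=
      ncard_image_of_injective _ (Fin.castSucc_injective N)
    rcases (hV.le_ncard x).eq_or_lt with hr | hr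
    · obtain ⟨i, hi⟩ := hmem x hr.symm
      have hlast : Fin.last N ∈ C' := ⟨i, by simpa using hi⟩
      have hnew : Fin.last N ∉ Fin.castSucc '' C := by
        rintro ⟨c, -, hc⟩
        exact (Fin.castSucc_lt_last c).ne hc
      rw [hr, ← hcard, ← ncard_insert_of_notMem hnew]
      exact ncard_le_ncard (insert_subset hlast hCC')
    · exact (Nat.succ_le_of_lt hr).trans (hcard ▸ ncard_le_ncard hCC')

/-- The new colour copies, where a point has exactly `r` colours, one of these. -/
theorem IsColoring.exists_succ [NormalSpace X] {U : ι → Set X} {N r : ℕ} {V : Fin N → ι → Set X}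
    (hV : IsColoring U N r V) (hr : 0 < r) : ∃ V', IsColoring U (N + 1) (r + 1) V' := by
  obtain ⟨O, hOopen, hOdisj, hO⟩ := exists_disjoint_open_of_le_ncard
    (A := fun c => ⋃ i, V c i) (fun c => isOpen_iUnion (hV.isOpen c))
    (by simpa only [mem_iUnion] using hV.le_ncard)
  simp only [mem_iUnion] at hO
  have hne (J : {J : Set (Fin N) // J.ncard = r}) : J.1.Nonempty :=
    nonempty_of_ncard_ne_zero (J.2.symm ▸ hr.ne')
  choose c₀ hc₀ using hne
  refine ⟨_, hV.snoc (V' := fun i => ⋃ J, O J ∩ V (c₀ J) i) (fun i => ?_) (fun i => ?_)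
    (fun i j hij => ?_) fun x hx => ?_⟩
  · exact isOpen_iUnion fun J => (hOopen J).inter (hV.isOpen _ i)
  · exact iUnion_subset fun J => inter_subset_right.trans (hV.subset _ i)
  · simp only [Function.onFun, disjoint_iUnion_left, disjoint_iUnion_right]
    intro J K
    by_cases hJK : J = K
    · subst hJK
      exact (hV.disjoint _ hij).mono inter_subset_right inter_subset_right
    · exact (hOdisj (Ne.symm hJK)).mono inter_subset_left inter_subset_left
  · obtain ⟨i, hi⟩ := hc₀ ⟨_, hx⟩
    exact ⟨i, mem_iUnion.2 ⟨_, hO x ⟨_, hx⟩ rfl, hi⟩⟩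

theorem IsCoverOfOrderLE.exists_isColoring_add [NormalSpace X] [Finite ι] {n : ℕ} {U : ι → Set X}
    (hU : IsCoverOfOrderLE n U) (m : ℕ) : ∃ V, IsColoring U (n + 1 + m) (m + 1) V := by
  induction m with
  | zero => exact hU.exists_isColoring
  | succ m ih =>
    obtain ⟨V, hV⟩ := ih
    exact hV.exists_succ m.succ_pos

theorem isIndexedCover_biInter [Finite ι] {U : ι → Set X} (hU : ∀ i, IsOpen (U i)) :
    IsIndexedCover fun x => ⋂ i ∈ {i | x ∈ U i}, U i where
  isOpen _ := (toFinite _).isOpen_biInter fun i _ => hU i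
  exists_mem x := ⟨x, mem_iInter₂.2 fun _ hi => hi⟩

variable {Y : Type*} [TopologicalSpace Y]

theorem IsIndexedCover.exists_prod_refinement [CompactSpace X] [CompactSpace Y]
    {W : ι → Set (X × Y)} (hW : IsIndexedCover W) :
    ∃ (S : Finset X) (T : Finset Y) (A : X → Set X) (B : Y → Set Y),
      IsIndexedCover (fun x : S => A x) ∧ IsIndexedCover (fun y : T => B y) ∧
        ∀ x y, ∃ i, A x ×ˢ B y ⊆ W i := by
  have hbox (p : X × Y) : ∃ (A : Set X) (B : Set Y), IsOpen A ∧ IsOpen B ∧ p ∈ A ×ˢ B ∧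
      ∃ i, A ×ˢ B ⊆ W i := by
    obtain ⟨i, hi⟩ := hW.exists_mem p
    obtain ⟨A, B, hA, hB, hpA, hpB, hAB⟩ := isOpen_prod_iff.1 (hW.isOpen i) p.1 p.2 hi
    exact ⟨A, B, hA, hB, ⟨hpA, hpB⟩, i, hAB⟩
  choose A B hA hB hmem hAB using hbox
  have hcover : IsIndexedCover fun p => A p ×ˢ B p :=
    ⟨fun p => (hA p).prod (hB p), fun p => ⟨p, hmem p⟩⟩
  obtain ⟨P, hP⟩ := hcover.exists_finset
  obtain ⟨S, hS⟩ := (isIndexedCover_biInter fun p : P => hA p).exists_finset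
  obtain ⟨T, hT⟩ := (isIndexedCover_biInter fun p : P => hB p).exists_finset
  refine ⟨S, T, fun x => ⋂ p ∈ {p : P | x ∈ A p}, A p, fun y => ⋂ p ∈ {p : P | y ∈ B p}, B p,
    hS, hT, fun x y => ?_⟩
  obtain ⟨p, hp⟩ := hP.exists_mem (x, y)
  obtain ⟨i, hi⟩ := hAB p
  have hA' : ⋂ q ∈ {q : P | x ∈ A q}, A q ⊆ A p := biInter_subset_of_mem hp.1
  have hB' : ⋂ q ∈ {q : P | y ∈ B q}, B q ⊆ B p := biInter_subset_of_mem hp.2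
  exact ⟨i, (prod_mono hA' hB').trans hi⟩

theorem DimLE.prod [CompactSpace X] [T2Space X] [CompactSpace Y] [T2Space Y] {m n : ℕ}
    (hX : DimLE m X) (hY : DimLE n Y) : DimLE (m + n) (X × Y) := by
  refine DimLE.of_finite fun k W hW => ?_
  obtain ⟨S, T, A, B, hA, hB, hAB⟩ := hW.exists_prod_refinement
  obtain ⟨a, A', hA', hAA'⟩ := hX.exists_refinement hA
  obtain ⟨b, B', hB', hBB'⟩ := hY.exists_refinement hB
  obtain ⟨U, hU⟩ := hA'.exists_isColoring_add n
  obtain ⟨V, hV⟩ := (show m + 1 + n = n + 1 + m by omega) ▸ hB'.exists_isColoring_add m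
  refine ⟨Fin (m + 1 + n) × Fin a × Fin b, inferInstance,
    fun p => U p.1 p.2.1 ×ˢ V p.1 p.2.2, ⟨⟨fun p => ?_, fun ⟨x, y⟩ => ?_⟩, fun ⟨x, y⟩ s hs => ?_⟩,
    fun ⟨c, i, j⟩ => ?_⟩
  · exact (hU.isOpen _ _).prod (hV.isOpen _ _)
  · obtain ⟨c, ⟨i, hi⟩, j, hj⟩ : ({c | ∃ i, x ∈ U c i} ∩ {c | ∃ j, y ∈ V c j}).Nonempty := by
      have hunion := ncard_le_card ({c | ∃ i, x ∈ U c i} ∪ {c | ∃ j, y ∈ V c j})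
      have hinter := ncard_union_add_ncard_inter {c | ∃ i, x ∈ U c i} {c | ∃ j, y ∈ V c j}
      have := hU.le_ncard x
      have := hV.le_ncard y
      rw [Nat.card_fin] at hunion
      exact nonempty_of_ncard_ne_zero (by omega)
    exact ⟨(c, i, j), hi, hj⟩
  · have hinj : InjOn Prod.fst (s : Set (Fin (m + 1 + n) × Fin a × Fin b)) := by
      rintro ⟨c, i, j⟩ hp ⟨_, i', j'⟩ hp' rfl
      obtain rfl := hU.index_eq (hs _ hp).1 (hs _ hp').1
      obtain rfl := hV.index_eq (hs _ hp).2 (hs _ hp').2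
      rfl
    have hcard := Finset.card_le_univ (s.image Prod.fst)
    rw [Finset.card_image_of_injOn hinj, Fintype.card_fin] at hcard
    omega
  · obtain ⟨i', hi'⟩ := hAA' i
    obtain ⟨j', hj'⟩ := hBB' j
    obtain ⟨w, hw⟩ := hAB i' j'
    exact ⟨w, (prod_mono ((hU.subset c i).trans hi') ((hV.subset c j).trans hj')).trans hw⟩

theorem topDim_prod_le [CompactSpace X] [T2Space X] [CompactSpace Y] [T2Space Y] :
    topDim (X × Y) ≤ topDim X + topDim Y := by
  rcases eq_or_ne (topDim X) ⊤ with hX | hX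
  · simp [hX]
  rcases eq_or_ne (topDim Y) ⊤ with hY | hY
  · simp [hY]
  lift topDim X to ℕ using hX with m hm
  lift topDim Y to ℕ using hY with n hn
  have hdim := DimLE.prod (topDim_le_iff_dimLE.1 hm.ge) (topDim_le_iff_dimLE.1 hn.ge)
  exact_mod_cast topDim_le_iff_dimLE.2 hdim

end Product

section MemSpan

variable {R P Q : Type*} [Ring R] [AddCommGroup P] [AddCommGroup Q] [Module R P] [Module R Q]

theorem map_mem_of_mem_span {s : Set P} {x : P} (hx : x ∈ Submodule.span R s) (f : P →ₗ[R] Q)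
    {S : Submodule R Q} (h : ∀ y ∈ s, f y ∈ S) : f x ∈ S :=
  (Submodule.map_span_le f s S).2 h (Submodule.mem_map_of_mem hx)

end MemSpan

/-- Integral chains on lists of vertices. The empty list is the simplex of degree `-1` of the
augmented complex. -/
abbrev ListChain (V : Type*) := List V →₀ ℤ

namespace ListChain

variable {V V' Q : Type*} [AddCommGroup Q]

/-- The chain of a single list. -/
noncomputable abbrev simplex (l : List V) : ListChain V := Finsupp.single l 1

theorem map_eq_map [Module ℤ Q] {f g : ListChain V →ₗ[ℤ] Q} (h : ∀ l, f (simplex l) = g (simplex l))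
    (x : ListChain V) : f x = g x := by
  refine LinearMap.congr_fun (Finsupp.lhom_ext' fun l => ?_) x
  ext
  simpa using h l

/-- The linear extension of a function on lists. -/
noncomputable def lift (f : List V → Q) : ListChain V →ₗ[ℤ] Q :=
  Finsupp.linearCombination ℤ f

@[simp] theorem lift_simplex (f : List V → Q) (l : List V) : lift f (simplex l) = f l := by
  rw [lift, Finsupp.linearCombination_single, one_smul]

/-- The cone with apex `v`. -/
noncomputable def cone (v : V) : ListChain V →ₗ[ℤ] ListChain V := lift fun l => simplex (v :: l)

@[simp] theorem cone_simplex (v : V) (l : List V) : cone v (simplex l) = simplex (v :: l) :=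
  lift_simplex _ l

theorem cone_apply_nil (v : V) (x : ListChain V) : cone v x [] = 0 :=
  map_eq_map (f := Finsupp.lapply (R := ℤ) [] ∘ₗ cone v) (g := 0) (fun l => by simp) x

/-- The boundary of a list in the augmented complex, by recursion on the list. -/
noncomputable def augBoundaryList : List V → ListChain V
  | [] => 0
  | v :: l => simplex l - cone v (augBoundaryList l)

/-- The boundary of the augmented complex. -/
noncomputable def augBoundary : ListChain V →ₗ[ℤ] ListChain V := lift augBoundaryList

@[simp] theorem augBoundary_simplex (l : List V) : augBoundary (simplex l) = augBoundaryList l :=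
  lift_simplex _ l

theorem augBoundary_cone (v : V) (x : ListChain V) :
    augBoundary (cone v x) = x - cone v (augBoundary x) :=
  map_eq_map (f := augBoundary ∘ₗ cone v) (g := LinearMap.id - cone v ∘ₗ augBoundary)
    (fun l => by simp [augBoundaryList]) x

theorem augBoundary_augBoundary (x : ListChain V) : augBoundary (augBoundary x) = 0 := by
  refine map_eq_map (f := augBoundary ∘ₗ augBoundary) (g := 0) (fun l => ?_) x
  simp only [LinearMap.comp_apply, augBoundary_simplex, LinearMap.zero_apply]
  induction l with
  | nil => simp [augBoundaryList]
  | cons v l ih => simp [augBoundaryList, augBoundary_cone, ih]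

/-- The quotient map from the augmented complex to the complex, which kills the empty list. -/
noncomputable def dropNil : ListChain V →ₗ[ℤ] ListChain V :=
  LinearMap.id - Finsupp.lsingle [] ∘ₗ Finsupp.lapply []

theorem dropNil_apply (x : ListChain V) : dropNil x = x - x [] • simplex [] := by
  simp [dropNil]

theorem dropNil_simplex {l : List V} (hl : l ≠ []) : dropNil (simplex l) = simplex l := by
  simp [dropNil_apply, hl]

@[simp] theorem dropNil_nil : dropNil (simplex ([] : List V)) = 0 := by
  simp [dropNil_apply]

theorem dropNil_cone (v : V) (x : ListChain V) : dropNil (cone v x) = cone v x := by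
  simp [dropNil_apply, cone_apply_nil]

/-- The augmentation: the coefficient of the empty list in the augmented boundary. -/
noncomputable def augmentation : ListChain V →ₗ[ℤ] ℤ := Finsupp.lapply [] ∘ₗ augBoundary

theorem augmentation_apply (x : ListChain V) : augmentation x = augBoundary x [] := rfl

@[simp] theorem augmentation_singleton (v : V) : augmentation (simplex [v]) = 1 := by
  simp [augmentation_apply, augBoundaryList]

theorem augmentation_simplex_eq_zero {l : List V} (hl : l.length ≠ 1) :
    augmentation (simplex l) = 0 := by
  rcases l with _ | ⟨v, _ | ⟨w, l⟩⟩
  · simp [augmentation_apply, augBoundaryList]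
  · simp at hl
  · rw [augmentation_apply, augBoundary_simplex, augBoundaryList, Finsupp.sub_apply,
      cone_apply_nil]
    simp

/-- The boundary of the (unaugmented) complex of nonempty lists. -/
noncomputable def boundary : ListChain V →ₗ[ℤ] ListChain V := dropNil ∘ₗ augBoundary

theorem boundary_apply (x : ListChain V) :
    boundary x = augBoundary x - augmentation x • simplex [] :=
  dropNil_apply _

@[simp] theorem boundary_singleton (v : V) : boundary (simplex [v]) = 0 := by
  simp [boundary, augBoundaryList]

theorem augBoundary_boundary (x : ListChain V) : augBoundary (boundary x) = 0 := by
  simp [boundary_apply, augBoundary_augBoundary, augBoundaryList, -Finsupp.smul_single]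

theorem boundary_boundary (x : ListChain V) : boundary (boundary x) = 0 := by
  rw [boundary, LinearMap.comp_apply, ← boundary, augBoundary_boundary, map_zero]

theorem augmentation_boundary (x : ListChain V) : augmentation (boundary x) = 0 := by
  rw [augmentation_apply, augBoundary_boundary, Finsupp.zero_apply]

/-- The chain map collapsing everything to the vertex `v`. -/
noncomputable def collapse (v : V) : ListChain V →ₗ[ℤ] ListChain V :=
  augmentation.smulRight (simplex [v])

theorem collapse_apply (v : V) (x : ListChain V) :
    collapse v x = augmentation x • simplex [v] := rfl

theorem boundary_collapse (v : V) (x : ListChain V) : boundary (collapse v x) = 0 := by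
  rw [collapse_apply, map_smul, boundary_singleton, smul_zero]

theorem collapse_boundary (v : V) (x : ListChain V) : collapse v (boundary x) = 0 := by
  rw [collapse_apply, augmentation_boundary, zero_smul]

theorem boundary_cone (v : V) (x : ListChain V) :
    boundary (cone v x) + cone v (boundary x) = dropNil x - collapse v x := by
  rw [boundary_apply x, boundary, LinearMap.comp_apply, augBoundary_cone]
  simp only [map_sub, map_smul, cone_simplex, dropNil_cone, collapse_apply]
  abel

/-- The sign operator, multiplying chains of degree `q` by `(-1) ^ q`; a list of length `q + 1` has
degree `q`. -/
noncomputable def sign : ListChain V →ₗ[ℤ] ListChain V :=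
  lift fun l => (-1 : ℤ) ^ (l.length + 1) • simplex l

@[simp] theorem sign_simplex (l : List V) :
    sign (simplex l) = (-1 : ℤ) ^ (l.length + 1) • simplex l :=
  lift_simplex _ l

theorem sign_cone (v : V) (x : ListChain V) : sign (cone v x) = -cone v (sign x) :=
  map_eq_map (f := sign ∘ₗ cone v) (g := -(cone v ∘ₗ sign))
    (fun l => by simp [pow_succ, -Finsupp.smul_single]) x

theorem augBoundary_sign (x : ListChain V) : augBoundary (sign x) = -sign (augBoundary x) := by
  refine map_eq_map (f := augBoundary ∘ₗ sign) (g := -(sign ∘ₗ augBoundary)) (fun l => ?_) x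
  simp only [LinearMap.comp_apply, LinearMap.neg_apply, augBoundary_simplex, sign_simplex,
    map_smul]
  induction l with
  | nil => simp [augBoundaryList]
  | cons v l ih =>
    have hcone : sign (cone v (augBoundaryList l)) =
        cone v ((-1 : ℤ) ^ (l.length + 1) • augBoundaryList l) := by
      rw [sign_cone, ih, map_neg]
    simp only [augBoundaryList, map_sub, hcone, sign_simplex, List.length_cons, map_smul, smul_sub,
      pow_succ]
    module

theorem sign_dropNil (x : ListChain V) : sign (dropNil x) = dropNil (sign x) := by
  refine map_eq_map (f := sign ∘ₗ dropNil) (g := dropNil ∘ₗ sign) (fun l => ?_) x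
  rcases eq_or_ne l [] with rfl | hl
  · simp
  · simp [dropNil_simplex hl, -Finsupp.smul_single]

theorem boundary_sign (x : ListChain V) : boundary (sign x) = -sign (boundary x) := by
  simp only [boundary, LinearMap.comp_apply, augBoundary_sign, map_neg, sign_dropNil]

theorem sign_collapse (v : V) (x : ListChain V) : sign (collapse v x) = collapse v x := by
  simp [collapse_apply, -Finsupp.smul_single]

theorem collapse_sign (v : V) (x : ListChain V) : collapse v (sign x) = collapse v x := by
  refine map_eq_map (f := collapse v ∘ₗ sign) (g := collapse v) (fun l => ?_) x
  by_cases hl : l.length = 1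
  · simp [hl]
  · simp [collapse_apply, augmentation_simplex_eq_zero hl, -Finsupp.smul_single]

/-- The chain map induced by a map of vertices. -/
noncomputable def map (f : V → V') : ListChain V →ₗ[ℤ] ListChain V' :=
  lift fun l => simplex (l.map f)

@[simp] theorem map_simplex (f : V → V') (l : List V) : map f (simplex l) = simplex (l.map f) :=
  lift_simplex _ l

theorem map_cone (f : V → V') (v : V) (x : ListChain V) :
    map f (cone v x) = cone (f v) (map f x) :=
  map_eq_map (f := map f ∘ₗ cone v) (g := cone (f v) ∘ₗ map f) (fun l => by simp) x

theorem map_apply_nil (f : V → V') (x : ListChain V) : map f x [] = x [] :=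
  map_eq_map (f := Finsupp.lapply (R := ℤ) [] ∘ₗ map f) (g := Finsupp.lapply [])
    (fun l => by cases l <;> simp) x

theorem augBoundary_map (f : V → V') (x : ListChain V) :
    augBoundary (map f x) = map f (augBoundary x) := by
  refine map_eq_map (f := augBoundary ∘ₗ map f) (g := map f ∘ₗ augBoundary) (fun l => ?_) x
  simp only [LinearMap.comp_apply, augBoundary_simplex, map_simplex]
  induction l with
  | nil => simp [augBoundaryList]
  | cons v l ih => simp [augBoundaryList, map_cone, ih]

theorem augmentation_map (f : V → V') (x : ListChain V) :
    augmentation (map f x) = augmentation x := by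
  rw [augmentation_apply, augBoundary_map, map_apply_nil, augmentation_apply]

theorem boundary_map (f : V → V') (x : ListChain V) : boundary (map f x) = map f (boundary x) := by
  rw [boundary_apply, boundary_apply, augmentation_map, augBoundary_map, map_sub, map_smul,
    map_simplex, List.map_nil]

theorem sign_map (f : V → V') (x : ListChain V) : sign (map f x) = map f (sign x) :=
  map_eq_map (f := sign ∘ₗ map f) (g := map f ∘ₗ sign) (fun l => by simp [-Finsupp.smul_single]) x

theorem augBoundaryList_mem_span (l : List V) : augBoundaryList l ∈
    Submodule.span ℤ (simplex '' {τ | τ.Sublist l ∧ τ.length + 1 = l.length}) := by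
  induction l with
  | nil => simp [augBoundaryList]
  | cons v l ih =>
    refine Submodule.sub_mem _ (Submodule.subset_span
      ⟨l, ⟨List.sublist_cons_self _ _, rfl⟩, rfl⟩) (map_mem_of_mem_span ih _ ?_)
    rintro _ ⟨τ, ⟨hτ, hlen⟩, rfl⟩
    exact Submodule.subset_span ⟨v :: τ, ⟨hτ.cons_cons v, by simp [hlen]⟩, (cone_simplex v τ).symm⟩

theorem boundary_simplex_mem_span (l : List V) : boundary (simplex l) ∈
    Submodule.span ℤ (simplex '' {τ | τ ≠ [] ∧ τ.Sublist l ∧ τ.length + 1 = l.length}) := by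
  rw [boundary, LinearMap.comp_apply, augBoundary_simplex]
  refine map_mem_of_mem_span (augBoundaryList_mem_span l) _ ?_
  rintro _ ⟨τ, ⟨hτ, hlen⟩, rfl⟩
  rcases eq_or_ne τ [] with rfl | hne
  · simp
  · rw [dropNil_simplex hne]
    exact Submodule.subset_span ⟨τ, ⟨hne, hτ, hlen⟩, rfl⟩

end ListChain

section Carriers

variable {R P Q T ι κ : Type*} [Ring R] [AddCommGroup P] [AddCommGroup Q] [AddCommGroup T]
  [Module R P] [Module R Q] [Module R T]

/-- An augmented chain complex of based modules, encoded as one ungraded module with basis `b` and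
a degree function on the index set. Only the basis elements satisfying `G` are considered, and the
boundary of such an element is a combination of faces `k` of it, for the face relation `r`. -/
structure IsBasedComplex (b : Module.Basis ι R P) (deg : ι → ℕ) (G : ι → Prop) (r : ι → ι → Prop)
    (d : P →ₗ[R] P) (ε : P →ₗ[R] R) : Prop where
  d_mem : ∀ i, G i → d (b i) ∈ Submodule.span R (b '' {k | G k ∧ deg k + 1 = deg i ∧ r k i})
  d_d : ∀ x, d (d x) = 0
  aug_d : ∀ x, ε (d x) = 0
  aug_eq_one : ∀ i, G i → deg i = 0 → ε (b i) = 1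

/-- An acyclic carrier into the augmented chain complex `(d, ε)`; the submodule `A i q` is the part
of degree `q` of the subcomplex carrying `i`. -/
structure IsAcyclicCarrier (G : ι → Prop) (r : ι → ι → Prop) (d : Q →ₗ[R] Q) (ε : Q →ₗ[R] R)
    (A : ι → ℕ → Submodule R Q) : Prop where
  mono : ∀ k i, G i → r k i → ∀ q, A k q ≤ A i q
  exists_d_eq : ∀ i, G i → ∀ q, ∀ x ∈ A i q, d x = 0 → (q = 0 → ε x = 0) →
    ∃ y ∈ A i (q + 1), d y = x
  exists_point : ∀ i, G i → ∃ x ∈ A i 0, d x = 0 ∧ ε x = 1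

/-- An augmentation-preserving chain map in degrees below `N`, carried by `A`. -/
structure IsCarriedMap (b : Module.Basis ι R P) (deg : ι → ℕ) (G : ι → Prop) (dP : P →ₗ[R] P)
    (dQ : Q →ₗ[R] Q) (ε : Q →ₗ[R] R) (A : ι → ℕ → Submodule R Q) (N : ℕ) (φ : P →ₗ[R] Q) :
    Prop where
  mem : ∀ i, G i → deg i < N → φ (b i) ∈ A i (deg i)
  comm : ∀ i, G i → deg i < N → dQ (φ (b i)) = φ (dP (b i))
  aug_eq_one : ∀ i, G i → deg i < N → deg i = 0 → ε (φ (b i)) = 1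

variable {b : Module.Basis ι R P} {deg : ι → ℕ} {G : ι → Prop} {r : ι → ι → Prop}
  {dP : P →ₗ[R] P} {εP : P →ₗ[R] R} {dQ : Q →ₗ[R] Q} {εQ : Q →ₗ[R] R}
  {A : ι → ℕ → Submodule R Q}

theorem IsBasedComplex.d_eq_zero (hP : IsBasedComplex b deg G r dP εP) {i : ι} (hi : G i)
    (hdeg : deg i = 0) : dP (b i) = 0 := by
  have hempty : {k | G k ∧ deg k + 1 = deg i ∧ r k i} = ∅ :=
    eq_empty_of_forall_notMem fun k hk => by have := hk.2.1; omega
  simpa [hempty] using hP.d_mem i hi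

/-- A linear map may be built degree by degree when the condition `S i` on the value at `b i`
involves only the image of the boundary of `b i`. -/
theorem IsBasedComplex.exists_linearMap (hP : IsBasedComplex b deg G r dP εP)
    (S : ι → Q → Q → Prop) (N : ℕ)
    (step : ∀ n < N, ∀ φ : P →ₗ[R] Q, (∀ i, G i → deg i < n → S i (φ (b i)) (φ (dP (b i)))) →
      ∀ i, G i → deg i = n → ∃ y, S i y (φ (dP (b i)))) :
    ∃ φ : P →ₗ[R] Q, ∀ i, G i → deg i < N → S i (φ (b i)) (φ (dP (b i))) := by
  classical
  induction N with
  | zero => exact ⟨0, fun i _ h => absurd h (Nat.not_lt_zero _)⟩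
  | succ N ih =>
    obtain ⟨φ, hφ⟩ := ih fun n hn => step n (hn.trans N.lt_succ_self)
    choose y hy using step N N.lt_succ_self φ hφ
    let ψ : P →ₗ[R] Q := b.constr ℕ fun i => if h : G i ∧ deg i = N then y i h.1 h.2 else φ (b i)
    have hψ (i) : ψ (b i) = if h : G i ∧ deg i = N then y i h.1 h.2 else φ (b i) := by
      simp [ψ, Module.Basis.constr_basis]
    have hψd (i) (hi : G i) (hdeg : deg i ≤ N) : ψ (dP (b i)) = φ (dP (b i)) := by
      refine LinearMap.eqOn_span (f := ψ) ?_ (hP.d_mem i hi)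
      rintro _ ⟨k, ⟨-, hk, -⟩, rfl⟩
      exact (hψ k).trans (dif_neg (by omega))
    refine ⟨ψ, fun i hi hdeg => ?_⟩
    rw [hψd i hi (Nat.lt_succ_iff.1 hdeg), hψ]
    split_ifs with h
    · exact hy i h.1 h.2
    · exact hφ i hi (lt_of_le_of_ne (Nat.lt_succ_iff.1 hdeg) fun h' => h ⟨hi, h'⟩)

theorem IsAcyclicCarrier.exists_isCarriedMap (hA : IsAcyclicCarrier G r dQ εQ A)
    (hP : IsBasedComplex b deg G r dP εP) (N : ℕ) :
    ∃ φ, IsCarriedMap b deg G dP dQ εQ A N φ := by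
  suffices h : ∃ φ : P →ₗ[R] Q, ∀ i, G i → deg i < N →
      φ (b i) ∈ A i (deg i) ∧ dQ (φ (b i)) = φ (dP (b i)) ∧ (deg i = 0 → εQ (φ (b i)) = 1) by
    obtain ⟨φ, hφ⟩ := h
    exact ⟨φ, fun i hi h => (hφ i hi h).1, fun i hi h => (hφ i hi h).2.1,
      fun i hi h => (hφ i hi h).2.2⟩
  refine hP.exists_linearMap
    (fun i y z => y ∈ A i (deg i) ∧ dQ y = z ∧ (deg i = 0 → εQ y = 1)) N fun n _ φ hφ i hi hin => ?_
  rcases n with _ | n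
  · obtain ⟨x, hx, hdx, hεx⟩ := hA.exists_point i hi
    exact ⟨x, hin ▸ hx, by rw [hdx, hP.d_eq_zero hi hin, map_zero], fun _ => hεx⟩
  have hmem : φ (dP (b i)) ∈ A i n := by
    refine map_mem_of_mem_span (hP.d_mem i hi) φ ?_
    rintro _ ⟨k, ⟨hk, hki, hr⟩, rfl⟩
    obtain rfl : n = deg k := by omega
    exact hA.mono k i hi hr _ (hφ k hk (Nat.lt_succ_self _)).1
  have hcycle : dQ (φ (dP (b i))) = 0 := by
    rw [← map_zero φ, ← hP.d_d (b i)]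
    refine LinearMap.eqOn_span (f := dQ ∘ₗ φ) (g := φ ∘ₗ dP) ?_ (hP.d_mem i hi)
    rintro _ ⟨k, ⟨hk, hki, -⟩, rfl⟩
    exact (hφ k hk (by omega)).2.1
  have haug : n = 0 → εQ (φ (dP (b i))) = 0 := by
    intro hn
    rw [← hP.aug_d (b i)]
    refine LinearMap.eqOn_span (f := εQ ∘ₗ φ) ?_ (hP.d_mem i hi)
    rintro _ ⟨k, ⟨hk, hki, -⟩, rfl⟩
    rw [hP.aug_eq_one k hk (by omega)]
    exact (hφ k hk (by omega)).2.2 (by omega)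
  obtain ⟨y, hy, hdy⟩ := hA.exists_d_eq i hi n _ hmem hcycle haug
  exact ⟨y, hin ▸ hy, hdy, fun h => by omega⟩

theorem IsAcyclicCarrier.exists_homotopy (hA : IsAcyclicCarrier G r dQ εQ A)
    (hP : IsBasedComplex b deg G r dP εP) {N : ℕ} {φ ψ : P →ₗ[R] Q}
    (hφ : IsCarriedMap b deg G dP dQ εQ A N φ) (hψ : IsCarriedMap b deg G dP dQ εQ A N ψ) :
    ∃ h : P →ₗ[R] Q, ∀ i, G i → deg i < N →
      h (b i) ∈ A i (deg i + 1) ∧ dQ (h (b i)) + h (dP (b i)) = φ (b i) - ψ (b i) := by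
  refine hP.exists_linearMap
    (fun i y z => y ∈ A i (deg i + 1) ∧ dQ y + z = φ (b i) - ψ (b i)) N
    fun n hn h hh i hi hin => ?_
  have hmem : φ (b i) - ψ (b i) - h (dP (b i)) ∈ A i (deg i) := by
    refine Submodule.sub_mem _ (Submodule.sub_mem _ (hφ.mem i hi (hin ▸ hn))
      (hψ.mem i hi (hin ▸ hn))) (map_mem_of_mem_span (hP.d_mem i hi) h ?_)
    rintro _ ⟨k, ⟨hk, hki, hr⟩, rfl⟩
    exact hki ▸ hA.mono k i hi hr _ (hh k hk (by omega)).1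
  have hcycle : dQ (φ (b i) - ψ (b i) - h (dP (b i))) = 0 := by
    have hdh : (dQ ∘ₗ h + h ∘ₗ dP) (dP (b i)) = (φ - ψ) (dP (b i)) := by
      refine LinearMap.eqOn_span ?_ (hP.d_mem i hi)
      rintro _ ⟨k, ⟨hk, hki, -⟩, rfl⟩
      exact (hh k hk (by omega)).2
    simp only [LinearMap.add_apply, LinearMap.comp_apply, LinearMap.sub_apply, hP.d_d, map_zero,
      add_zero] at hdh
    rw [map_sub, map_sub, hφ.comm i hi (hin ▸ hn), hψ.comm i hi (hin ▸ hn), hdh, sub_self]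
  have haug : deg i = 0 → εQ (φ (b i) - ψ (b i) - h (dP (b i))) = 0 := by
    intro h0
    rw [hP.d_eq_zero hi h0, map_zero, sub_zero, map_sub, hφ.aug_eq_one i hi (hin ▸ hn) h0,
      hψ.aug_eq_one i hi (hin ▸ hn) h0, sub_self]
  obtain ⟨y, hy, hdy⟩ := hA.exists_d_eq i hi _ _ hmem hcycle haug
  exact ⟨y, hy, by rw [hdy, sub_add_cancel]⟩

variable {b' : Module.Basis κ R T} {deg' : κ → ℕ} {G' : κ → Prop} {r' : κ → κ → Prop}
  {dT : T →ₗ[R] T} {εT : T →ₗ[R] R}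

theorem IsCarriedMap.comp {A' : ι → ℕ → Submodule R T} {B : κ → ℕ → Submodule R Q} {N : ℕ}
    {φ : P →ₗ[R] T} {ψ : T →ₗ[R] Q} (hψ : IsCarriedMap b' deg' G' dT dQ εQ B N ψ)
    (hφ : IsCarriedMap b deg G dP dT εT A' N φ) (hT : IsBasedComplex b' deg' G' r' dT εT)
    (hA' : ∀ i, G i → ∀ q, A' i q ≤
      Submodule.span R (b' '' {k | G' k ∧ deg' k = q ∧ B k q ≤ A i q})) :
    IsCarriedMap b deg G dP dQ εQ A N (ψ ∘ₗ φ) where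
  mem i hi hN := by
    refine map_mem_of_mem_span (hA' i hi _ (hφ.mem i hi hN)) ψ ?_
    rintro _ ⟨k, ⟨hk, hki, hBA⟩, rfl⟩
    exact hBA (hki ▸ hψ.mem k hk (hki ▸ hN))
  comm i hi hN := by
    rw [LinearMap.comp_apply, LinearMap.comp_apply, ← hφ.comm i hi hN]
    refine LinearMap.eqOn_span (f := dQ ∘ₗ ψ) (g := ψ ∘ₗ dT) ?_ (hA' i hi _ (hφ.mem i hi hN))
    rintro _ ⟨k, ⟨hk, hki, -⟩, rfl⟩
    exact hψ.comm k hk (hki ▸ hN)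
  aug_eq_one i hi hN h0 := by
    rw [LinearMap.comp_apply, ← hφ.aug_eq_one i hi hN h0]
    refine LinearMap.eqOn_span (f := εQ ∘ₗ ψ) ?_ (hA' i hi _ (hφ.mem i hi hN))
    rintro _ ⟨k, ⟨hk, hki, -⟩, rfl⟩
    rw [hT.aug_eq_one k hk (hki.trans h0)]
    exact hψ.aug_eq_one k hk (hki ▸ hN) (hki.trans h0)

end Carriers

section SortedLists

variable {V V' : Type*} [LinearOrder V] [LinearOrder V']

/-- Nonempty weakly increasing lists with entries in `S`: the ordered simplices, degenerate ones
included, of the full simplex on `S`. -/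
def sortedLists (S : Set V) : Set (List V) := {l | l ≠ [] ∧ l.Pairwise (· ≤ ·) ∧ ∀ v ∈ l, v ∈ S}

/-- Nonempty strictly increasing lists with entries in `S`: the nondegenerate ordered simplices of
the full simplex on `S`. -/
def strictSortedLists (S : Set V) : Set (List V) :=
  {l | l ≠ [] ∧ l.Pairwise (· < ·) ∧ ∀ v ∈ l, v ∈ S}

theorem sortedLists_mono {S T : Set V} (h : S ⊆ T) : sortedLists S ⊆ sortedLists T :=
  fun _ hl => ⟨hl.1, hl.2.1, fun v hv => h (hl.2.2 v hv)⟩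

theorem strictSortedLists_mono {S T : Set V} (h : S ⊆ T) :
    strictSortedLists S ⊆ strictSortedLists T :=
  fun _ hl => ⟨hl.1, hl.2.1, fun v hv => h (hl.2.2 v hv)⟩

theorem sortedLists_of_sublist {S : Set V} {l τ : List V} (hl : l ∈ sortedLists S) (hτ : τ ≠ [])
    (hτl : τ.Sublist l) : τ ∈ sortedLists S :=
  ⟨hτ, hl.2.1.sublist hτl, fun v hv => hl.2.2 v (hτl.subset hv)⟩

theorem singleton_mem_sortedLists {S : Set V} {v : V} (hv : v ∈ S) : [v] ∈ sortedLists S :=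
  ⟨by simp, by simp, by simpa⟩

theorem cons_mem_sortedLists {S : Set V} {v : V} (hv : IsLeast S v) {l : List V}
    (hl : l ∈ sortedLists S) : v :: l ∈ sortedLists S :=
  ⟨by simp, List.pairwise_cons.2 ⟨fun u hu => hv.2 (hl.2.2 u hu), hl.2.1⟩,
    by simpa [hv.1] using hl.2.2⟩

theorem cons_mem_strictSortedLists {S : Set V} {v : V} (hv : IsLeast S v) {l : List V}
    (hl : l ∈ strictSortedLists S) (hvl : v ∉ l) : v :: l ∈ strictSortedLists S :=
  ⟨by simp, List.pairwise_cons.2 ⟨fun u hu => (hv.2 (hl.2.2 u hu)).lt_of_ne fun h => hvl (h ▸ hu),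
    hl.2.1⟩, by simpa [hv.1] using hl.2.2⟩

theorem map_mem_sortedLists {S : Set V} {S' : Set V'} {f : V → V'} (hf : Monotone f)
    (hfS : MapsTo f S S') {l : List V} (hl : l ∈ sortedLists S) : l.map f ∈ sortedLists S' :=
  ⟨by simpa using hl.1, hl.2.1.map _ fun _ _ h => hf h,
    by simpa using fun v hv => hfS (hl.2.2 v hv)⟩

theorem exists_isLeast [Finite V] {S : Set V} (hS : S.Nonempty) : ∃ v, IsLeast S v :=
  exists_min_image S id S.toFinite hS

end SortedLists

section StrictCarrier

open ListChain

variable {V : Type*} [LinearOrder V] {S : Set V} {v : V}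

/-- The degree `q` part of the chains on strictly increasing lists with entries in `S`. -/
noncomputable def strictCarrier (S : Set V) (q : ℕ) : Submodule ℤ (ListChain V) :=
  Submodule.span ℤ (simplex '' {l | l ∈ strictSortedLists S ∧ l.length = q + 1})

open Classical in
/-- The cone operator on strictly increasing lists, where lists through the apex are degenerate. -/
noncomputable def strictCone (v : V) : ListChain V →ₗ[ℤ] ListChain V :=
  lift fun l => if v ∈ l then 0 else simplex (v :: l)

theorem strictCone_simplex_of_mem {l : List V} (hv : v ∈ l) : strictCone v (simplex l) = 0 := by
  simp [strictCone, hv]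

theorem strictCone_simplex_of_notMem {l : List V} (hv : v ∉ l) :
    strictCone v (simplex l) = simplex (v :: l) := by
  simp [strictCone, hv]

theorem strictCone_cone (v : V) (x : ListChain V) : strictCone v (cone v x) = 0 :=
  map_eq_map (f := strictCone v ∘ₗ cone v) (g := 0)
    (fun l => by simp [strictCone_simplex_of_mem]) x

theorem boundary_strictCone_simplex (hv : IsLeast S v) {l : List V}
    (hl : l ∈ strictSortedLists S) :
    boundary (strictCone v (simplex l)) + strictCone v (boundary (simplex l)) =
      simplex l - collapse v (simplex l) := by
  by_cases hvl : v ∈ l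
  · rw [strictCone_simplex_of_mem hvl, map_zero, zero_add]
    obtain ⟨u, l, rfl⟩ := List.exists_cons_of_ne_nil hl.1
    obtain ⟨hlt, -⟩ := List.pairwise_cons.1 hl.2.1
    obtain rfl : v = u := by
      refine (List.mem_cons.1 hvl).resolve_right fun h => ?_
      exact (hlt v h).not_ge (hv.2 (hl.2.2 u List.mem_cons_self))
    rcases eq_or_ne l [] with rfl | hne
    · simp [collapse_apply]
    · have hlen : (v :: l).length ≠ 1 := by simpa using hne
      have hvl' : v ∉ l := fun h => (hlt v h).false
      rw [collapse_apply, boundary_apply, augmentation_simplex_eq_zero hlen, zero_smul, zero_smul,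
        sub_zero, sub_zero, augBoundary_simplex, augBoundaryList, map_sub, strictCone_cone,
        sub_zero, strictCone_simplex_of_notMem hvl']
  · have hcone : strictCone v (boundary (simplex l)) = cone v (boundary (simplex l)) := by
      refine LinearMap.eqOn_span (f := strictCone v) ?_ (boundary_simplex_mem_span l)
      rintro _ ⟨τ, ⟨-, hτ, -⟩, rfl⟩
      rw [strictCone_simplex_of_notMem fun h => hvl (hτ.subset h), cone_simplex]
    rw [hcone, strictCone_simplex_of_notMem hvl, ← cone_simplex, boundary_cone,
      dropNil_simplex hl.1]

theorem strictCarrier_exists_boundary_eq (hv : IsLeast S v) {q : ℕ} {x : ListChain V}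
    (hx : x ∈ strictCarrier S q) (hd : boundary x = 0) (hε : q = 0 → augmentation x = 0) :
    ∃ y ∈ strictCarrier S (q + 1), boundary y = x := by
  refine ⟨strictCone v x, ?_, ?_⟩
  · refine map_mem_of_mem_span hx _ ?_
    rintro _ ⟨l, ⟨hl, hlen⟩, rfl⟩
    by_cases hvl : v ∈ l
    · exact strictCone_simplex_of_mem hvl ▸ Submodule.zero_mem _
    · rw [strictCone_simplex_of_notMem hvl]
      exact Submodule.subset_span ⟨_, ⟨cons_mem_strictSortedLists hv hl hvl, by simp [hlen]⟩, rfl⟩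
  · have haug : augmentation x = 0 := by
      rcases q.eq_zero_or_pos with hq | hq
      · exact hε hq
      · refine LinearMap.eqOn_span (g := (0 : ListChain V →ₗ[ℤ] ℤ)) ?_ hx
        rintro _ ⟨l, ⟨-, hlen⟩, rfl⟩
        exact augmentation_simplex_eq_zero (by omega)
    have hhom : (boundary ∘ₗ strictCone v + strictCone v ∘ₗ boundary) x =
        (LinearMap.id - collapse v : ListChain V →ₗ[ℤ] ListChain V) x := by
      refine LinearMap.eqOn_span ?_ hx
      rintro _ ⟨l, ⟨hl, -⟩, rfl⟩
      exact boundary_strictCone_simplex hv hl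
    simpa [hd, collapse_apply, haug] using hhom

theorem isAcyclicCarrier_strictCarrier [Finite V] {ι : Type*} {G : ι → Prop} {r : ι → ι → Prop}
    {S : ι → Set V} (hS : ∀ i, G i → (S i).Nonempty)
    (hmono : ∀ k i, G i → r k i → S k ⊆ S i) :
    IsAcyclicCarrier G r boundary augmentation fun i => strictCarrier (S i) where
  mono k i hi hr q := Submodule.span_mono <| image_mono fun _ hl =>
    ⟨strictSortedLists_mono (hmono k i hi hr) hl.1, hl.2⟩
  exists_d_eq i hi _ _ hx hd hε :=
    (exists_isLeast (hS i hi)).elim fun _ hv => strictCarrier_exists_boundary_eq hv hx hd hε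
  exists_point i hi := by
    obtain ⟨v, hv⟩ := hS i hi
    exact ⟨simplex [v], Submodule.subset_span ⟨[v], ⟨⟨by simp, by simp, by simpa⟩, rfl⟩, rfl⟩,
      boundary_singleton v, augmentation_singleton v⟩

theorem isBasedComplex_strictSortedLists (S : Set V) :
    IsBasedComplex (Finsupp.basisSingleOne (R := ℤ)) (fun l => l.length - 1)
      (· ∈ strictSortedLists S) List.Sublist boundary augmentation where
  d_mem l hl := by
    simp only [Finsupp.coe_basisSingleOne]
    refine Submodule.span_mono (image_mono ?_) (boundary_simplex_mem_span l)
    rintro τ ⟨hτ, hτl, hlen⟩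
    have := List.length_pos_iff.2 hτ
    exact ⟨⟨hτ, hl.2.1.sublist hτl, fun v hv => hl.2.2 v (hτl.subset hv)⟩, by omega, hτl⟩
  d_d := boundary_boundary
  aug_d := augmentation_boundary
  aug_eq_one l hl hdeg := by
    have := List.length_pos_iff.2 hl.1
    obtain ⟨v, rfl⟩ := List.length_eq_one_iff.1 (show l.length = 1 by omega)
    simp

end StrictCarrier

section PairChains

open ListChain TensorProduct

variable {V V' : Type*}

/-- The tensor square of the complex of list chains. -/
abbrev PairChain (V : Type*) := ListChain V ⊗[ℤ] ListChain V

/-- A shortcut: instance search does not find this module structure in reasonable time. -/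
noncomputable instance PairChain.instModule : Module ℤ (PairChain V) := TensorProduct.instModule

namespace PairChain

/-- The boundary of the tensor square, with the Koszul sign carried by `ListChain.sign`. -/
noncomputable def boundary : PairChain V →ₗ[ℤ] PairChain V :=
  TensorProduct.map ListChain.boundary LinearMap.id + TensorProduct.map sign ListChain.boundary

/-- The augmentation of the tensor square. -/
noncomputable def augmentation : PairChain V →ₗ[ℤ] ℤ :=
  LinearMap.mul' ℤ ℤ ∘ₗ TensorProduct.map ListChain.augmentation ListChain.augmentation

theorem boundary_tmul (x y : ListChain V) :
    boundary (x ⊗ₜ y) = ListChain.boundary x ⊗ₜ y + sign x ⊗ₜ[ℤ] ListChain.boundary y := by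
  simp [boundary]

theorem augmentation_tmul (x y : ListChain V) :
    augmentation (x ⊗ₜ[ℤ] y) = ListChain.augmentation x * ListChain.augmentation y := by
  simp [augmentation]

theorem boundary_boundary (x : PairChain V) : boundary (boundary x) = 0 := by
  refine LinearMap.congr_fun (f := boundary ∘ₗ boundary) (g := 0)
    (TensorProduct.ext' fun x y => ?_) x
  simp only [LinearMap.comp_apply, boundary_tmul, map_add, ListChain.boundary_boundary,
    boundary_sign, zero_tmul, tmul_zero, neg_tmul, LinearMap.zero_apply]
  abel

theorem augmentation_boundary (x : PairChain V) : augmentation (boundary x) = 0 := by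
  refine LinearMap.congr_fun (f := augmentation ∘ₗ boundary) (g := 0)
    (TensorProduct.ext' fun x y => ?_) x
  simp [boundary_tmul, augmentation_tmul, ListChain.augmentation_boundary]

/-- The cone operator of the tensor square, with apex `(v, w)`. -/
noncomputable def cone (v w : V) : PairChain V →ₗ[ℤ] PairChain V :=
  TensorProduct.map (ListChain.cone v) LinearMap.id +
    TensorProduct.map (collapse v) (ListChain.cone w)

theorem cone_tmul (v w : V) (x y : ListChain V) :
    cone v w (x ⊗ₜ y) = ListChain.cone v x ⊗ₜ y + collapse v x ⊗ₜ[ℤ] ListChain.cone w y := by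
  simp [cone]

theorem boundary_cone_tmul (v w : V) (x y : ListChain V) :
    boundary (cone v w (x ⊗ₜ y)) + cone v w (boundary (x ⊗ₜ y)) =
      (dropNil x - collapse v x) ⊗ₜ y + collapse v x ⊗ₜ[ℤ] (dropNil y - collapse w y) := by
  rw [← boundary_cone v x, ← boundary_cone w y]
  simp only [cone_tmul, boundary_tmul, map_add, boundary_collapse, sign_collapse,
    collapse_boundary, collapse_sign, sign_cone, add_tmul, tmul_add, neg_tmul, zero_tmul]
  abel

/-- The basis of pairs of lists. -/
noncomputable def basis (V : Type*) : Module.Basis (List V × List V) ℤ (PairChain V) :=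
  Module.Basis.tensorProduct Finsupp.basisSingleOne Finsupp.basisSingleOne

theorem basis_apply (p : List V × List V) : basis V p = simplex p.1 ⊗ₜ simplex p.2 :=
  (Module.Basis.tensorProduct_apply _ _ _ _).trans (by simp)

/-- The chain map induced by a map of vertices. -/
noncomputable def map (f : V → V') : PairChain V →ₗ[ℤ] PairChain V' :=
  TensorProduct.map (ListChain.map f) (ListChain.map f)

theorem map_tmul (f : V → V') (x y : ListChain V) :
    map f (x ⊗ₜ[ℤ] y) = ListChain.map f x ⊗ₜ ListChain.map f y := by
  simp [map]

theorem boundary_map (f : V → V') (x : PairChain V) : boundary (map f x) = map f (boundary x) :=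
  LinearMap.congr_fun (f := boundary ∘ₗ map f) (g := map f ∘ₗ boundary)
    (TensorProduct.ext' fun x y => by
      simp only [LinearMap.comp_apply, map_tmul, boundary_tmul, map_add, ListChain.boundary_map,
        sign_map]) x

theorem augmentation_map (f : V → V') (x : PairChain V) :
    augmentation (map f x) = augmentation x :=
  LinearMap.congr_fun (f := augmentation ∘ₗ map f) (g := augmentation)
    (TensorProduct.ext' fun x y => by
      simp only [LinearMap.comp_apply, map_tmul, augmentation_tmul, ListChain.augmentation_map]) x

theorem boundary_basis_mem_span {p : List V × List V} (h₁ : p.1 ≠ []) (h₂ : p.2 ≠ []) :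
    boundary (basis V p) ∈ Submodule.span ℤ (basis V '' {τ | τ.1 ≠ [] ∧ τ.2 ≠ [] ∧
      τ.1.Sublist p.1 ∧ τ.2.Sublist p.2 ∧
        τ.1.length + τ.2.length + 1 = p.1.length + p.2.length}) := by
  rw [basis_apply, boundary_tmul]
  refine Submodule.add_mem _ ?_ ?_
  · refine map_mem_of_mem_span (boundary_simplex_mem_span p.1)
      ((TensorProduct.mk ℤ (ListChain V) (ListChain V)).flip (simplex p.2)) ?_
    rintro _ ⟨τ, ⟨hne, hτ, hlen⟩, rfl⟩
    exact Submodule.subset_span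
      ⟨(τ, p.2), ⟨hne, h₂, hτ, .refl _, by simp only; omega⟩, basis_apply _⟩
  · rw [sign_simplex, ← smul_tmul']
    refine Submodule.smul_mem _ _ (map_mem_of_mem_span (boundary_simplex_mem_span p.2)
      (TensorProduct.mk ℤ (ListChain V) (ListChain V) (simplex p.1)) ?_)
    rintro _ ⟨τ, ⟨hne, hτ, hlen⟩, rfl⟩
    exact Submodule.subset_span
      ⟨(p.1, τ), ⟨h₁, hne, .refl _, hτ, by simp only; omega⟩, basis_apply _⟩

end PairChain

variable [LinearOrder V] {S S' : Set V} {v w : V} {q : ℕ}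

/-- The degree `q` part of the pair chains on increasing lists with entries in `S` and `S'`. -/
noncomputable def pairCarrier (S S' : Set V) (q : ℕ) : Submodule ℤ (PairChain V) :=
  Submodule.span ℤ (PairChain.basis V '' {p | p.1 ∈ sortedLists S ∧ p.2 ∈ sortedLists S' ∧
    p.1.length + p.2.length = q + 2})

theorem pairCarrier_mono {T T' : Set V} (h : S ⊆ T) (h' : S' ⊆ T') :
    pairCarrier S S' q ≤ pairCarrier T T' q :=
  Submodule.span_mono <| image_mono fun _ hp =>
    ⟨sortedLists_mono h hp.1, sortedLists_mono h' hp.2.1, hp.2.2⟩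

theorem tmul_mem_pairCarrier {l l' : List V} (hl : l ∈ sortedLists S) (hl' : l' ∈ sortedLists S')
    (hlen : l.length + l'.length = q + 2) : simplex l ⊗ₜ simplex l' ∈ pairCarrier S S' q :=
  Submodule.subset_span ⟨(l, l'), ⟨hl, hl', hlen⟩, PairChain.basis_apply _⟩

theorem cone_mem_pairCarrier (hv : IsLeast S v) (hw : IsLeast S' w) {x : PairChain V}
    (hx : x ∈ pairCarrier S S' q) : PairChain.cone v w x ∈ pairCarrier S S' (q + 1) := by
  refine map_mem_of_mem_span hx _ ?_
  rintro _ ⟨⟨l, l'⟩, ⟨hl, hl', hlen⟩, rfl⟩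
  dsimp only at hl hl' hlen
  rw [PairChain.basis_apply, PairChain.cone_tmul, cone_simplex, cone_simplex, collapse_apply,
    ← smul_tmul']
  refine Submodule.add_mem _ (tmul_mem_pairCarrier (cons_mem_sortedLists hv hl) hl' ?_) ?_
  · simp only [List.length_cons]
    omega
  · by_cases hone : l.length = 1
    · refine Submodule.smul_mem _ _ (tmul_mem_pairCarrier (singleton_mem_sortedLists hv.1)
        (cons_mem_sortedLists hw hl') ?_)
      simp only [List.length_cons, List.length_nil]
      omega
    · rw [augmentation_simplex_eq_zero hone, zero_smul]
      exact Submodule.zero_mem _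

theorem boundary_cone_of_mem_pairCarrier (v w : V) {x : PairChain V}
    (hx : x ∈ pairCarrier S S' q) :
    PairChain.boundary (PairChain.cone v w x) + PairChain.cone v w (PairChain.boundary x) =
      x - PairChain.augmentation x • simplex [v] ⊗ₜ simplex [w] := by
  refine LinearMap.eqOn_span
    (f := PairChain.boundary ∘ₗ PairChain.cone v w + PairChain.cone v w ∘ₗ PairChain.boundary)
    (g := LinearMap.id - PairChain.augmentation.smulRight (simplex [v] ⊗ₜ simplex [w])) ?_ hx
  rintro _ ⟨⟨l, l'⟩, ⟨hl, hl', -⟩, rfl⟩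
  simp only [LinearMap.add_apply, LinearMap.comp_apply, LinearMap.sub_apply, LinearMap.id_apply,
    LinearMap.smulRight_apply, PairChain.basis_apply, PairChain.boundary_cone_tmul,
    dropNil_simplex hl.1, dropNil_simplex hl'.1, PairChain.augmentation_tmul, collapse_apply,
    sub_tmul, tmul_sub, tmul_smul, ← smul_tmul', smul_smul]
  rw [mul_comm]
  abel

theorem augmentation_of_mem_pairCarrier {x : PairChain V} (hx : x ∈ pairCarrier S S' q)
    (hq : 0 < q) : PairChain.augmentation x = 0 := by
  refine LinearMap.eqOn_span (g := (0 : PairChain V →ₗ[ℤ] ℤ)) ?_ hx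
  rintro _ ⟨⟨l, l'⟩, ⟨-, -, hlen⟩, rfl⟩
  dsimp only at hlen
  rw [PairChain.basis_apply, PairChain.augmentation_tmul, LinearMap.zero_apply, mul_eq_zero]
  by_cases hl : l.length = 1
  · exact Or.inr (augmentation_simplex_eq_zero (by dsimp only; omega))
  · exact Or.inl (augmentation_simplex_eq_zero hl)

theorem isAcyclicCarrier_pairCarrier [Finite V] {ι : Type*} {G : ι → Prop} {r : ι → ι → Prop}
    {S S' : ι → Set V} (hS : ∀ i, G i → (S i).Nonempty) (hS' : ∀ i, G i → (S' i).Nonempty)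
    (hmono : ∀ k i, G i → r k i → S k ⊆ S i) (hmono' : ∀ k i, G i → r k i → S' k ⊆ S' i) :
    IsAcyclicCarrier G r PairChain.boundary PairChain.augmentation
      fun i => pairCarrier (S i) (S' i) where
  mono k i hi hr _ := pairCarrier_mono (hmono k i hi hr) (hmono' k i hi hr)
  exists_d_eq i hi q x hx hd hε := by
    obtain ⟨v, hv⟩ := exists_isLeast (hS i hi)
    obtain ⟨w, hw⟩ := exists_isLeast (hS' i hi)
    have haug : PairChain.augmentation x = 0 :=
      q.eq_zero_or_pos.elim hε (augmentation_of_mem_pairCarrier hx)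
    refine ⟨PairChain.cone v w x, cone_mem_pairCarrier hv hw hx, ?_⟩
    simpa [hd, haug] using boundary_cone_of_mem_pairCarrier v w hx
  exists_point i hi := by
    obtain ⟨v, hv⟩ := hS i hi
    obtain ⟨w, hw⟩ := hS' i hi
    refine ⟨simplex [v] ⊗ₜ simplex [w], tmul_mem_pairCarrier (singleton_mem_sortedLists hv)
      (singleton_mem_sortedLists hw) (by simp), ?_, ?_⟩
    · simp [PairChain.boundary_tmul]
    · simp [PairChain.augmentation_tmul]

end PairChains

section Nerve

open ListChain TensorProduct

variable {Y ι κ ω : Type*} {U : ι → Set Y} {V : κ → Set Y} {A B : Set Y} {t : κ → ι} {l : List κ}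

/-- The members of `U` containing a member of `V` whose index occurs in `l`. -/
def coarsenings (V : κ → Set Y) (U : ι → Set Y) (l : List κ) : Set ι := {i | ∃ a ∈ l, V a ⊆ U i}

theorem coarsenings_mono {τ : List κ} (h : τ.Sublist l) : coarsenings V U τ ⊆ coarsenings V U l :=
  fun _ ⟨a, ha, hai⟩ => ⟨a, h.subset ha, hai⟩

theorem mem_coarsenings (hVU : ∀ i, V i ⊆ U (t i)) {a : κ} (ha : a ∈ l) :
    t a ∈ coarsenings V U l := ⟨a, ha, hVU a⟩

variable [LinearOrder κ]

/-- The ordered simplices, degenerate ones included, of the nerve of the trace of the family `V`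
on `A`. -/
def nerve (V : κ → Set Y) (A : Set Y) : Set (List κ) := {l | ∃ x ∈ A, l ∈ sortedLists {i | x ∈ V i}}

theorem ne_nil_of_mem_nerve (hl : l ∈ nerve V A) : l ≠ [] := by
  obtain ⟨x, -, hx⟩ := hl
  exact hx.1

theorem length_pos_of_mem_nerve (hl : l ∈ nerve V A) : 0 < l.length :=
  List.length_pos_iff.2 (ne_nil_of_mem_nerve hl)

theorem nerve_mono (h : A ⊆ B) : nerve V A ⊆ nerve V B :=
  fun _ ⟨x, hx, hl⟩ => ⟨x, h hx, hl⟩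

theorem mem_nerve_of_sublist {τ : List κ} (hl : l ∈ nerve V A) (hτ : τ ≠ [])
    (hτl : τ.Sublist l) : τ ∈ nerve V A := by
  obtain ⟨x, hxA, hx⟩ := hl
  exact ⟨x, hxA, sortedLists_of_sublist hx hτ hτl⟩

theorem coarsenings_nonempty (hVU : ∀ i, V i ⊆ U (t i)) (hl : l ∈ nerve V A) :
    (coarsenings V U l).Nonempty :=
  (List.exists_mem_of_ne_nil l (ne_nil_of_mem_nerve hl)).elim fun _ ha =>
    ⟨_, mem_coarsenings hVU ha⟩

/-- The pairs of ordered simplices of the nerve of `V`. -/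
def nervePairs (V : κ → Set Y) : Set (List κ × List κ) := nerve V univ ×ˢ nerve V univ

theorem isBasedComplex_nervePairs (V : κ → Set Y) :
    IsBasedComplex (PairChain.basis κ) (fun p => p.1.length + p.2.length - 2) (· ∈ nervePairs V)
      (fun p' p => p'.1.Sublist p.1 ∧ p'.2.Sublist p.2)
      PairChain.boundary PairChain.augmentation where
  d_mem p hp := by
    refine Submodule.span_mono (image_mono ?_) (PairChain.boundary_basis_mem_span
      (ne_nil_of_mem_nerve hp.1) (ne_nil_of_mem_nerve hp.2))
    rintro τ ⟨h₁, h₂, hτ₁, hτ₂, hlen⟩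
    have := List.length_pos_iff.2 h₁
    have := List.length_pos_iff.2 h₂
    exact ⟨⟨mem_nerve_of_sublist hp.1 h₁ hτ₁, mem_nerve_of_sublist hp.2 h₂ hτ₂⟩, by omega,
      hτ₁, hτ₂⟩
  d_d := PairChain.boundary_boundary
  aug_d := PairChain.augmentation_boundary
  aug_eq_one := by
    rintro ⟨l, l'⟩ ⟨hl, hl'⟩ hdeg
    have := length_pos_of_mem_nerve hl
    have := length_pos_of_mem_nerve hl'
    dsimp only at *
    obtain ⟨a, rfl⟩ := List.length_eq_one_iff.1 (show l.length = 1 by omega)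
    obtain ⟨b, rfl⟩ := List.length_eq_one_iff.1 (show l'.length = 1 by omega)
    simp [PairChain.basis_apply, PairChain.augmentation_tmul]

/-- The members of the family `W` containing a box `V a ×ˢ V b` with `a ∈ p.1` and `b ∈ p.2`. -/
def boxCoarsenings (V : κ → Set Y) (W : ω → Set (Y × Y)) (p : List κ × List κ) : Set ω :=
  {y | ∃ a ∈ p.1, ∃ b ∈ p.2, V a ×ˢ V b ⊆ W y}

theorem mem_coarsenings_of_mem_boxCoarsenings {W : ω → Set (Y × Y)} {s : ω → ι × ι}
    (hWU : ∀ y, W y ⊆ U (s y).1 ×ˢ U (s y).2) {p : List κ × List κ} (hp : p ∈ nervePairs V) {y : ω}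
    (hy : y ∈ boxCoarsenings V W p) :
    (s y).1 ∈ coarsenings V U p.1 ∧ (s y).2 ∈ coarsenings V U p.2 := by
  obtain ⟨⟨x, -, hx⟩, ⟨x', -, hx'⟩⟩ := hp
  obtain ⟨a, ha, b, hb, hab⟩ := hy
  have hbox := hab.trans (hWU y)
  exact ⟨⟨a, ha, fun z hz => (hbox (show (z, x') ∈ V a ×ˢ V b from ⟨hz, hx'.2.2 b hb⟩)).1⟩,
    b, hb, fun z hz => (hbox (show (x, z) ∈ V a ×ˢ V b from ⟨hx.2.2 a ha, hz⟩)).2⟩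

variable [LinearOrder ι]

theorem map_mem_nerve (ht : Monotone t) (hVU : ∀ i, V i ⊆ U (t i)) (hl : l ∈ nerve V A) :
    l.map t ∈ nerve U A := by
  obtain ⟨x, hxA, hx⟩ := hl
  exact ⟨x, hxA, map_mem_sortedLists ht (fun i hi => hVU i hi) hx⟩

theorem mem_nerve_of_mem_sortedLists_coarsenings (hl : l ∈ nerve V A) {m : List ι}
    (hm : m ∈ sortedLists (coarsenings V U l)) : m ∈ nerve U A := by
  obtain ⟨x, hxA, hx⟩ := hl
  refine ⟨x, hxA, sortedLists_mono ?_ hm⟩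
  rintro i ⟨a, ha, hai⟩
  exact hai (hx.2.2 a ha)

theorem isAcyclicCarrier_coarsenings [Finite ι] (hVU : ∀ i, V i ⊆ U (t i)) :
    IsAcyclicCarrier (· ∈ nervePairs V) (fun p' p => p'.1.Sublist p.1 ∧ p'.2.Sublist p.2)
      PairChain.boundary PairChain.augmentation
      fun p => pairCarrier (coarsenings V U p.1) (coarsenings V U p.2) :=
  isAcyclicCarrier_pairCarrier (fun _ hp => coarsenings_nonempty hVU hp.1)
    (fun _ hp => coarsenings_nonempty hVU hp.2) (fun _ _ _ h => coarsenings_mono h.1)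
    fun _ _ _ h => coarsenings_mono h.2

theorem isCarriedMap_pairMap (ht : Monotone t) (hVU : ∀ i, V i ⊆ U (t i)) (N : ℕ) :
    IsCarriedMap (PairChain.basis κ) (fun p => p.1.length + p.2.length - 2) (· ∈ nervePairs V)
      PairChain.boundary PairChain.boundary PairChain.augmentation
      (fun p => pairCarrier (coarsenings V U p.1) (coarsenings V U p.2)) N (PairChain.map t) where
  mem p hp _ := by
    obtain ⟨⟨x, -, hx⟩, ⟨y, -, hy⟩⟩ := hp
    have := List.length_pos_iff.2 hx.1
    have := List.length_pos_iff.2 hy.1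
    rw [PairChain.basis_apply, PairChain.map_tmul, map_simplex, map_simplex]
    refine tmul_mem_pairCarrier ?_ ?_ (by simp only [List.length_map]; omega)
    · exact map_mem_sortedLists ht (fun _ => mem_coarsenings hVU) ⟨hx.1, hx.2.1, fun _ => id⟩
    · exact map_mem_sortedLists ht (fun _ => mem_coarsenings hVU) ⟨hy.1, hy.2.1, fun _ => id⟩
  comm p _ _ := PairChain.boundary_map t _
  aug_eq_one p hp _ hdeg := by
    rw [PairChain.augmentation_map, (isBasedComplex_nervePairs V).aug_eq_one p hp hdeg]

variable [LinearOrder ω]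

theorem isAcyclicCarrier_boxCoarsenings [Finite ω] {W : ω → Set (Y × Y)}
    (hVW : ∀ a b, ∃ y, V a ×ˢ V b ⊆ W y) :
    IsAcyclicCarrier (· ∈ nervePairs V) (fun p' p => p'.1.Sublist p.1 ∧ p'.2.Sublist p.2)
      boundary augmentation fun p => strictCarrier (boxCoarsenings V W p) := by
  refine isAcyclicCarrier_strictCarrier (fun p hp => ?_) ?_
  · obtain ⟨a, ha⟩ := List.exists_mem_of_ne_nil _ (ne_nil_of_mem_nerve hp.1)
    obtain ⟨b, hb⟩ := List.exists_mem_of_ne_nil _ (ne_nil_of_mem_nerve hp.2)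
    obtain ⟨y, hy⟩ := hVW a b
    exact ⟨y, a, ha, b, hb, hy⟩
  · rintro p' p - ⟨h₁, h₂⟩ y ⟨a, ha, b, hb, hab⟩
    exact ⟨a, h₁.subset ha, b, h₂.subset hb, hab⟩

theorem strictCarrier_boxCoarsenings_eq_bot [TopologicalSpace Y] {W : ω → Set (Y × Y)}
    {M q : ℕ} (hW : IsCoverOfOrderLE M W) (hq : M < q) {p : List κ × List κ}
    (hp : p ∈ nervePairs V) :
    strictCarrier (boxCoarsenings V W p) q = ⊥ := by
  obtain ⟨⟨x, -, hx⟩, ⟨x', -, hx'⟩⟩ := hp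
  refine (Submodule.span_eq_bot).2 ?_
  rintro _ ⟨u, ⟨⟨-, hlt, hu⟩, hlen⟩, rfl⟩
  have hcard := hW.card_le (x, x') u.toFinset fun y hy => by
    obtain ⟨a, ha, b, hb, hab⟩ := hu y (List.mem_toFinset.1 hy)
    exact hab ⟨hx.2.2 a ha, hx'.2.2 b hb⟩
  rw [List.toFinset_card_of_nodup (hlt.imp ne_of_lt)] at hcard
  omega

/-- The map is the composite of a chain map to the strictly ordered chains of the nerve of `W`,
which vanish above degree `M`, with a chain map back to pairs. -/
theorem exists_isCarriedMap_eq_zero [TopologicalSpace Y] [Finite ι] [Finite ω]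
    {W : ω → Set (Y × Y)} {M : ℕ}
    (hW : IsCoverOfOrderLE M W) {s : ω → ι × ι} (hWU : ∀ y, W y ⊆ U (s y).1 ×ˢ U (s y).2)
    (hVW : ∀ a b, ∃ y, V a ×ˢ V b ⊆ W y) (N : ℕ) :
    ∃ φ, IsCarriedMap (PairChain.basis κ) (fun p => p.1.length + p.2.length - 2)
        (· ∈ nervePairs V) PairChain.boundary PairChain.boundary PairChain.augmentation
        (fun p => pairCarrier (coarsenings V U p.1) (coarsenings V U p.2)) N φ ∧
      ∀ p ∈ nervePairs V, M < p.1.length + p.2.length - 2 → p.1.length + p.2.length - 2 < N →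
        φ (PairChain.basis κ p) = 0 := by
  obtain ⟨φ, hφ⟩ := (isAcyclicCarrier_boxCoarsenings hVW).exists_isCarriedMap
    (isBasedComplex_nervePairs V) N
  have hne {f : ω → ι} (u : List ω) (hu : u ∈ strictSortedLists univ) :
      (f '' {y | y ∈ u}).Nonempty :=
    (List.exists_mem_of_ne_nil u hu.1).elim fun y hy => ⟨_, y, hy, rfl⟩
  have hmono {f : ω → ι} (τ u : List ω) (_ : u ∈ strictSortedLists univ) (h : τ.Sublist u) :
      f '' {y | y ∈ τ} ⊆ f '' {y | y ∈ u} := image_mono fun _ hy => h.subset hy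
  have hacyclic : IsAcyclicCarrier (· ∈ strictSortedLists univ) List.Sublist PairChain.boundary
      PairChain.augmentation fun u : List ω =>
        pairCarrier ((fun y => (s y).1) '' {y | y ∈ u}) ((fun y => (s y).2) '' {y | y ∈ u}) :=
    isAcyclicCarrier_pairCarrier hne hne hmono hmono
  have hT := isBasedComplex_strictSortedLists (univ : Set ω)
  obtain ⟨ψ, hψ⟩ := hacyclic.exists_isCarriedMap hT N
  refine ⟨ψ ∘ₗ φ, hψ.comp hφ hT fun p hp q => ?_, fun p hp hM hN => ?_⟩
  · rw [strictCarrier]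
    refine Submodule.span_mono ?_
    rintro _ ⟨u, ⟨hu, hlen⟩, rfl⟩
    refine ⟨u, ⟨strictSortedLists_mono (subset_univ _) hu, by omega, pairCarrier_mono ?_ ?_⟩,
      by simp⟩
    · exact image_subset_iff.2 fun y hy =>
        (mem_coarsenings_of_mem_boxCoarsenings hWU hp (hu.2.2 y hy)).1
    · exact image_subset_iff.2 fun y hy =>
        (mem_coarsenings_of_mem_boxCoarsenings hWU hp (hu.2.2 y hy)).2
  · have hzero := hφ.mem p hp hN
    rw [strictCarrier_boxCoarsenings_eq_bot hW hM hp, Submodule.mem_bot] at hzero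
    rw [LinearMap.comp_apply, hzero, map_zero]

/-- A relative cocycle of degree `q` of the square of the pair of nerves of `U` on the whole space
and on `A`. The pair of lists `(l, l')` has degree `l.length + l'.length - 2`. -/
structure IsPairCocycle (U : ι → Set Y) (A : Set Y) (q : ℕ) (z : PairChain ι →ₗ[ℤ] ℤ) : Prop where
  boundary_eq_zero : ∀ l ∈ nerve U univ, ∀ l' ∈ nerve U univ, l.length + l'.length = q + 3 →
    z (PairChain.boundary (simplex l ⊗ₜ simplex l')) = 0
  eq_zero : ∀ l ∈ nerve U univ, ∀ l' ∈ nerve U univ, l.length + l'.length = q + 2 →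
    l ∈ nerve U A ∨ l' ∈ nerve U A → z (simplex l ⊗ₜ simplex l') = 0

/-- A relative cochain `e` of the square of the pair of nerves of `U` on the whole space and on `A`,
whose coboundary is the cochain `z` of degree `q`. -/
structure IsPairPrimitive (U : ι → Set Y) (A : Set Y) (q : ℕ) (z e : PairChain ι →ₗ[ℤ] ℤ) :
    Prop where
  eq_boundary : ∀ l ∈ nerve U univ, ∀ l' ∈ nerve U univ, l.length + l'.length = q + 2 →
    z (simplex l ⊗ₜ simplex l') = e (PairChain.boundary (simplex l ⊗ₜ simplex l'))
  eq_zero : ∀ l ∈ nerve U univ, ∀ l' ∈ nerve U univ, l.length + l'.length = q + 1 →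
    l ∈ nerve U A ∨ l' ∈ nerve U A → e (simplex l ⊗ₜ simplex l') = 0

theorem IsPairCocycle.exists_isPairPrimitive [TopologicalSpace Y] [Finite ι] [Finite ω]
    {W : ω → Set (Y × Y)} {M q : ℕ}
    {z : PairChain ι →ₗ[ℤ] ℤ} (hz : IsPairCocycle U A q z) (hq : M < q)
    (ht : Monotone t) (hVU : ∀ i, V i ⊆ U (t i)) (hW : IsCoverOfOrderLE M W) {s : ω → ι × ι}
    (hWU : ∀ y, W y ⊆ U (s y).1 ×ˢ U (s y).2) (hVW : ∀ a b, ∃ y, V a ×ˢ V b ⊆ W y) :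
    ∃ e, IsPairPrimitive V A q (z ∘ₗ PairChain.map t) e := by
  obtain ⟨φ, hφ, hφ0⟩ := exists_isCarriedMap_eq_zero hW hWU hVW (q + 2)
  obtain ⟨h, hh⟩ := (isAcyclicCarrier_coarsenings hVU).exists_homotopy
    (isBasedComplex_nervePairs V) (isCarriedMap_pairMap ht hVU (q + 2)) hφ
  refine ⟨z ∘ₗ h, ⟨fun l hl l' hl' hlen => ?_, fun l hl l' hl' hlen hA => ?_⟩⟩
  · obtain ⟨hmem, heq⟩ := hh (l, l') ⟨hl, hl'⟩ (by dsimp only; omega)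
    have hcocycle : z (PairChain.boundary (h (PairChain.basis κ (l, l')))) = 0 := by
      refine LinearMap.eqOn_span (f := z ∘ₗ PairChain.boundary) (g := 0) ?_ hmem
      rintro _ ⟨⟨m, m'⟩, ⟨hm, hm', hmlen⟩, rfl⟩
      rw [LinearMap.comp_apply, PairChain.basis_apply]
      exact hz.boundary_eq_zero m (mem_nerve_of_mem_sortedLists_coarsenings hl hm) m'
        (mem_nerve_of_mem_sortedLists_coarsenings hl' hm') (by dsimp only at hmlen; omega)
    have hz_eq := congrArg z heq
    rw [hφ0 (l, l') ⟨hl, hl'⟩ (by dsimp only; omega) (by dsimp only; omega), sub_zero, map_add,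
      hcocycle, zero_add, PairChain.basis_apply] at hz_eq
    exact hz_eq.symm
  · have hpos := length_pos_of_mem_nerve hl
    have hpos' := length_pos_of_mem_nerve hl'
    obtain ⟨hmem, -⟩ := hh (l, l') ⟨hl, hl'⟩ (by dsimp only; omega)
    rw [PairChain.basis_apply] at hmem
    refine LinearMap.eqOn_span (f := z) (g := 0) ?_ hmem
    rintro _ ⟨⟨m, m'⟩, ⟨hm, hm', hmlen⟩, rfl⟩
    rw [PairChain.basis_apply]
    exact hz.eq_zero m (mem_nerve_of_mem_sortedLists_coarsenings hl hm) m'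
      (mem_nerve_of_mem_sortedLists_coarsenings hl' hm') (by dsimp only at hmlen; omega)
      (hA.imp (fun g => mem_nerve_of_mem_sortedLists_coarsenings g hm)
        fun g => mem_nerve_of_mem_sortedLists_coarsenings g hm')

theorem DimLE.exists_refinement_isPairPrimitive [CompactSpace X] {n M k : ℕ} (hX : DimLE n X)
    (hXX : DimLE M (X × X)) {U : Fin k → Set X} (hU : IsIndexedCover U) (A : Set X) :
    ∃ (k' : ℕ) (V : Fin k' → Set X) (t : Fin k' → Fin k), IsCoverOfOrderLE n V ∧ Monotone t ∧
      (∀ i, V i ⊆ U (t i)) ∧ ∀ q, M < q → ∀ z, IsPairCocycle U A q z →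
        ∃ e, IsPairPrimitive V A q (z ∘ₗ PairChain.map t) e := by
  have hUU : IsIndexedCover fun p : Fin k × Fin k => U p.1 ×ˢ U p.2 :=
    ⟨fun p => (hU.isOpen _).prod (hU.isOpen _), fun x => by
      obtain ⟨i, hi⟩ := hU.exists_mem x.1
      obtain ⟨j, hj⟩ := hU.exists_mem x.2
      exact ⟨(i, j), hi, hj⟩⟩
  obtain ⟨w, W, hW, hWU⟩ := hXX.exists_refinement hUU
  choose s hs using hWU
  obtain ⟨S, T, C, D, hC, hD, hCD⟩ := hW.toIsIndexedCover.exists_prod_refinement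
  obtain ⟨k', V, t, hV, ht, hVt, hVCD⟩ := hX.exists_monotone_refinement hU (hC.prod_inter hD)
  refine ⟨k', V, t, hV, ht, hVt, fun q hq z hz =>
    hz.exists_isPairPrimitive hq ht hVt hW hs fun a b => ?_⟩
  obtain ⟨i, hi⟩ := hVCD a
  obtain ⟨j, hj⟩ := hVCD b
  obtain ⟨y, hy⟩ := hCD i.1 j.2
  exact ⟨y, (prod_mono (hi.trans inter_subset_left) (hj.trans inter_subset_right)).trans hy⟩

end Nerve

section Obstruction

open ListChain

namespace ListChain

variable {V V' : Type*}

theorem cone_apply_cons [DecidableEq V] (v a : V) (x : ListChain V) (l : List V) :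
    cone v x (a :: l) = if v = a then x l else 0 := by
  classical
  refine map_eq_map (f := Finsupp.lapply (a :: l) ∘ₗ cone v)
    (g := if v = a then Finsupp.lapply (R := ℤ) l else 0) (fun m => ?_) x |>.trans ?_
  · split_ifs with h <;> simp [Finsupp.single_apply, h]
  · split_ifs <;> rfl

theorem augBoundaryList_apply_range' (n : ℕ) {a : ℕ} {k : List ℕ} (hk : k.Pairwise (· ≤ ·))
    (hlen : k.length = n + 1) (hlt : ∀ x ∈ k, x < a + n) :
    augBoundaryList k (List.range' a n) =
      open Classical in if ∃ x < a, k = x :: List.range' a n then 1 else 0 := by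
  induction n generalizing a k with
  | zero =>
    obtain ⟨x, rfl⟩ := List.length_eq_one_iff.1 hlen
    have hx : x < a := by simpa using hlt
    simp [augBoundaryList, hx]
  | succ n ih =>
    obtain ⟨x, k, rfl⟩ := List.exists_cons_of_ne_nil (List.ne_nil_of_length_eq_add_one hlen)
    obtain ⟨hxk, hk⟩ := List.pairwise_cons.1 hk
    rw [augBoundaryList, Finsupp.sub_apply, List.range'_succ, cone_apply_cons,
      ih hk (by simpa using hlen) fun y hy => by have := hlt y (by simp [hy]); omega,
      Finsupp.single_apply]
    simp only [List.cons.injEq]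
    by_cases hxa : x = a
    · have hfirst : (∃ y < a + 1, k = y :: List.range' (a + 1) n) ↔
          k = a :: List.range' (a + 1) n := by
        refine ⟨?_, fun h => ⟨a, by omega, h⟩⟩
        rintro ⟨y, hy, h⟩
        obtain rfl : y = a := by have := hxk y (by simp [h]); omega
        exact h
      have hlast : ¬ ∃ y < a, x = y ∧ k = a :: List.range' (a + 1) n := by
        rintro ⟨y, hy, hxy, -⟩
        omega
      simp only [hxa, hfirst, if_true, sub_self] at hlast ⊢
      rw [if_neg hlast]
    · have hlast : (∃ y < a, x = y ∧ k = a :: List.range' (a + 1) n) ↔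
          k = a :: List.range' (a + 1) n := by
        refine ⟨fun ⟨_, _, _, h⟩ => h, fun h => ⟨x, ?_, rfl, h⟩⟩
        have := hxk a (by simp [h])
        omega
      simp only [hlast, if_neg hxa, sub_zero]

/-- The cochain counting the lists whose colours are `1, …, n` in this order. -/
noncomputable def faceCochain (n : ℕ) (χ : V → ℕ) : ListChain V →ₗ[ℤ] ℤ :=
  Finsupp.lapply (List.range' 1 n) ∘ₗ map χ

theorem faceCochain_simplex (n : ℕ) (χ : V → ℕ) (l : List V) :
    faceCochain n χ (simplex l) = if l.map χ = List.range' 1 n then 1 else 0 := by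
  simp [faceCochain, Finsupp.single_apply]

/-- The obstruction cocycle of the colouring `χ`: the coboundary of `faceCochain n χ`. If `χ` is
monotone with values at most `n`, then it counts the lists coloured `0, …, n`. -/
noncomputable def obstruction (n : ℕ) (χ : V → ℕ) : ListChain V →ₗ[ℤ] ℤ :=
  faceCochain n χ ∘ₗ augBoundary

variable {n : ℕ} {χ : V → ℕ}

theorem obstruction_simplex (l : List V) :
    obstruction n χ (simplex l) = augBoundaryList (l.map χ) (List.range' 1 n) := by
  rw [obstruction, faceCochain, LinearMap.comp_apply, LinearMap.comp_apply, ← augBoundary_map,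
    map_simplex, augBoundary_simplex, Finsupp.lapply_apply]

theorem obstruction_boundary (x : ListChain V) : obstruction n χ (boundary x) = 0 := by
  rw [obstruction, LinearMap.comp_apply, augBoundary_boundary, map_zero]

theorem obstruction_simplex_map (t : V' → V) (l : List V') :
    obstruction n χ (simplex (l.map t)) = obstruction n (χ ∘ t) (simplex l) := by
  rw [obstruction_simplex, obstruction_simplex, List.map_map]

theorem obstruction_simplex_eq_zero_of_length_ne {l : List V} (hl : l.length ≠ n + 1) :
    obstruction n χ (simplex l) = 0 := by
  rw [obstruction_simplex]
  refine LinearMap.eqOn_span (f := Finsupp.lapply (List.range' 1 n)) (g := 0) ?_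
    (augBoundaryList_mem_span (l.map χ))
  rintro _ ⟨τ, ⟨-, hτ⟩, rfl⟩
  rw [List.length_map] at hτ
  refine Finsupp.single_eq_of_ne fun h => hl ?_
  rw [← hτ, ← h, List.length_range']

theorem obstruction_simplex_eq_zero_of_notMem_map [Preorder V] (hχ : Monotone χ)
    (hle : ∀ v, χ v ≤ n) {l : List V} (hl : l.Pairwise (· ≤ ·)) {i : ℕ} (hi : i ≤ n)
    (hil : i ∉ l.map χ) : obstruction n χ (simplex l) = 0 := by
  classical
  by_cases hlen : l.length = n + 1
  · rw [obstruction_simplex, augBoundaryList_apply_range' n (hl.map _ fun _ _ h => hχ h)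
      (by simpa using hlen), if_neg]
    · rintro ⟨y, hy, h⟩
      exact hil (by rw [h, List.mem_cons, List.mem_range'_1]; omega)
    · rintro _ hy
      obtain ⟨v, -, rfl⟩ := List.mem_map.1 hy
      have := hle v
      omega
  · exact obstruction_simplex_eq_zero_of_length_ne hlen

end ListChain

end Obstruction

section LabelledCover

open ListChain

variable {ι κ : Type*} [LinearOrder ι] [LinearOrder κ] {n : ℕ} {O : ℕ → Set X} {A : Set X}
  {U : ι → Set X} {V : κ → Set X} {χ : ι → ℕ} {t : κ → ι} {l : List ι}

/-- A cover of order at most `n` refining the family `O 0, …, O n`, with a monotone choice `χ` of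
the member of the family containing each of its members. -/
structure IsLabelledCover (n : ℕ) (O : ℕ → Set X) (U : ι → Set X) (χ : ι → ℕ) : Prop
    extends IsCoverOfOrderLE n U where
  monotone : Monotone χ
  label_le : ∀ i, χ i ≤ n
  subset : ∀ i, U i ⊆ O (χ i)

namespace IsLabelledCover

theorem comp (h : IsLabelledCover n O U χ) (hV : IsCoverOfOrderLE n V) (ht : Monotone t)
    (hVU : ∀ i, V i ⊆ U (t i)) : IsLabelledCover n O V (χ ∘ t) :=
  ⟨hV, h.monotone.comp ht, fun _ => h.label_le _, fun _ => (hVU _).trans (h.subset _)⟩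

theorem obstruction_eq_zero (h : IsLabelledCover n O U χ) (hA : ∀ x ∈ A, ∃ i ≤ n, x ∉ O i)
    (hl : l ∈ nerve U A) : obstruction n χ (simplex l) = 0 := by
  obtain ⟨x, hxA, -, hsorted, hx⟩ := hl
  obtain ⟨i, hi, hxi⟩ := hA x hxA
  refine obstruction_simplex_eq_zero_of_notMem_map h.monotone h.label_le hsorted hi fun hmem => ?_
  obtain ⟨v, hv, rfl⟩ := List.mem_map.1 hmem
  exact hxi (h.subset v (hx v hv))

end IsLabelledCover

theorem DimLE.exists_isLabelledCover (h : DimLE n X) (hO : ∀ i, IsOpen (O i))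
    (hcover : ∀ x, ∃ i ≤ n, x ∈ O i) :
    ∃ (k : ℕ) (U : Fin k → Set X) (χ : Fin k → ℕ), IsLabelledCover n O U χ := by
  obtain ⟨k, U, t, hU, ht, hUt, -⟩ := h.exists_monotone_refinement
    (U := fun i : Fin (n + 1) => O i)
    ⟨fun _ => hO _, fun x => (hcover x).imp' (fun i => Fin.ofNat (n + 1) i) fun i ⟨hi, hx⟩ => by
      simpa [Nat.mod_eq_of_lt (Nat.lt_succ_of_le hi)] using hx⟩
    (W := fun _ : Unit => univ) ⟨fun _ => isOpen_univ, fun _ => ⟨(), trivial⟩⟩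
  exact ⟨k, U, fun i => t i, hU, fun _ _ hij => ht hij, fun i => Nat.lt_succ_iff.1 (t i).2, hUt⟩

end LabelledCover

section FunctionalCriteria

variable {D : Type*} [AddCommGroup D] {B : Submodule ℤ D} {c : D}

theorem natAbs_smul_mem_iff {a : ℤ} : (a.natAbs : ℤ) • c ∈ B ↔ a • c ∈ B := by
  rcases Int.natAbs_eq a with h | h
  · rw [← h]
  · conv_rhs => rw [h, neg_smul, neg_mem_iff]

theorem exists_pos_smul_mem_of_forall_functional_eq_zero [Module.Finite ℤ D]
    (h : ∀ lam : D →ₗ[ℤ] ℤ, (∀ b ∈ B, lam b = 0) → lam c = 0) :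
    ∃ m : ℕ, 1 ≤ m ∧ (m : ℤ) • c ∈ B := by
  let T := Submodule.torsion ℤ (D ⧸ B)
  have hfree : T.mkQ (B.mkQ c) = 0 := by
    refine (Module.forall_dual_apply_eq_zero_iff ℤ _).1 fun φ =>
      h (φ ∘ₗ T.mkQ ∘ₗ B.mkQ) fun b hb => ?_
    rw [LinearMap.comp_apply, LinearMap.comp_apply, Submodule.mkQ_apply B,
      (Submodule.Quotient.mk_eq_zero B).2 hb, map_zero, map_zero]
  obtain ⟨a, ha⟩ :=
    (Submodule.mem_torsion_iff (B.mkQ c)).1 ((Submodule.Quotient.mk_eq_zero T).1 hfree)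
  have ha0 : (a : ℤ) ≠ 0 := nonZeroDivisors.coe_ne_zero a
  exact ⟨(a : ℤ).natAbs, by omega,
    natAbs_smul_mem_iff.2 ((Submodule.Quotient.mk_eq_zero B).1 ha)⟩

theorem exists_pos_smul_mem_of_forall_functional_smul_mem [Module.Finite ℤ D]
    (h : ∀ lam : D →ₗ[ℤ] ℤ, (∀ b ∈ B, lam b = 0) → lam c • c ∈ B) :
    ∃ m : ℕ, 1 ≤ m ∧ (m : ℤ) • c ∈ B := by
  by_cases h₀ : ∀ lam : D →ₗ[ℤ] ℤ, (∀ b ∈ B, lam b = 0) → lam c = 0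
  · exact exists_pos_smul_mem_of_forall_functional_eq_zero h₀
  · push Not at h₀
    obtain ⟨lam, hlam, hc⟩ := h₀
    exact ⟨(lam c).natAbs, by omega, natAbs_smul_mem_iff.2 (h lam hlam)⟩

/-- Let `a` generate the ideal of all `k` with `k • c ∈ B`. The hypothesis makes all coordinates of
`m • c` in a basis of `B` divisible by `a`, so `(m / a) • c ∈ B`, and `a ∣ m / a`. -/
theorem exists_smul_mem_sq_dvd [Module.Finite ℤ D] [Module.Free ℤ D] {m : ℕ} (hm : 1 ≤ m)
    (hmc : (m : ℤ) • c ∈ B) (h : ∀ μ : B →ₗ[ℤ] ℤ, μ ⟨(m : ℤ) • c, hmc⟩ • c ∈ B) :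
    ∃ a : ℕ, 1 ≤ a ∧ (a : ℤ) • c ∈ B ∧ a ^ 2 ∣ m := by
  obtain ⟨a, ha⟩ :=
    (IsPrincipalIdealRing.principal (B.comap (LinearMap.toSpanSingleton ℤ D c))).principal
  have hmem (k : ℤ) : k • c ∈ B ↔ a ∣ k := by
    rw [← Ideal.mem_span_singleton, ← Ideal.submodule_span_eq, ← ha, Submodule.mem_comap,
      LinearMap.toSpanSingleton_apply]
  obtain ⟨r, hr⟩ := (hmem _).1 hmc
  have ha0 : a ≠ 0 := by
    rintro rfl
    omega
  let basis := Module.Free.chooseBasis ℤ B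
  choose q hq using fun i => (hmem _).1 (h (basis.coord i))
  have hdvd : (⟨(m : ℤ) • c, hmc⟩ : B) = a • ∑ i, q i • basis i := by
    conv_lhs => rw [← basis.sum_repr ⟨(m : ℤ) • c, hmc⟩]
    simp only [Finset.smul_sum, smul_smul, ← hq, Module.Basis.coord_apply]
  have hrc : r • c = (∑ i, q i • basis i : B) := by
    refine smul_right_injective D ha0 ?_
    dsimp only
    rw [smul_smul, ← hr]
    exact congrArg Subtype.val hdvd
  obtain ⟨r', rfl⟩ := (hmem r).1 (hrc ▸ Subtype.prop _)
  refine ⟨a.natAbs, by omega, natAbs_smul_mem_iff.2 ((hmem a).2 dvd_rfl), r'.natAbs, ?_⟩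
  rw [sq, mul_assoc, ← Int.natAbs_mul, ← Int.natAbs_mul, ← hr, Int.natAbs_natCast]

end FunctionalCriteria

section RelativeCoboundaries

open ListChain

variable {Y ι : Type*} [LinearOrder ι] {U : ι → Set Y} {A : Set Y} {n : ℕ}

theorem boundary_simplex_mem_span_nerve {l : List ι} (hl : l ∈ nerve U A)
    (hlen : l.length = n + 1) :
    boundary (simplex l) ∈ Submodule.span ℤ (simplex '' {τ | τ ∈ nerve U A ∧ τ.length = n}) := by
  refine Submodule.span_mono (image_mono ?_) (boundary_simplex_mem_span l)
  rintro τ ⟨hτ, hτl, hτlen⟩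
  exact ⟨mem_nerve_of_sublist hl hτ hτl, by omega⟩

/-- The ordered simplices of dimension `n` of the nerve of `U`. -/
def TopSimplex (U : ι → Set Y) (n : ℕ) := {l : List ι // l ∈ nerve U univ ∧ l.length = n + 1}

instance [Finite ι] : Finite (TopSimplex U n) :=
  Set.Finite.subset (List.finite_length_eq ι (n + 1)) fun _ hl => hl.2

/-- The coboundaries of the relative cochains of degree `n - 1` of the pair of nerves of `U` on the
whole space and on `A`. -/
def relCoboundaries (U : ι → Set Y) (A : Set Y) (n : ℕ) : Submodule ℤ (TopSimplex U n → ℤ) where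
  carrier := {g | ∃ b : ListChain ι →ₗ[ℤ] ℤ, (∀ l ∈ nerve U A, l.length = n → b (simplex l) = 0) ∧
    ∀ l : TopSimplex U n, g l = b (boundary (simplex l.1))}
  zero_mem' := ⟨0, fun _ _ _ => rfl, fun _ => rfl⟩
  add_mem' := by
    rintro _ _ ⟨b, hbA, hb⟩ ⟨b', hbA', hb'⟩
    exact ⟨b + b', fun l hl hlen => by simp [hbA l hl hlen, hbA' l hl hlen],
      fun l => by simp [hb, hb']⟩
  smul_mem' := by
    rintro r _ ⟨b, hbA, hb⟩
    exact ⟨r • b, fun l hl hlen => by simp [hbA l hl hlen], fun l => by simp [hb]⟩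

end RelativeCoboundaries

section CrossProduct

open ListChain TensorProduct

variable {Y ι : Type*}

/-- The exterior product of two cochains. -/
noncomputable def crossProduct (c d : ListChain ι →ₗ[ℤ] ℤ) : PairChain ι →ₗ[ℤ] ℤ :=
  LinearMap.mul' ℤ ℤ ∘ₗ TensorProduct.map c d

@[simp] theorem crossProduct_tmul (c d : ListChain ι →ₗ[ℤ] ℤ) (x y : ListChain ι) :
    crossProduct c d (x ⊗ₜ y) = c x * d y := rfl

variable [LinearOrder ι] {U : ι → Set Y} {A : Set Y} {n : ℕ} {c : TopSimplex U n → ℤ}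

theorem IsPairPrimitive.functional_smul_mem_relCoboundaries {z e : PairChain ι →ₗ[ℤ] ℤ}
    (he : IsPairPrimitive U A (2 * n) z e)
    (hz : ∀ l l' : TopSimplex U n, z (simplex l.1 ⊗ₜ simplex l'.1) = c l * c l')
    {lam : (TopSimplex U n → ℤ) →ₗ[ℤ] ℤ} (hlam : ∀ b ∈ relCoboundaries U A n, lam b = 0) :
    lam c • c ∈ relCoboundaries U A n := by
  let slice : ListChain ι →ₗ[ℤ] (TopSimplex U n → ℤ) := LinearMap.pi fun l =>
    e ∘ₗ TensorProduct.mk ℤ _ _ (simplex l.1)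
  have slice_apply (y : ListChain ι) (l) : slice y l = e (simplex l.1 ⊗ₜ y) := rfl
  refine ⟨(-1 : ℤ) ^ n • (lam ∘ₗ slice), fun l' hl' hlen => ?_, fun l' => ?_⟩
  · have hslice : slice (simplex l') = 0 := by
      funext l
      exact he.eq_zero l.1 l.2.1 l' (nerve_mono (subset_univ _) hl')
        (by rw [l.2.2, hlen]; omega) (Or.inr hl')
    simp [hslice]
  · have hcoboundary :
        (fun l : TopSimplex U n => e (boundary (simplex l.1) ⊗ₜ simplex l'.1)) ∈
          relCoboundaries U A n :=
      ⟨e ∘ₗ (TensorProduct.mk ℤ _ _).flip (simplex l'.1), fun τ hτ hlen =>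
        he.eq_zero τ (nerve_mono (subset_univ _) hτ) l'.1 l'.2.1 (by rw [l'.2.2, hlen]; omega)
          (Or.inl hτ), fun _ => rfl⟩
    have hsplit : c l' • c =
        (fun l : TopSimplex U n => e (boundary (simplex l.1) ⊗ₜ simplex l'.1)) +
          (-1 : ℤ) ^ n • slice (boundary (simplex l'.1)) := by
      funext l
      have h := he.eq_boundary l.1 l.2.1 l'.1 l'.2.1 (by rw [l.2.2, l'.2.2]; omega)
      rw [hz, PairChain.boundary_tmul, sign_simplex, l.2.2, ← smul_tmul', map_add, map_smul,
        pow_succ, pow_succ] at h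
      simp only [Pi.smul_apply, Pi.add_apply, smul_eq_mul, slice_apply] at h ⊢
      linarith
    have h := congrArg lam hsplit
    rw [map_smul, map_add, hlam _ hcoboundary, zero_add, map_smul] at h
    simp only [Pi.smul_apply, LinearMap.smul_apply, LinearMap.comp_apply, ← h, smul_eq_mul]
    ring

theorem IsPairPrimitive.apply_simplex_tmul_boundary {z e : PairChain ι →ₗ[ℤ] ℤ} {q : ℕ}
    (he : IsPairPrimitive U A q z e) {l l' : List ι} (hl : l ∈ nerve U univ)
    (hl' : l' ∈ nerve U univ) (hlen : l.length + l'.length = q + 3) :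
    z (simplex l ⊗ₜ boundary (simplex l')) =
      e (boundary (simplex l) ⊗ₜ boundary (simplex l')) := by
  obtain ⟨N, hN⟩ := Nat.exists_eq_add_one.2 (length_pos_of_mem_nerve hl')
  have hfaces : (z ∘ₗ TensorProduct.mk ℤ _ _ (simplex l)) (boundary (simplex l')) =
      (e ∘ₗ PairChain.boundary ∘ₗ TensorProduct.mk ℤ _ _ (simplex l)) (boundary (simplex l')) := by
    refine LinearMap.eqOn_span ?_ (boundary_simplex_mem_span_nerve hl' hN)
    rintro _ ⟨τ, ⟨hτ, hτlen⟩, rfl⟩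
    exact he.eq_boundary l hl τ hτ (by omega)
  simpa only [LinearMap.comp_apply, TensorProduct.mk_apply, PairChain.boundary_tmul,
    boundary_boundary, TensorProduct.tmul_zero, add_zero] using hfaces

theorem IsPairPrimitive.functional_smul_mem_relCoboundaries_of_torsion
    {z e : PairChain ι →ₗ[ℤ] ℤ} (he : IsPairPrimitive U A (2 * n - 1) z e) {m : ℤ}
    (hm : m • c ∈ relCoboundaries U A n)
    (hc : ∀ l l' : TopSimplex U n,
      e (boundary (simplex l.1) ⊗ₜ boundary (simplex l'.1)) = m * c l * c l')
    (μ : relCoboundaries U A n →ₗ[ℤ] ℤ) : μ ⟨m • c, hm⟩ • c ∈ relCoboundaries U A n := by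
  classical
  let slice (τ : List ι) (l : TopSimplex U n) : ℤ := e (boundary (simplex l.1) ⊗ₜ simplex τ)
  have slice_mem {τ : List ι} (hτ : τ ∈ nerve U univ ∧ τ.length = n) :
      slice τ ∈ relCoboundaries U A n := by
    have hpos := length_pos_of_mem_nerve hτ.1
    exact ⟨e ∘ₗ (TensorProduct.mk ℤ _ _).flip (simplex τ), fun σ hσ hlen =>
      he.eq_zero σ (nerve_mono (subset_univ _) hσ) τ hτ.1 (by omega) (Or.inl hσ), fun _ => rfl⟩
  let E : ListChain ι →ₗ[ℤ] relCoboundaries U A n := lift fun τ =>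
    if hτ : τ ∈ nerve U univ ∧ τ.length = n then ⟨slice τ, slice_mem hτ⟩ else 0
  have E_simplex {τ : List ι} (hτ : τ ∈ nerve U univ ∧ τ.length = n) :
      E (simplex τ) = ⟨slice τ, slice_mem hτ⟩ := by
    simp only [E, lift_simplex, dif_pos hτ]
  refine ⟨μ ∘ₗ E, fun τ hτ hlen => ?_, fun l' => ?_⟩
  · have hpos := length_pos_of_mem_nerve hτ
    have hE : E (simplex τ) = 0 := by
      rw [E_simplex ⟨nerve_mono (subset_univ _) hτ, hlen⟩]
      refine Subtype.ext (funext fun l => ?_)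
      refine LinearMap.eqOn_span (f := e ∘ₗ (TensorProduct.mk ℤ _ _).flip (simplex τ)) (g := 0) ?_
        (boundary_simplex_mem_span_nerve l.2.1 l.2.2)
      rintro _ ⟨σ, ⟨hσ, hσlen⟩, rfl⟩
      exact he.eq_zero σ hσ τ (nerve_mono (subset_univ _) hτ) (by omega) (Or.inr hτ)
    rw [LinearMap.comp_apply, hE, map_zero]
  · have hE : E (boundary (simplex l'.1)) = c l' • ⟨m • c, hm⟩ := by
      refine Subtype.ext (funext fun l => ?_)
      have hface : (LinearMap.proj l ∘ₗ (relCoboundaries U A n).subtype ∘ₗ E)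
          (boundary (simplex l'.1)) =
          (e ∘ₗ TensorProduct.mk ℤ _ _ (boundary (simplex l.1))) (boundary (simplex l'.1)) := by
        refine LinearMap.eqOn_span ?_ (boundary_simplex_mem_span_nerve l'.2.1 l'.2.2)
        rintro _ ⟨τ, hτ, rfl⟩
        simp only [LinearMap.comp_apply, E_simplex hτ]
        rfl
      simp only [LinearMap.comp_apply, TensorProduct.mk_apply, hc] at hface
      refine hface.trans ?_
      simp only [SetLike.val_smul, Pi.smul_apply, smul_eq_mul]
      ring
    rw [LinearMap.comp_apply, hE, map_smul, Pi.smul_apply, smul_eq_mul, smul_eq_mul, mul_comm]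

end CrossProduct

section ObstructionVanishes

open ListChain TensorProduct

section Cochains

variable {Y ι κ : Type*} {n : ℕ}

/-- If the coboundary of `d` is a multiple of the cocycle `c` of degree `n`, then this is a cocycle,
which represents the class of `c` paired with itself in the torsion product. -/
noncomputable def torsionProduct (n : ℕ) (c d : ListChain ι →ₗ[ℤ] ℤ) : PairChain ι →ₗ[ℤ] ℤ :=
  crossProduct c d + (-1 : ℤ) ^ (n + 1) • crossProduct d c

theorem torsionProduct_tmul (c d : ListChain ι →ₗ[ℤ] ℤ) (x y : ListChain ι) :
    torsionProduct n c d (x ⊗ₜ y) = c x * d y + (-1) ^ (n + 1) * (d x * c y) := rfl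

variable [LinearOrder ι] [LinearOrder κ] {U : ι → Set Y} {V : κ → Set Y} {A : Set Y} {χ : ι → ℕ}
  {t : κ → ι}

/-- The obstruction cocycle of `χ` as a function on the simplices of dimension `n`. -/
noncomputable def topObstruction (U : ι → Set Y) (χ : ι → ℕ) (n : ℕ) : TopSimplex U n → ℤ :=
  fun l => obstruction n χ (simplex l.1)

theorem exists_boundary_eq_smul_obstruction {m : ℤ}
    (hm : m • topObstruction U χ n ∈ relCoboundaries U A n) :
    ∃ d : ListChain ι →ₗ[ℤ] ℤ, (∀ l ∈ nerve U A, d (simplex l) = 0) ∧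
      (∀ l, l.length ≠ n → d (simplex l) = 0) ∧
      ∀ l ∈ nerve U univ, d (boundary (simplex l)) = m * obstruction n χ (simplex l) := by
  classical
  obtain ⟨b, hbA, hb⟩ := hm
  let d : ListChain ι →ₗ[ℤ] ℤ := lift fun l =>
    if l ∈ nerve U univ ∧ l.length = n then b (simplex l) else 0
  have hd (l : List ι) :
      d (simplex l) = if l ∈ nerve U univ ∧ l.length = n then b (simplex l) else 0 :=
    lift_simplex _ l
  have hdlen (l : List ι) (hl : l.length ≠ n) : d (simplex l) = 0 := by
    rw [hd, if_neg fun h => hl h.2]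
  refine ⟨d, fun l hl => ?_, hdlen, fun l hl => ?_⟩
  · rw [hd]
    split_ifs with h
    · exact hbA l hl h.2
    · rfl
  · by_cases hlen : l.length = n + 1
    · have hdb : d (boundary (simplex l)) = b (boundary (simplex l)) := by
        refine LinearMap.eqOn_span ?_ (boundary_simplex_mem_span_nerve hl hlen)
        rintro _ ⟨τ, hτ, rfl⟩
        exact (hd τ).trans (if_pos hτ)
      exact hdb.trans (hb ⟨l, hl, hlen⟩).symm
    · rw [obstruction_simplex_eq_zero_of_length_ne hlen, mul_zero]
      refine LinearMap.eqOn_span (f := d) (g := 0) ?_ (boundary_simplex_mem_span l)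
      rintro _ ⟨τ, ⟨-, -, hτ⟩, rfl⟩
      exact hdlen τ (by omega)

theorem smul_topObstruction_comp_mem (ht : Monotone t) (hVU : ∀ i, V i ⊆ U (t i)) {m : ℤ}
    (hm : m • topObstruction U χ n ∈ relCoboundaries U A n) :
    m • topObstruction V (χ ∘ t) n ∈ relCoboundaries V A n := by
  obtain ⟨d, hdA, -, hd⟩ := exists_boundary_eq_smul_obstruction hm
  refine ⟨d ∘ₗ map t, fun l hl _ => ?_, fun l => ?_⟩
  · rw [LinearMap.comp_apply, map_simplex, hdA _ (map_mem_nerve ht hVU hl)]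
  · rw [LinearMap.comp_apply, ← boundary_map, map_simplex, hd _ (map_mem_nerve ht hVU l.2.1),
      obstruction_simplex_map]
    rfl

theorem isPairCocycle_torsionProduct {d : ListChain ι →ₗ[ℤ] ℤ} {m : ℤ} (q : ℕ)
    (hc : ∀ l ∈ nerve U A, obstruction n χ (simplex l) = 0)
    (hdA : ∀ l ∈ nerve U A, d (simplex l) = 0)
    (hd : ∀ l ∈ nerve U univ, d (boundary (simplex l)) = m * obstruction n χ (simplex l)) :
    IsPairCocycle U A q (torsionProduct n (obstruction n χ) d) where
  boundary_eq_zero l hl l' hl' _ := by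
    rw [PairChain.boundary_tmul, sign_simplex, ← smul_tmul', map_add, map_smul,
      torsionProduct_tmul, torsionProduct_tmul, obstruction_boundary, obstruction_boundary,
      hd l hl, hd l' hl', smul_eq_mul]
    by_cases hlen : l.length = n + 1
    · rw [hlen]
      ring
    · rw [obstruction_simplex_eq_zero_of_length_ne hlen]
      ring
  eq_zero l _ l' _ _ hA := by
    rw [torsionProduct_tmul]
    rcases hA with h | h
    · rw [hc l h, hdA l h, zero_mul, zero_mul, mul_zero, add_zero]
    · rw [hc l' h, hdA l' h, mul_zero, mul_zero, mul_zero, add_zero]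

theorem isPairCocycle_crossProduct_obstruction (q : ℕ)
    (hc : ∀ l ∈ nerve U A, obstruction n χ (simplex l) = 0) :
    IsPairCocycle U A q (crossProduct (obstruction n χ) (obstruction n χ)) where
  boundary_eq_zero l _ l' _ _ := by
    rw [PairChain.boundary_tmul, map_add, crossProduct_tmul, crossProduct_tmul,
      obstruction_boundary, obstruction_boundary, zero_mul, mul_zero, add_zero]
  eq_zero l _ l' _ _ hA := by
    rw [crossProduct_tmul]
    rcases hA with h | h
    · rw [hc l h, zero_mul]
    · rw [hc l' h, mul_zero]

theorem IsPairPrimitive.boundary_tmul_boundary_eq {d : ListChain ι →ₗ[ℤ] ℤ} {m : ℤ} {q : ℕ}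
    {e : PairChain κ →ₗ[ℤ] ℤ} (hq : q + 1 = 2 * n) (ht : Monotone t) (hVU : ∀ i, V i ⊆ U (t i))
    (hdlen : ∀ l, l.length ≠ n → d (simplex l) = 0)
    (hd : ∀ l ∈ nerve U univ, d (boundary (simplex l)) = m * obstruction n χ (simplex l))
    (he : IsPairPrimitive V A q (torsionProduct n (obstruction n χ) d ∘ₗ PairChain.map t) e)
    (l l' : TopSimplex V n) :
    e (boundary (simplex l.1) ⊗ₜ boundary (simplex l'.1)) =
      m * topObstruction V (χ ∘ t) n l * topObstruction V (χ ∘ t) n l' := by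
  have hne : (l.1.map t).length ≠ n := by
    rw [List.length_map, l.2.2]
    omega
  rw [← he.apply_simplex_tmul_boundary l.2.1 l'.2.1 (by rw [l.2.2, l'.2.2]; omega),
    LinearMap.comp_apply, PairChain.map_tmul, torsionProduct_tmul, ← boundary_map, map_simplex,
    map_simplex, obstruction_boundary, hdlen _ hne, hd _ (map_mem_nerve ht hVU l'.2.1),
    obstruction_simplex_map, obstruction_simplex_map, topObstruction, topObstruction]
  ring

end Cochains

variable [CompactSpace X] {n M k : ℕ} {O : ℕ → Set X} {A : Set X} {U : Fin k → Set X}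
  {χ : Fin k → ℕ}

theorem IsLabelledCover.exists_refinement_torsion (hU : IsLabelledCover n O U χ)
    (hX : DimLE n X) (hXX : DimLE M (X × X)) (hM : M < 2 * n)
    (hA : ∀ x ∈ A, ∃ i ≤ n, x ∉ O i) :
    ∃ (k' : ℕ) (V : Fin k' → Set X) (χ' : Fin k' → ℕ), IsLabelledCover n O V χ' ∧
      ∃ m : ℕ, 1 ≤ m ∧ (m : ℤ) • topObstruction V χ' n ∈ relCoboundaries V A n := by
  obtain ⟨k', V, t, hV, ht, hVU, hprim⟩ :=
    hX.exists_refinement_isPairPrimitive hXX hU.toIsIndexedCover A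
  obtain ⟨e, he⟩ := hprim (2 * n) hM _
    (isPairCocycle_crossProduct_obstruction _ fun _ hl => hU.obstruction_eq_zero hA hl)
  refine ⟨k', V, χ ∘ t, hU.comp hV ht hVU,
    exists_pos_smul_mem_of_forall_functional_smul_mem fun lam hlam =>
      he.functional_smul_mem_relCoboundaries (fun l l' => ?_) hlam⟩
  rw [LinearMap.comp_apply, PairChain.map_tmul, crossProduct_tmul, map_simplex, map_simplex,
    obstruction_simplex_map, obstruction_simplex_map, topObstruction, topObstruction]

theorem IsLabelledCover.exists_refinement_sq_dvd (hU : IsLabelledCover n O U χ)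
    (hX : DimLE n X) (hXX : DimLE M (X × X)) (hM : M + 1 < 2 * n)
    (hA : ∀ x ∈ A, ∃ i ≤ n, x ∉ O i) {m : ℕ} (hm : 1 ≤ m)
    (hmU : (m : ℤ) • topObstruction U χ n ∈ relCoboundaries U A n) :
    ∃ (k' : ℕ) (V : Fin k' → Set X) (χ' : Fin k' → ℕ), IsLabelledCover n O V χ' ∧
      ∃ a : ℕ, 1 ≤ a ∧ (a : ℤ) • topObstruction V χ' n ∈ relCoboundaries V A n ∧ a ^ 2 ∣ m := by
  obtain ⟨k', V, t, hV, ht, hVU, hprim⟩ :=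
    hX.exists_refinement_isPairPrimitive hXX hU.toIsIndexedCover A
  obtain ⟨d, hdA, hdlen, hd⟩ := exists_boundary_eq_smul_obstruction hmU
  obtain ⟨e, he⟩ := hprim (2 * n - 1) (by omega) _
    (isPairCocycle_torsionProduct _ (fun _ hl => hU.obstruction_eq_zero hA hl) hdA hd)
  exact ⟨k', V, χ ∘ t, hU.comp hV ht hVU,
    exists_smul_mem_sq_dvd hm (smul_topObstruction_comp_mem ht hVU hmU)
      (he.functional_smul_mem_relCoboundaries_of_torsion _
        (he.boundary_tmul_boundary_eq (by omega) ht hVU hdlen hd))⟩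

/-- The order of the obstruction class is `1`, as otherwise passing to a refinement makes it drop
from `m` to at most the square root of `m`. -/
theorem DimLE.exists_isLabelledCover_obstruction_eq (hX : DimLE n X) (hXX : DimLE M (X × X))
    (hM : M + 1 < 2 * n) (hO : ∀ i, IsOpen (O i)) (hcover : ∀ x, ∃ i ≤ n, x ∈ O i)
    (hA : ∀ x ∈ A, ∃ i ≤ n, x ∉ O i) :
    ∃ (k : ℕ) (U : Fin k → Set X) (χ : Fin k → ℕ), IsLabelledCover n O U χ ∧
      ∃ b : ListChain (Fin k) →ₗ[ℤ] ℤ, (∀ l ∈ nerve U A, l.length = n → b (simplex l) = 0) ∧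
        ∀ l ∈ nerve U univ, l.length = n + 1 →
          obstruction n χ (simplex l) = b (boundary (simplex l)) := by
  classical
  have htorsion : ∃ m : ℕ, ∃ (k : ℕ) (U : Fin k → Set X) (χ : Fin k → ℕ),
      IsLabelledCover n O U χ ∧ 1 ≤ m ∧
        (m : ℤ) • topObstruction U χ n ∈ relCoboundaries U A n := by
    obtain ⟨k, U, χ, hU⟩ := hX.exists_isLabelledCover hO hcover
    obtain ⟨k', V, χ', hV, m, hm⟩ := hU.exists_refinement_torsion hX hXX (by omega) hA
    exact ⟨m, k', V, χ', hV, hm⟩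
  obtain ⟨k, U, χ, hU, hpos, hmem⟩ := Nat.find_spec htorsion
  obtain ⟨k', V, χ', hV, a, ha, haV, hdvd⟩ := hU.exists_refinement_sq_dvd hX hXX hM hA hpos hmem
  have hle : Nat.find htorsion ≤ a := Nat.find_min' htorsion ⟨k', V, χ', hV, ha, haV⟩
  have hone : Nat.find htorsion = 1 := by
    have := Nat.le_of_dvd hpos hdvd
    nlinarith
  rw [hone, Nat.cast_one, one_smul] at hmem
  obtain ⟨b, hbA, hb⟩ := hmem
  exact ⟨k, U, χ, hU, b, hbA, fun l hl hlen => hb ⟨l, hl, hlen⟩⟩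

end ObstructionVanishes

section FaceTuples

/-- The increasing map `ℕ → ℕ` that omits the value `p`. -/
def skip (p i : ℕ) : ℕ := if i < p then i else i + 1

/-- The sequence with entries `a`, `b` and `c` in the places `0`, `1` and `q`. -/
def threeTerm (a b : ℤ) (q : ℕ) (c : ℤ) : ℕ → ℤ := fun i =>
  if i = 0 then a else if i = 1 then b else if i = q then c else 0

/-- The sequence with the entry `c` in the places `j` and `j + 1`. -/
def adjacentPair (j : ℕ) (c : ℤ) : ℕ → ℤ := fun i => if i = j ∨ i = j + 1 then c else 0

/-- The alternating sum of the entries `u 0, …, u n`. -/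
def alternatingSum (n : ℕ) (u : ℕ → ℤ) : ℤ := ∑ i ∈ Finset.range (n + 1), (-1) ^ i * u i

/-- The formal properties of the set of tuples `x 0, …, x n` of degrees for which the map given on
the faces of an `n`-simplex by these degrees extends to the simplex. In `horn`, the number `κ p r`
is the degree on the face of an `(n + 1)`-simplex opposite to the vertices `p ≠ r`, and an
extension to all facets but one yields an extension to the remaining one. -/
structure IsFillable (n : ℕ) (P : (ℕ → ℤ) → Prop) : Prop where
  congr {x y : ℕ → ℤ} (hxy : ∀ i ≤ n, x i = y i) (hx : P x) : P y
  apply_adjacentPair (i : ℕ) (c : ℤ) (hi : i < n) : P (adjacentPair i c)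
  apply_threeTerm (c : ℤ) : P (threeTerm c (c + 1) 2 1)
  horn {κ : ℕ → ℕ → ℤ} (hκ : ∀ p r, κ p r = κ r p) {p₀ : ℕ} (hp₀ : p₀ ≤ n + 1)
    (h : ∀ p ≤ n + 1, p ≠ p₀ → P fun i => κ p (skip p i)) : P fun i => κ p₀ (skip p₀ i)

theorem alternatingSum_add (n : ℕ) (u v : ℕ → ℤ) :
    alternatingSum n (u + v) = alternatingSum n u + alternatingSum n v := by
  simp only [alternatingSum, Pi.add_apply, mul_add, Finset.sum_add_distrib]

variable {n j : ℕ} {P : (ℕ → ℤ) → Prop}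

theorem alternatingSum_adjacentPair (hj : j < n) (c : ℤ) :
    alternatingSum n (adjacentPair j c) = 0 := by
  have hsplit (i : ℕ) : (-1) ^ i * adjacentPair j c i =
      (if i = j then (-1) ^ j * c else 0) + if i = j + 1 then (-1) ^ (j + 1) * c else 0 := by
    grind [adjacentPair]
  simp only [alternatingSum, hsplit, Finset.sum_add_distrib, Finset.sum_ite_eq', Finset.mem_range]
  rw [if_pos (by omega), if_pos (by omega), pow_succ]
  ring

theorem alternatingSum_threeTerm (hj : 1 ≤ j) (hjn : j < n) (a b c : ℤ) :
    alternatingSum n (threeTerm a b (j + 1) c) = a - b + (-1) ^ (j + 1) * c := by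
  have hsplit (i : ℕ) : (-1) ^ i * threeTerm a b (j + 1) c i =
      (if i = 0 then a else 0) + (if i = 1 then -b else 0) +
        if i = j + 1 then (-1) ^ (j + 1) * c else 0 := by
    grind [threeTerm]
  simp only [alternatingSum, hsplit, Finset.sum_add_distrib, Finset.sum_ite_eq', Finset.mem_range]
  rw [if_pos (by omega), if_pos (by omega), if_pos (by omega), sub_eq_add_neg]

namespace IsFillable

theorem congr_iff (h : IsFillable n P) {x y : ℕ → ℤ} (hxy : ∀ i ≤ n, x i = y i) : P x ↔ P y :=
  ⟨h.congr hxy, h.congr fun i hi => (hxy i hi).symm⟩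

/-- Fill the horn whose faces opposite to `0` and `1` carry the two tuples. -/
theorem iff_add_adjacentPair_of_threeTerm (h : IsFillable n P) (hj : 1 ≤ j) (hjn : j < n) {t s : ℤ}
    (hthree : ∀ y, P (threeTerm y (y + t) (j + 1) s)) (x : ℕ → ℤ) :
    P x ↔ P (x + adjacentPair j t) := by
  let κ' (lo hi : ℕ) : ℤ := if lo = 0 then x (hi - 1) else
    if lo = 1 then x (hi - 1) + (if hi = j + 1 ∨ hi = j + 2 then t else 0) else
    if lo = j + 1 ∧ hi = j + 2 then s else 0
  let κ (p r : ℕ) : ℤ := κ' (min p r) (max p r)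
  have hκ (p r : ℕ) : κ p r = κ r p := by simp only [κ, min_comm, max_comm]
  have hzero : P (fun i => κ 0 (skip 0 i)) ↔ P x :=
    h.congr_iff fun i _ => by simp [κ, κ', skip]
  have hone : P (fun i => κ 1 (skip 1 i)) ↔ P (x + adjacentPair j t) :=
    h.congr_iff fun i _ => by simp only [κ, κ', skip, adjacentPair, Pi.add_apply]; grind
  have hother (p : ℕ) (hp : 2 ≤ p) : P fun i => κ p (skip p i) := by
    by_cases hpj : p = j + 1 ∨ p = j + 2
    · refine h.congr (fun i _ => ?_) (hthree (x (p - 1)))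
      simp only [κ, κ', skip, threeTerm]
      grind
    · refine h.congr (fun i _ => ?_) (h.apply_adjacentPair 0 (x (p - 1)) (by omega))
      simp only [κ, κ', skip, adjacentPair]
      grind
  rw [← hzero, ← hone]
  refine ⟨fun hx => h.horn hκ (by omega) fun p _ hp1 => ?_,
    fun hx => h.horn hκ (by omega) fun p _ hp0 => ?_⟩
  · obtain rfl | hp := Nat.eq_zero_or_pos p
    · exact hx
    · exact hother p (by omega)
  · obtain rfl | hp := eq_or_ne p 1
    · exact hx
    · exact hother p (by omega)

/-- Subtracting adjacent pairs clears the entries of `u` one by one, from the last to the second. -/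
theorem iff_add_of_alternatingSum_eq_zero (h : IsFillable n P) {m : ℕ} (hm : 1 ≤ m) (hmn : m ≤ n)
    (hmove : ∀ j, 1 ≤ j → j < m → ∀ t x, P x ↔ P (x + adjacentPair j t)) {u : ℕ → ℤ}
    (hu0 : u 0 = 0) (hu : ∀ i, m < i → i ≤ n → u i = 0) (hsum : alternatingSum n u = 0)
    (x : ℕ → ℤ) : P x ↔ P (x + u) := by
  induction m, hm using Nat.le_induction generalizing u with
  | base =>
    have hu1 : u 1 = 0 := by
      rw [alternatingSum, Finset.sum_eq_single 1 (fun i hi _ => ?_)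
        fun h => absurd (Finset.mem_range.2 (by omega)) h] at hsum
      · simpa using hsum
      · obtain rfl | hi0 := Nat.eq_zero_or_pos i
        · rw [hu0, mul_zero]
        · rw [hu i (by omega) (Finset.mem_range_succ_iff.1 hi), mul_zero]
    refine h.congr_iff fun i hi => ?_
    obtain rfl | rfl | hi1 : i = 0 ∨ i = 1 ∨ 1 < i := by omega
    · simp [hu0]
    · simp [hu1]
    · simp [hu i hi1 hi]
  | succ m hm ih =>
    rw [ih (by omega) (fun j hj hjm => hmove j hj (by omega))
        (u := u + adjacentPair m (-u (m + 1))) ?_ ?_ ?_,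
      hmove m hm (by omega) (u (m + 1))]
    · have hu_eq : x + (u + adjacentPair m (-u (m + 1))) + adjacentPair m (u (m + 1)) = x + u := by
        funext i
        simp only [Pi.add_apply, adjacentPair]
        split_ifs <;> ring
      rw [hu_eq]
    · simp only [Pi.add_apply, adjacentPair, hu0]
      grind
    · intro i hi hin
      simp only [Pi.add_apply, adjacentPair]
      obtain rfl | hi' := eq_or_ne i (m + 1)
      · simp
      · rw [hu i (by omega) hin]
        grind
    · rw [alternatingSum_add, alternatingSum_adjacentPair (by omega), hsum, add_zero]

theorem of_alternatingSum_eq_zero (h : IsFillable n P) {m : ℕ} (hm : 1 ≤ m) (hmn : m ≤ n)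
    (hmove : ∀ j, 1 ≤ j → j < m → ∀ t x, P x ↔ P (x + adjacentPair j t)) {x : ℕ → ℤ}
    (hx : ∀ i, m < i → i ≤ n → x i = 0) (hsum : alternatingSum n x = 0) : P x := by
  refine h.congr (fun i _ => ?_) ((h.iff_add_of_alternatingSum_eq_zero hm hmn hmove
    (u := x + adjacentPair 0 (-x 0)) ?_ ?_ ?_ (adjacentPair 0 (x 0))).1
      (h.apply_adjacentPair 0 _ (by omega)))
  · simp only [Pi.add_apply, adjacentPair]
    split_ifs <;> ring
  · simp [adjacentPair]
  · intro i hi hin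
    simp only [Pi.add_apply, adjacentPair, hx i hi hin]
    grind
  · rw [alternatingSum_add, alternatingSum_adjacentPair (by omega), hsum, add_zero]

theorem iff_add_adjacentPair_one (h : IsFillable n P) (hn : 2 ≤ n) (t : ℤ) (x : ℕ → ℤ) :
    P x ↔ P (x + adjacentPair 1 t) := by
  have hadd (s t : ℤ) : adjacentPair 1 (s + t) = adjacentPair 1 s + adjacentPair 1 t := by
    funext i
    simp only [Pi.add_apply, adjacentPair]
    split_ifs <;> simp
  have hone (x : ℕ → ℤ) : P x ↔ P (x + adjacentPair 1 1) :=
    h.iff_add_adjacentPair_of_threeTerm le_rfl (by omega) (s := 1) h.apply_threeTerm x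
  induction t using Int.induction_on generalizing x with
  | zero => exact h.congr_iff fun i _ => by simp [adjacentPair]
  | succ a ih => exact (ih x).trans ((hone _).trans (by rw [hadd, add_assoc]))
  | pred a ih =>
    refine (ih x).trans (.trans ?_ (hone _).symm)
    rw [add_assoc, ← hadd, sub_add_cancel]

theorem apply_threeTerm_zero_of_moves (h : IsFillable n P) (hj : 1 ≤ j) (hjn : j < n)
    (hmove : ∀ i, 1 ≤ i → i < j → ∀ t x, P x ↔ P (x + adjacentPair i t)) (y : ℤ) :
    P (threeTerm 0 y (j + 1) ((-1) ^ (j + 1) * y)) := by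
  refine h.congr (fun i _ => ?_) ((h.iff_add_of_alternatingSum_eq_zero hj hjn.le hmove
    (u := threeTerm 0 y (j + 1) ((-1) ^ (j + 1) * y) + adjacentPair j (-((-1) ^ (j + 1) * y)))
    ?_ ?_ ?_ (adjacentPair j ((-1) ^ (j + 1) * y))).1 (h.apply_adjacentPair j _ hjn))
  · simp only [Pi.add_apply, adjacentPair]
    split_ifs <;> ring
  · simp only [Pi.add_apply, threeTerm, adjacentPair]
    grind
  · intro i hi _
    simp only [Pi.add_apply, threeTerm, adjacentPair]
    grind
  · rw [alternatingSum_add, alternatingSum_adjacentPair hjn, alternatingSum_threeTerm hj hjn,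
      ← mul_assoc, ← mul_pow]
    simp

/-- Fill the horn around the facet of an `(n + 1)`-simplex opposite to the vertex `2`. -/
theorem apply_threeTerm_of_moves (h : IsFillable n P) (hj : 2 ≤ j) (hjn : j < n)
    (hmove : ∀ i, 1 ≤ i → i < j → ∀ t x, P x ↔ P (x + adjacentPair i t)) (y z : ℤ) :
    P (threeTerm y z (j + 1) ((-1) ^ (j + 1) * (z - y))) := by
  have hzero := h.apply_threeTerm_zero_of_moves (by omega) hjn hmove
  set s : ℤ := (-1) ^ (j + 1)
  have hlow : P (threeTerm (s * y) (s * z) 2 (s * (z - y))) := by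
    refine h.of_alternatingSum_eq_zero (m := 2) (by omega) (by omega)
      (fun i hi hi2 => hmove i hi (by omega)) (fun i hi _ => ?_) ?_
    · simp only [threeTerm]
      grind
    · rw [alternatingSum_threeTerm le_rfl (by omega)]
      ring
  let κ' (lo hi : ℕ) : ℤ :=
    if lo = 0 ∧ hi = 2 then y else if lo = 1 ∧ hi = 2 then z else
    if hi = j + 2 then (if lo = 0 then s * y else if lo = 1 then s * z else
      if lo = 2 then s * (z - y) else 0) else 0
  let κ (p r : ℕ) : ℤ := κ' (min p r) (max p r)
  have hκ (p r : ℕ) : κ p r = κ r p := by simp only [κ, min_comm, max_comm]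
  refine h.congr (fun i _ => ?_) (h.horn hκ (p₀ := 2) (by omega) fun p _ hp2 => ?_)
  · simp only [κ, κ', skip, threeTerm]
    grind
  obtain rfl | rfl | rfl | hp : p = 0 ∨ p = 1 ∨ p = j + 2 ∨ (2 < p ∧ p ≠ j + 2) := by omega
  · refine h.congr (fun i _ => ?_) (hzero y)
    simp only [κ, κ', skip, threeTerm]
    grind
  · refine h.congr (fun i _ => ?_) (hzero z)
    simp only [κ, κ', skip, threeTerm]
    grind
  · refine h.congr (fun i _ => ?_) hlow
    simp only [κ, κ', skip, threeTerm]
    grind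
  · refine h.congr (fun i _ => ?_) (h.apply_adjacentPair 0 0 (by omega))
    simp only [κ, κ', skip, adjacentPair]
    grind

theorem iff_add_adjacentPair (h : IsFillable n P) (hj : 1 ≤ j) (hjn : j < n) (t : ℤ) (x : ℕ → ℤ) :
    P x ↔ P (x + adjacentPair j t) := by
  induction j using Nat.strong_induction_on generalizing t x with
  | _ j ih =>
    obtain rfl | hj2 := hj.eq_or_lt
    · exact h.iff_add_adjacentPair_one (by omega) t x
    · refine h.iff_add_adjacentPair_of_threeTerm hj hjn (s := (-1) ^ (j + 1) * t) (fun y => ?_) x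
      have hthree := h.apply_threeTerm_of_moves hj2 hjn
        (fun i hi hij => ih i hij hi (by omega)) y (y + t)
      rwa [add_sub_cancel_left] at hthree

theorem apply_of_alternatingSum_eq_zero (h : IsFillable n P) (hn : 1 ≤ n) {x : ℕ → ℤ}
    (hx : alternatingSum n x = 0) : P x :=
  h.of_alternatingSum_eq_zero hn le_rfl (fun _ hj hjn => h.iff_add_adjacentPair hj hjn)
    (fun _ _ _ => by omega) hx

end IsFillable

end FaceTuples

section Horn

variable {m : ℕ}

theorem removeNth_mem_stdSimplex {p : Fin (m + 1)} {y : Fin (m + 1) → ℝ}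
    (hy : y ∈ stdSimplex ℝ (Fin (m + 1))) (hp : y p = 0) :
    p.removeNth y ∈ stdSimplex ℝ (Fin m) := by
  refine ⟨fun i => hy.1 _, ?_⟩
  rw [← hy.2, Fin.sum_univ_succAbove _ p, hp, zero_add]
  rfl

theorem insertNth_zero_mem_stdSimplex (p : Fin (m + 1)) {w : Fin m → ℝ}
    (hw : w ∈ stdSimplex ℝ (Fin m)) :
    p.insertNth (α := fun _ => ℝ) 0 w ∈ stdSimplex ℝ (Fin (m + 1)) := by
  refine ⟨(Fin.forall_iff_succAbove p).2 ⟨by simp, fun j => by simpa using hw.1 j⟩, ?_⟩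
  simpa [Fin.sum_univ_succAbove _ p] using hw.2

theorem removeNth_removeNth_comm {α : Type*} (y : Fin (m + 2) → α) {p q : Fin (m + 2)}
    {i j : Fin (m + 1)} (hq : p.succAbove i = q) (hp : q.succAbove j = p) :
    i.removeNth (p.removeNth y) = j.removeNth (q.removeNth y) := by
  have hj : j = i.predAbove p := by
    apply q.succAbove_right_injective
    rw [hp, ← hq, Fin.succAbove_succAbove_predAbove]
  subst hq hj
  exact Fin.removeNth_removeNth_eq_swap y i p

/-- The smallest coordinate of a vector. -/
noncomputable def minCoord (x : Fin (m + 1) → ℝ) : ℝ := Finset.univ.inf' Finset.univ_nonempty x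

theorem minCoord_le (x : Fin (m + 1) → ℝ) (i : Fin (m + 1)) : minCoord x ≤ x i :=
  Finset.inf'_le _ (Finset.mem_univ i)

theorem exists_eq_minCoord (x : Fin (m + 1) → ℝ) : ∃ i, x i = minCoord x := by
  obtain ⟨i, -, hi⟩ := Finset.exists_mem_eq_inf' Finset.univ_nonempty x
  exact ⟨i, hi.symm⟩

theorem minCoord_nonneg {x : Fin (m + 1) → ℝ} (hx : ∀ i, 0 ≤ x i) : 0 ≤ minCoord x :=
  Finset.le_inf' _ _ fun i _ => hx i

theorem minCoord_eq_zero {x : Fin (m + 1) → ℝ} (hx : ∀ i, 0 ≤ x i) {i : Fin (m + 1)}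
    (hi : x i = 0) : minCoord x = 0 :=
  le_antisymm (hi ▸ minCoord_le x i) (minCoord_nonneg hx)

theorem continuous_minCoord : Continuous (minCoord : (Fin (m + 1) → ℝ) → ℝ) :=
  Continuous.finset_inf'_apply _ fun i _ => continuous_apply i

/-- The retraction of a simplex onto the horn formed by the facets other than the one opposite
to `p`. It subtracts the smallest of the coordinates other than `x p` from each of them and adds
what is taken away to `x p`. -/
noncomputable def hornRetraction (p : Fin (m + 2)) (x : Fin (m + 2) → ℝ) : Fin (m + 2) → ℝ :=
  p.insertNth (α := fun _ => ℝ) (x p + (m + 1) * minCoord (p.removeNth x))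
    fun j => p.removeNth x j - minCoord (p.removeNth x)

theorem continuous_hornRetraction (p : Fin (m + 2)) : Continuous (hornRetraction p) := by
  have hremove : Continuous fun x : Fin (m + 2) → ℝ => p.removeNth x :=
    continuous_pi fun i => continuous_apply _
  have hmin := continuous_minCoord.comp hremove
  exact ((continuous_apply p).add (continuous_const.mul hmin)).finInsertNth p
    (continuous_pi fun j => ((continuous_apply j).comp hremove).sub hmin)

theorem hornRetraction_mem (p : Fin (m + 2)) {x : Fin (m + 2) → ℝ}
    (hx : x ∈ stdSimplex ℝ (Fin (m + 2))) : hornRetraction p x ∈ stdSimplex ℝ (Fin (m + 2)) := by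
  refine ⟨(Fin.forall_iff_succAbove p).2 ⟨?_, fun j => ?_⟩, ?_⟩
  · have hmin := minCoord_nonneg (x := p.removeNth x) fun j => hx.1 _
    have hp := hx.1 p
    simp only [hornRetraction, Fin.insertNth_apply_same]
    positivity
  · simpa [hornRetraction] using minCoord_le (p.removeNth x) j
  · have hsum := hx.2
    rw [Fin.sum_univ_succAbove _ p] at hsum ⊢
    simp only [hornRetraction, Fin.insertNth_apply_same, Fin.insertNth_apply_succAbove,
      Finset.sum_sub_distrib, Finset.sum_const, Finset.card_univ, Fintype.card_fin, nsmul_eq_mul,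
      Fin.removeNth_apply]
    push_cast
    linarith

theorem exists_hornRetraction_eq_zero (p : Fin (m + 2)) (x : Fin (m + 2) → ℝ) :
    ∃ i ≠ p, hornRetraction p x i = 0 := by
  obtain ⟨i, hi⟩ := exists_eq_minCoord (p.removeNth x)
  exact ⟨p.succAbove i, Fin.succAbove_ne _ _, by simp [hornRetraction, ← hi]⟩

theorem hornRetraction_eq_self {p i : Fin (m + 2)} {x : Fin (m + 2) → ℝ}
    (hx : x ∈ stdSimplex ℝ (Fin (m + 2))) (hip : i ≠ p) (hi : x i = 0) :
    hornRetraction p x = x := by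
  obtain ⟨j, rfl⟩ := Fin.exists_succAbove_eq hip
  have hmin : minCoord (p.removeNth x) = 0 := minCoord_eq_zero (fun _ => hx.1 _) hi
  simp [hornRetraction, hmin]

variable {T : Type*}

/-- The maps `z i` on the facets of a simplex extend to a continuous map on the simplex. Facets are
parametrized by the standard simplex of one dimension less by inserting the coordinate `0`. -/
def HasFilling [TopologicalSpace T] (z : Fin (m + 1) → (Fin m → ℝ) → T) : Prop :=
  ∃ G : (Fin (m + 1) → ℝ) → T, ContinuousOn G (stdSimplex ℝ (Fin (m + 1))) ∧
    ∀ y ∈ stdSimplex ℝ (Fin (m + 1)), ∀ i, y i = 0 → G y = z i (i.removeNth y)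

/-- Continuity on the simplex together with constancy with value `pt` on its boundary; such maps
represent classes in a homotopy group. -/
structure IsBased [TopologicalSpace T] (pt : T) (a : (Fin m → ℝ) → T) : Prop where
  continuousOn : ContinuousOn a (stdSimplex ℝ (Fin m))
  eq_of_apply_eq_zero : ∀ y ∈ stdSimplex ℝ (Fin m), ∀ i, y i = 0 → a y = pt

theorem exists_eq_of_compatible {p₀ : Fin (m + 2)} {z : Fin (m + 2) → (Fin (m + 1) → ℝ) → T}
    (hz : ∀ y ∈ stdSimplex ℝ (Fin (m + 2)), ∀ p q, p ≠ p₀ → q ≠ p₀ → p ≠ q → y p = 0 → y q = 0 →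
      z p (p.removeNth y) = z q (q.removeNth y)) :
    ∃ H : (Fin (m + 2) → ℝ) → T, ∀ y ∈ stdSimplex ℝ (Fin (m + 2)), ∀ p ≠ p₀, y p = 0 →
      H y = z p (p.removeNth y) := by
  classical
  refine ⟨fun y => if h : ∃ p, p ≠ p₀ ∧ y p = 0 then z h.choose (h.choose.removeNth y)
    else z p₀ (p₀.removeNth y), fun y hy p hp hyp => ?_⟩
  have hex : ∃ p, p ≠ p₀ ∧ y p = 0 := ⟨p, hp, hyp⟩
  refine (dif_pos hex).trans ?_
  by_cases heq : hex.choose = p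
  · rw [heq]
  · exact hz y hy _ _ hex.choose_spec.1 hp heq hex.choose_spec.2 hyp

variable [TopologicalSpace T]

theorem exists_extension_of_horn {p₀ : Fin (m + 2)} {z : Fin (m + 2) → (Fin (m + 1) → ℝ) → T}
    (hcont : ∀ p ≠ p₀, ContinuousOn (z p) (stdSimplex ℝ (Fin (m + 1))))
    (hz : ∀ y ∈ stdSimplex ℝ (Fin (m + 2)), ∀ p q, p ≠ p₀ → q ≠ p₀ → p ≠ q → y p = 0 → y q = 0 →
      z p (p.removeNth y) = z q (q.removeNth y)) :
    ∃ G : (Fin (m + 2) → ℝ) → T, ContinuousOn G (stdSimplex ℝ (Fin (m + 2))) ∧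
      ∀ y ∈ stdSimplex ℝ (Fin (m + 2)), ∀ i ≠ p₀, y i = 0 → G y = z i (i.removeNth y) := by
  obtain ⟨H, hH⟩ := exists_eq_of_compatible hz
  refine ⟨fun y => H (hornRetraction p₀ y), ?_, fun y hy i hi hyi => ?_⟩
  · let F (i : {i // i ≠ p₀}) : Set (Fin (m + 2) → ℝ) :=
      {y | y ∈ stdSimplex ℝ (Fin (m + 2)) ∧ hornRetraction p₀ y i = 0}
    have hF : stdSimplex ℝ (Fin (m + 2)) = ⋃ i, F i := by
      ext y
      refine ⟨fun hy => ?_, fun hy => (mem_iUnion.1 hy).choose_spec.1⟩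
      obtain ⟨i, hi, hyi⟩ := exists_hornRetraction_eq_zero p₀ y
      exact mem_iUnion.2 ⟨⟨i, hi⟩, hy, hyi⟩
    rw [hF]
    refine LocallyFinite.continuousOn_iUnion (locallyFinite_of_finite _) (fun i => ?_) fun i => ?_
    · exact (isClosed_stdSimplex ℝ _).inter (isClosed_eq
        ((continuous_apply _).comp (continuous_hornRetraction p₀)) continuous_const)
    · have hremove : Continuous fun x : Fin (m + 2) → ℝ => i.1.removeNth x :=
        continuous_pi fun j => continuous_apply _
      refine ContinuousOn.congr (f := fun y => z i (i.1.removeNth (hornRetraction p₀ y)))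
        ((hcont i i.2).comp (hremove.comp (continuous_hornRetraction p₀)).continuousOn
          fun y hy => removeNth_mem_stdSimplex (hornRetraction_mem p₀ hy.1) hy.2) fun y hy => ?_
      exact hH _ (hornRetraction_mem p₀ hy.1) i i.2 hy.2
  · simpa only [hornRetraction_eq_self hy hi hyi] using hH y hy i hi hyi

theorem continuous_insertNth_zero (p : Fin (m + 1)) :
    Continuous fun w : Fin m → ℝ => p.insertNth (α := fun _ => ℝ) 0 w :=
  continuous_const.finInsertNth p continuous_id

variable {pt : T}

theorem isBased_const (pt : T) : IsBased pt (fun _ : Fin m → ℝ => pt) :=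
  ⟨continuousOn_const, fun _ _ _ _ => rfl⟩

theorem IsBased.apply_removeNth {a : (Fin (m + 1) → ℝ) → T} (ha : IsBased pt a)
    {y : Fin (m + 2) → ℝ} (hy : y ∈ stdSimplex ℝ (Fin (m + 2))) {p q : Fin (m + 2)} (hpq : p ≠ q)
    (hp : y p = 0) (hq : y q = 0) : a (p.removeNth y) = pt := by
  obtain ⟨i, rfl⟩ := Fin.exists_succAbove_eq hpq.symm
  exact ha.eq_of_apply_eq_zero _ (removeNth_mem_stdSimplex hy hp) i hq

theorem exists_isBased_hasFilling_update (p : Fin (m + 2))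
    {z : Fin (m + 2) → (Fin (m + 1) → ℝ) → T} (hz : ∀ i ≠ p, IsBased pt (z i)) :
    ∃ a, IsBased pt a ∧ HasFilling (Function.update z p a) := by
  obtain ⟨G, hG, hGz⟩ := exists_extension_of_horn (fun i hi => (hz i hi).continuousOn)
    fun y hy i j hi hj hij hyi hyj => by
      rw [(hz i hi).apply_removeNth hy hij hyi hyj, (hz j hj).apply_removeNth hy hij.symm hyj hyi]
  refine ⟨fun w => G (p.insertNth (α := fun _ => ℝ) 0 w), ⟨?_, fun w hw j hj => ?_⟩, G, hG,
    fun y hy i hi => ?_⟩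
  · exact hG.comp (continuous_insertNth_zero p).continuousOn
      fun w hw => insertNth_zero_mem_stdSimplex p hw
  · have hy := insertNth_zero_mem_stdSimplex p hw
    have hpj : p.insertNth (α := fun _ => ℝ) 0 w (p.succAbove j) = 0 := by simpa using hj
    have hne := p.succAbove_ne j
    exact (hGz _ hy _ hne hpj).trans
      ((hz _ hne).apply_removeNth hy hne hpj (Fin.insertNth_apply_same ..))
  · obtain rfl | hip := eq_or_ne i p
    · rw [Function.update_self, ← hi, Fin.insertNth_self_removeNth]
    · rw [Function.update_of_ne hip, hGz y hy i hip hi]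

theorem hasFilling_of_horn {κ : Fin (m + 3) → Fin (m + 3) → (Fin (m + 1) → ℝ) → T}
    (hκ : ∀ p q, κ p q = κ q p) {p₀ : Fin (m + 3)}
    (h : ∀ p ≠ p₀, HasFilling fun i => κ p (p.succAbove i)) :
    HasFilling fun i => κ p₀ (p₀.succAbove i) := by
  have : Nonempty T := ⟨κ p₀ p₀ 0⟩
  choose! G hG hGκ using h
  have hcodim {y} (hy : y ∈ stdSimplex ℝ (Fin (m + 3))) {p q} (hpq : p ≠ q) (hp : p ≠ p₀)
      (hyp : y p = 0) (hyq : y q = 0) {j} (hj : q.succAbove j = p) :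
      G p (p.removeNth y) = κ q p (j.removeNth (q.removeNth y)) := by
    obtain ⟨i, hi⟩ := Fin.exists_succAbove_eq hpq.symm
    subst hi
    refine (hGκ p hp _ (removeNth_mem_stdSimplex hy hyp) i hyq).trans ?_
    rw [removeNth_removeNth_comm y rfl hj, hκ]
  obtain ⟨G', hG', hGG'⟩ := exists_extension_of_horn hG fun y hy p q hp hq hpq hyp hyq => by
    obtain ⟨j, rfl⟩ := Fin.exists_succAbove_eq hpq
    rw [hcodim hy hpq hp hyp hyq rfl, hGκ q hq _ (removeNth_mem_stdSimplex hy hyq) j hyp]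
  refine ⟨fun w => G' (p₀.insertNth (α := fun _ => ℝ) 0 w), ?_, fun w hw i hi => ?_⟩
  · exact hG'.comp (continuous_insertNth_zero p₀).continuousOn
      fun w hw => insertNth_zero_mem_stdSimplex p₀ hw
  · have hy := insertNth_zero_mem_stdSimplex p₀ hw
    have hne := p₀.succAbove_ne i
    have hi' : p₀.insertNth (α := fun _ => ℝ) 0 w (p₀.succAbove i) = 0 := by simpa using hi
    refine (hGG' _ hy _ hne hi').trans ?_
    rw [hcodim hy hne hne hi' (Fin.insertNth_apply_same ..) rfl, Fin.removeNth_insertNth]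

theorem succAbove_val (p : Fin (m + 1)) (k : Fin m) : (p.succAbove k : ℕ) = skip p k := by
  simp only [Fin.succAbove, Fin.lt_def, Fin.val_castSucc, skip]
  split_ifs <;> simp

theorem predAbove_val (i : Fin m) (k : Fin (m + 1)) :
    (i.predAbove k : ℕ) = if (i : ℕ) < k then (k : ℕ) - 1 else k := by
  simp only [Fin.predAbove, Fin.lt_def, Fin.val_castSucc]
  split_ifs <;> simp

theorem predAbove_eq_predAbove_iff {i : Fin m} {k l : Fin (m + 1)} (hk : k ≠ i.castSucc)
    (hk' : k ≠ i.succ) : i.predAbove l = i.predAbove k ↔ l = k := by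
  refine ⟨fun h => ?_, fun h => by rw [h]⟩
  simp only [Fin.ext_iff, predAbove_val, Fin.val_castSucc, Fin.val_succ, ne_eq] at *
  split_ifs at h <;> omega

theorem linearMap_predAbove_eq_removeNth {i : Fin m} {k : Fin (m + 1)}
    (hk : k = i.castSucc ∨ k = i.succ) {y : Fin (m + 1) → ℝ} (hy : y k = 0) :
    FunOnFinite.linearMap ℝ ℝ i.predAbove y = k.removeNth y := by
  have hid (l : Fin m) : i.predAbove (k.succAbove l) = l := by
    obtain rfl | rfl := hk
    · exact Fin.predAbove_succAbove i l
    · ext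
      simp only [predAbove_val, succAbove_val, skip, Fin.val_succ]
      split_ifs <;> omega
  funext j
  simp [FunOnFinite.linearMap_apply_apply, Finset.sum_filter, Fin.sum_univ_succAbove _ k, hy, hid,
    Fin.removeNth_apply]

theorem linearMap_predAbove_eq_zero {i : Fin m} {k : Fin (m + 1)} (hk : k ≠ i.castSucc)
    (hk' : k ≠ i.succ) {y : Fin (m + 1) → ℝ} (hy : y k = 0) :
    FunOnFinite.linearMap ℝ ℝ i.predAbove y (i.predAbove k) = 0 := by
  simp [FunOnFinite.linearMap_apply_apply, predAbove_eq_predAbove_iff hk hk', Finset.sum_filter,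
    hy]

theorem IsBased.hasFilling_pair {a : (Fin m → ℝ) → T} (ha : IsBased pt a) (i : Fin m) :
    HasFilling fun k : Fin (m + 1) => if k = i.castSucc ∨ k = i.succ then a else fun _ => pt := by
  have hmem {y} (hy : y ∈ stdSimplex ℝ (Fin (m + 1))) :
      FunOnFinite.linearMap ℝ ℝ i.predAbove y ∈ stdSimplex ℝ (Fin m) :=
    stdSimplex.image_linearMap _ (mem_image_of_mem _ hy)
  refine ⟨fun y => a (FunOnFinite.linearMap ℝ ℝ i.predAbove y), ?_, fun y hy k hk => ?_⟩
  · exact ha.continuousOn.comp (FunOnFinite.continuous_linearMap ℝ ℝ _).continuousOn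
      fun y hy => hmem hy
  · change a _ = (if k = i.castSucc ∨ k = i.succ then a else fun _ => pt) _
    split_ifs with h
    · rw [linearMap_predAbove_eq_removeNth h hk]
    · push Not at h
      exact ha.eq_of_apply_eq_zero _ (hmem hy) _ (linearMap_predAbove_eq_zero h.1 h.2 hk)

theorem exists_int_chain {B : Type*} {R : B → B → Prop} (hsucc : ∀ b, ∃ c, R b c)
    (hpred : ∀ c, ∃ b, R b c) {b₀ b₁ : B} (h : R b₀ b₁) :
    ∃ g : ℤ → B, g 0 = b₀ ∧ g 1 = b₁ ∧ ∀ k, R (g k) (g (k + 1)) := by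
  choose S hS using hsucc
  choose Q hQ using hpred
  refine ⟨fun
    | .ofNat 0 => b₀
    | .ofNat (j + 1) => S^[j] b₁
    | .negSucc j => Q^[j + 1] b₀, rfl, rfl, fun
    | .ofNat 0 => h
    | .ofNat (j + 1) => ?_
    | .negSucc 0 => hQ b₀
    | .negSucc (j + 1) => ?_⟩
  · change R _ (S^[j + 1] b₁)
    exact Function.iterate_succ_apply' S j b₁ ▸ hS _
  · change R (Q^[j + 1 + 1] b₀) (Q^[j + 1] b₀)
    exact Function.iterate_succ_apply' Q (j + 1) b₀ ▸ hQ _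

/-- The map `c` represents the sum of the classes of `a` and `b`: the three maps, on the facets
opposite to the vertices `2`, `0` and `1`, and constant maps on the other facets extend to the
simplex. -/
def IsSum (pt : T) (a b c : (Fin m → ℝ) → T) : Prop :=
  HasFilling fun i : Fin (m + 1) =>
    if (i : ℕ) = 0 then b else if (i : ℕ) = 1 then c else if (i : ℕ) = 2 then a else fun _ => pt

theorem IsBased.exists_isSum {a b : (Fin (m + 1) → ℝ) → T} (ha : IsBased pt a)
    (hb : IsBased pt b) : ∃ c, IsBased pt c ∧ IsSum pt a b c := by
  obtain ⟨c, hc, hfill⟩ := exists_isBased_hasFilling_update (1 : Fin (m + 2))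
    (z := fun i => if (i : ℕ) = 0 then b else if (i : ℕ) = 2 then a else fun _ => pt)
    fun i _ => by split_ifs <;> [exact hb; exact ha; exact isBased_const pt]
  refine ⟨c, hc, ?_⟩
  unfold IsSum
  convert hfill using 1
  funext i
  simp only [Function.update_apply, Fin.ext_iff, Fin.val_one]
  grind

theorem IsBased.exists_isSum_left {a c : (Fin (m + 1) → ℝ) → T} (ha : IsBased pt a)
    (hc : IsBased pt c) : ∃ b, IsBased pt b ∧ IsSum pt a b c := by
  obtain ⟨b, hb, hfill⟩ := exists_isBased_hasFilling_update (0 : Fin (m + 2))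
    (z := fun i => if (i : ℕ) = 1 then c else if (i : ℕ) = 2 then a else fun _ => pt)
    fun i _ => by split_ifs <;> [exact hc; exact ha; exact isBased_const pt]
  refine ⟨b, hb, ?_⟩
  unfold IsSum
  convert hfill using 1
  funext i
  grind

theorem IsBased.isSum_const {a : (Fin (m + 2) → ℝ) → T} (ha : IsBased pt a) :
    IsSum pt a (fun _ => pt) a := by
  unfold IsSum
  convert ha.hasFilling_pair 1 using 1
  funext i
  simp only [Fin.ext_iff, Fin.val_castSucc, Fin.val_succ, Fin.val_one]
  grind

theorem isFillable_hasFilling {a : (Fin (m + 1) → ℝ) → T} {f : ℤ → (Fin (m + 1) → ℝ) → T}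
    (hf : ∀ k, IsBased pt (f k)) (hf₀ : f 0 = fun _ => pt) (hf₁ : f 1 = a)
    (hsum : ∀ k, IsSum pt a (f k) (f (k + 1))) :
    IsFillable (m + 1) fun x => HasFilling fun i : Fin (m + 2) => f (x i) where
  congr {x y} hxy hx := by
    have heq (i : Fin (m + 2)) : x i = y i := hxy i (by omega)
    simpa only [heq] using hx
  apply_adjacentPair i c hi := by
    convert (hf c).hasFilling_pair ⟨i, hi⟩ using 2 with k
    simp only [adjacentPair, Fin.ext_iff, Fin.val_castSucc, Fin.val_succ]
    grind
  apply_threeTerm c := by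
    have hfill := hsum c
    unfold IsSum at hfill
    convert hfill using 2 with i
    simp only [threeTerm]
    split_ifs <;> simp [hf₀, hf₁]
  horn {κ} hκ p₀ hp₀ h := by
    have hface (p : Fin (m + 3)) (i : Fin (m + 2)) : skip p i = (p.succAbove i : ℕ) :=
      (succAbove_val p i).symm
    simpa only [← hface] using hasFilling_of_horn
      (κ := fun p q : Fin (m + 3) => f (κ p q)) (fun p q => by rw [hκ])
      (p₀ := ⟨p₀, by omega⟩) fun p hp => by
        simpa only [hface] using h p (by omega) fun h => hp (Fin.ext h)

/-- The maps `f k` represent the multiples of the class of `a`, and the conclusion is the homotopy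
addition theorem for them. -/
theorem IsBased.exists_multiples (hm : 1 ≤ m) {a : (Fin (m + 1) → ℝ) → T} (ha : IsBased pt a) :
    ∃ f : ℤ → (Fin (m + 1) → ℝ) → T, (∀ k, IsBased pt (f k)) ∧ f 0 = (fun _ => pt) ∧ f 1 = a ∧
      ∀ k : Fin (m + 2) → ℤ, ∑ i : Fin (m + 2), (-1) ^ (i : ℕ) * k i = 0 →
        HasFilling fun i => f (k i) := by
  obtain ⟨m, rfl⟩ := Nat.exists_eq_add_of_le' hm
  let B := {b : (Fin (m + 2) → ℝ) → T // IsBased pt b}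
  obtain ⟨g, hg₀, hg₁, hg⟩ := exists_int_chain (B := B) (R := fun b c => IsSum pt a b.1 c.1)
    (b₀ := ⟨_, isBased_const pt⟩) (b₁ := ⟨a, ha⟩)
    (fun b => let ⟨c, hc, h⟩ := ha.exists_isSum b.2; ⟨⟨c, hc⟩, h⟩)
    (fun c => let ⟨b, hb, h⟩ := ha.exists_isSum_left c.2; ⟨⟨b, hb⟩, h⟩) ha.isSum_const
  have hf₀ : (g 0).1 = fun _ => pt := by rw [hg₀]
  have hf₁ : (g 1).1 = a := by rw [hg₁]
  refine ⟨fun k => (g k).1, fun k => (g k).2, hf₀, hf₁, fun k hk => ?_⟩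
  have hP := isFillable_hasFilling (f := fun k => (g k).1) (fun k => (g k).2) hf₀ hf₁ hg
  have hfill := hP.apply_of_alternatingSum_eq_zero (by omega)
    (x := fun i => if h : i < m + 3 then k ⟨i, h⟩ else 0) (by
      rw [alternatingSum, Finset.sum_range, ← hk]
      exact Finset.sum_congr rfl fun i _ => by simp)
  simpa using hfill

end Horn

section Skeleton

open ListChain

theorem augBoundaryList_ofFn {V : Type*} {N : ℕ} (e : Fin (N + 1) → V) :
    augBoundaryList (List.ofFn e) =
      ∑ i : Fin (N + 1), (-1 : ℤ) ^ (i : ℕ) • simplex (List.ofFn fun j => e (i.succAbove j)) := by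
  induction N with
  | zero => simp [augBoundaryList]
  | succ N ih =>
    rw [List.ofFn_succ, augBoundaryList, ih, Fin.sum_univ_succ (n := N + 1)]
    simp [pow_succ, List.ofFn_succ, sub_eq_add_neg, -Finsupp.smul_single]

variable {ι : Type*} {k N : ℕ}

/-- The face of the standard simplex spanned by the vertices in `s`. -/
def face [Fintype ι] (s : Set ι) : Set (ι → ℝ) :=
  {w | w ∈ stdSimplex ℝ ι ∧ Function.support w ⊆ s}

theorem comp_mem_stdSimplex {ι' : Type*} [Fintype ι] [Fintype ι'] {e : ι' → ι}
    (he : Function.Injective e) {w : ι → ℝ} (hw : w ∈ face (range e)) :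
    w ∘ e ∈ stdSimplex ℝ ι' := by
  refine ⟨fun i => hw.1.1 _, ?_⟩
  rw [← hw.1.2]
  exact Fintype.sum_of_injective e he _ _
    (fun v hv => Function.notMem_support.1 fun h => hv (hw.2 h)) fun _ => rfl

theorem exists_orderEmbedding_range_eq {s : Set (Fin k)} (hs : s.ncard = N) :
    ∃ e : Fin N ↪o Fin k, range e = s := by
  classical
  rw [ncard_eq_toFinset_card'] at hs
  exact ⟨s.toFinset.orderEmbOfFin hs, by simp⟩

theorem ncard_range_orderEmbedding (e : Fin N ↪o Fin k) : (range e).ncard = N := by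
  rw [← image_univ, ncard_image_of_injective _ e.injective, ncard_univ, Nat.card_fin]

theorem eq_range_of_subset_of_ncard {s : Set (Fin k)} {e : Fin N ↪o Fin k} (h : s ⊆ range e)
    (hs : s.ncard = N) : s = range e :=
  eq_of_subset_of_ncard_le h (by rw [ncard_range_orderEmbedding, hs])

variable {T : Type*} {pt : T}

open Classical in
/-- The map on simplices of `stdSimplex ℝ (Fin k)` with `N` vertices glued from the maps `g e` in
the coordinates of the simplex with the vertices `e`. Its value at points in the interior of a
simplex of any other dimension is `pt`. -/
noncomputable def skeletonMap (pt : T) (g : (Fin N ↪o Fin k) → (Fin N → ℝ) → T)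
    (w : Fin k → ℝ) : T :=
  if h : ∃ e : Fin N ↪o Fin k, range e = Function.support w then g h.choose (w ∘ h.choose) else pt

variable {g : (Fin N ↪o Fin k) → (Fin N → ℝ) → T}

theorem skeletonMap_of_ncard_ne {w : Fin k → ℝ} (hw : (Function.support w).ncard ≠ N) :
    skeletonMap pt g w = pt :=
  dif_neg fun ⟨e, he⟩ => hw (he ▸ ncard_range_orderEmbedding e)

variable [TopologicalSpace T]

theorem skeletonMap_eq (hg : ∀ e, IsBased pt (g e)) {e : Fin N ↪o Fin k} {w : Fin k → ℝ}
    (hw : w ∈ face (range e)) : skeletonMap pt g w = g e (w ∘ e) := by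
  by_cases hcard : (Function.support w).ncard = N
  · have hex : ∃ e : Fin N ↪o Fin k, range e = Function.support w :=
      ⟨e, (eq_range_of_subset_of_ncard hw.2 hcard).symm⟩
    have heq : hex.choose = e := OrderEmbedding.range_inj.1 <|
      hex.choose_spec.trans (eq_range_of_subset_of_ncard hw.2 hcard)
    refine (dif_pos hex).trans ?_
    rw [heq]
  · obtain ⟨i, hi⟩ : ∃ i, w (e i) = 0 := by
      by_contra! h
      refine hcard ?_
      rw [hw.2.antisymm (range_subset_iff.2 h), ncard_range_orderEmbedding]
    rw [skeletonMap_of_ncard_ne hcard,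
      (hg e).eq_of_apply_eq_zero _ (comp_mem_stdSimplex e.injective hw) i hi]

theorem continuous_comp_right {ι' : Type*} (e : ι' → ι) :
    Continuous fun w : ι → ℝ => w ∘ e :=
  continuous_pi fun _ => continuous_apply _

theorem continuousOn_skeletonMap (hg : ∀ e, IsBased pt (g e)) {s : Set (Fin k)}
    (hs : s.ncard ≤ N) : ContinuousOn (skeletonMap pt g) (face s) := by
  obtain hs | hs := hs.lt_or_eq
  · refine (continuousOn_const (c := pt)).congr fun w hw => skeletonMap_of_ncard_ne ?_
    exact ((ncard_le_ncard hw.2).trans_lt hs).ne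
  · obtain ⟨e, rfl⟩ := exists_orderEmbedding_range_eq hs
    refine ContinuousOn.congr ?_ fun w hw => skeletonMap_eq hg hw
    exact (hg e).continuousOn.comp (continuous_comp_right e).continuousOn
      fun w hw => comp_mem_stdSimplex e.injective hw

theorem exists_extension_skeletonMap (hg : ∀ e, IsBased pt (g e)) {e : Fin (N + 1) ↪o Fin k}
    (hfill : HasFilling fun i => g ((Fin.succAboveOrderEmb i).trans e)) :
    ∃ G : (Fin k → ℝ) → T, ContinuousOn G (face (range e)) ∧
      ∀ w ∈ face (range e), Function.support w ≠ range e → G w = skeletonMap pt g w := by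
  obtain ⟨G, hG, hGz⟩ := hfill
  refine ⟨fun w => G (w ∘ e), hG.comp (continuous_comp_right e).continuousOn
    fun w hw => comp_mem_stdSimplex e.injective hw, fun w hw hne => ?_⟩
  obtain ⟨i, hi⟩ : ∃ i, w (e i) = 0 := by
    by_contra! h
    exact hne (hw.2.antisymm (range_subset_iff.2 h))
  refine (hGz _ (comp_mem_stdSimplex e.injective hw) i hi).trans (skeletonMap_eq hg ⟨hw.1, ?_⟩).symm
  intro v hv
  obtain ⟨j, rfl⟩ := hw.2 hv
  obtain ⟨l, rfl⟩ := Fin.exists_succAbove_eq (x := j) (y := i) (by rintro rfl; exact hv hi)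
  exact ⟨l, rfl⟩

variable {Y : Type*} [TopologicalSpace Y] {φ : Y → ι → ℝ}

theorem isClosed_support_subset (hφ : Continuous φ) (s : Set ι) :
    IsClosed {x | Function.support (φ x) ⊆ s} := by
  have heq : {x | Function.support (φ x) ⊆ s} = ⋂ v ∈ sᶜ, {x | φ x v = 0} := by
    ext x
    simp only [mem_iInter, mem_compl_iff]
    exact Function.support_subset_iff'
  rw [heq]
  exact isClosed_biInter fun v _ => isClosed_eq ((continuous_apply v).comp hφ) continuous_const

variable [Finite ι]

theorem continuous_of_continuousOn_support_subset (hφ : Continuous φ) {h : Y → T}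
    (hh : ∀ x₀, ContinuousOn h {x | Function.support (φ x) ⊆ Function.support (φ x₀)}) :
    Continuous h := by
  let S := range fun x => Function.support (φ x)
  refine LocallyFinite.continuous (f := fun s : S => {x | Function.support (φ x) ⊆ s})
    (locallyFinite_of_finite _) (eq_univ_of_forall fun x => mem_iUnion.2 ⟨⟨_, x, rfl⟩, Subset.rfl⟩)
    (fun s => isClosed_support_subset hφ s) ?_
  rintro ⟨_, x₀, rfl⟩
  exact hh x₀

theorem continuous_ite_ncard_support (hφ : Continuous φ)
    (hcard : ∀ x, (Function.support (φ x)).ncard ≤ N) {S : Y → T} {G : Set ι → Y → T}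
    (hS : ∀ x₀, (Function.support (φ x₀)).ncard < N →
      ContinuousOn S {x | Function.support (φ x) ⊆ Function.support (φ x₀)})
    (hG : ∀ x₀, (Function.support (φ x₀)).ncard = N → ContinuousOn (G (Function.support (φ x₀)))
      {x | Function.support (φ x) ⊆ Function.support (φ x₀)})
    (hGS : ∀ x₀, (Function.support (φ x₀)).ncard = N →
      ∀ x, Function.support (φ x) ⊂ Function.support (φ x₀) →
        G (Function.support (φ x₀)) x = S x) :
    Continuous fun x =>
      if (Function.support (φ x)).ncard < N then S x else G (Function.support (φ x)) x := by
  refine continuous_of_continuousOn_support_subset hφ fun x₀ => ?_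
  obtain hlt | heq := (hcard x₀).lt_or_eq
  · exact (hS x₀ hlt).congr fun x hx => if_pos ((ncard_le_ncard hx).trans_lt hlt)
  · refine (hG x₀ heq).congr fun x hx => ?_
    obtain hx | hx := Set.eq_or_ssubset_of_subset hx
    · exact (if_neg (by rw [hx, heq]; exact lt_irrefl N)).trans (by rw [hx])
    · exact (if_pos (heq ▸ ncard_lt_ncard hx)).trans (hGS x₀ heq x hx).symm

end Skeleton

section Nonconstant

/-- The vectors outside the diagonal line. -/
def IsNonconstant {ι : Type*} (x : ι → ℝ) : Prop := ∃ i j, x i ≠ x j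

theorem isOpen_setOf_isNonconstant {ι : Type*} : IsOpen {x : ι → ℝ | IsNonconstant x} := by
  have heq : {x : ι → ℝ | IsNonconstant x} = ⋃ (i) (j), {x | x i ≠ x j} := by
    ext x
    simp [IsNonconstant]
  rw [heq]
  exact isOpen_iUnion fun i => isOpen_iUnion fun j =>
    isOpen_ne_fun (continuous_apply i) (continuous_apply j)

/-- The boundary of the standard simplex. -/
def simplexBoundary (ι : Type*) [Fintype ι] : Set (ι → ℝ) :=
  {z | z ∈ stdSimplex ℝ ι ∧ ∃ i, z i = 0}

theorem isNonconstant_of_mem_simplexBoundary {ι : Type*} [Fintype ι] {z : ι → ℝ}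
    (hz : z ∈ simplexBoundary ι) : IsNonconstant z := by
  obtain ⟨hz, i, hi⟩ := hz
  by_contra h
  unfold IsNonconstant at h
  push Not at h
  have hzero : ∀ j, z j = 0 := fun j => (h j i).trans hi
  simpa [hzero] using hz.2

variable {m : ℕ}

/-- Wraps the simplex with `m + 1` vertices around the diagonal line of `ℝ ^ (m + 2)`, sending the
boundary of the simplex to a single point. -/
noncomputable def wrap (y : Fin (m + 1) → ℝ) : Fin (m + 2) → ℝ :=
  Fin.cons (1 - 2 * ((m + 1) * minCoord y)) fun i => (m + 1) * minCoord y * (y i - minCoord y)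

theorem continuous_wrap : Continuous (wrap : (Fin (m + 1) → ℝ) → _) := by
  have hmin := continuous_minCoord (m := m)
  refine continuous_pi (Fin.cases ?_ fun j => ?_) <;> simp only [wrap, Fin.cons_zero, Fin.cons_succ]
    <;> fun_prop

theorem wrap_eq_single {y : Fin (m + 1) → ℝ} (hy : minCoord y = 0) : wrap y = Pi.single 0 1 := by
  funext i
  refine Fin.cases ?_ (fun j => ?_) i <;> simp [wrap, hy]

theorem isNonconstant_of_mem_segment_wrap {z p : Fin (m + 2) → ℝ}
    (hz : z ∈ simplexBoundary (Fin (m + 2))) (hp : p ∈ segment ℝ z (wrap (Fin.tail z))) :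
    IsNonconstant p := by
  obtain ⟨a, b, ha, hb, hab, rfl⟩ := hp
  obtain ⟨⟨hnonneg, hsum⟩, l, hl⟩ := hz
  by_contra h
  unfold IsNonconstant at h
  push Not at h
  obtain ⟨j, hj⟩ := exists_eq_minCoord (Fin.tail z)
  have hμ : 0 ≤ minCoord (Fin.tail z) := minCoord_nonneg fun i => hnonneg _
  set μ := minCoord (Fin.tail z)
  have heq (i : Fin (m + 1)) : a * z 0 + b * (1 - 2 * ((m + 1) * μ)) =
      a * z i.succ + b * ((m + 1) * μ * (z i.succ - μ)) := by
    simpa [wrap, Fin.tail] using h 0 i.succ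
  have hzero : a * z 0 + b * (1 - 2 * ((m + 1) * μ)) = a * μ := by
    simpa [show z j.succ = μ from hj] using heq j
  have hne : a + b * ((m + 1) * μ) ≠ 0 := by
    intro h0
    have hc : 0 ≤ b * ((m + 1) * μ) := by positivity
    obtain ⟨rfl, rfl⟩ : a = 0 ∧ b = 1 := by constructor <;> linarith
    linarith
  have htail (i : Fin (m + 1)) : z i.succ = μ := by
    refine sub_eq_zero.1 ((mul_eq_zero.1 ?_).resolve_left hne)
    linarith [heq i]
  have hz₀ : z 0 = 1 - (m + 1) * μ := by
    rw [Fin.sum_univ_succ] at hsum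
    simp only [htail, Finset.sum_const, Finset.card_univ, Fintype.card_fin, nsmul_eq_mul] at hsum
    push_cast at hsum
    linarith
  have hcases : z 0 = 0 ∨ μ = 0 := Fin.cases Or.inl (fun i hi => .inr (htail i ▸ hi)) l hl
  obtain h0 | h0 := hcases
  · have hm : ((m : ℝ) + 1) * μ = 1 := by linarith
    have hμ' : μ ≠ 0 := right_ne_zero_of_mul_eq_one hm
    rw [h0, hm] at hzero
    have haμ : a * μ = 0 := le_antisymm (by linarith) (by positivity)
    have := (mul_eq_zero.1 haμ).resolve_right hμ'
    nlinarith
  · rw [hz₀, h0] at hzero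
    linarith

theorem isNonconstant_wrap_tail {z : Fin (m + 2) → ℝ} (hz : z ∈ simplexBoundary (Fin (m + 2))) :
    IsNonconstant (wrap (Fin.tail z)) :=
  isNonconstant_of_mem_segment_wrap hz (right_mem_segment ℝ _ _)

theorem isNonconstant_wrap {y : Fin (m + 1) → ℝ} (hy : y ∈ stdSimplex ℝ (Fin (m + 1))) :
    IsNonconstant (wrap y) :=
  isNonconstant_wrap_tail (z := Fin.insertNth (α := fun _ => ℝ) 0 0 y)
    ⟨insertNth_zero_mem_stdSimplex 0 hy, 0, by simp⟩

/-- A homotopy model of the sphere of dimension `m`. -/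
abbrev NonconstantVector (m : ℕ) : Type := {x : Fin (m + 2) → ℝ // IsNonconstant x}

/-- The common value of `wrapMap` on the boundary of the simplex. -/
def basePoint : NonconstantVector m := ⟨Pi.single 0 1, 0, Fin.last _, by simp [Fin.ext_iff]⟩

open Classical in
/-- The map `wrap` with values in `NonconstantVector m`, with the junk value `basePoint` where
`wrap y` is constant. -/
noncomputable def wrapMap (y : Fin (m + 1) → ℝ) : NonconstantVector m :=
  if h : IsNonconstant (wrap y) then ⟨wrap y, h⟩ else basePoint

theorem coe_wrapMap {y : Fin (m + 1) → ℝ} (hy : IsNonconstant (wrap y)) :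
    (wrapMap y : Fin (m + 2) → ℝ) = wrap y := by
  rw [wrapMap, dif_pos hy]

theorem continuousOn_wrapMap :
    ContinuousOn (wrapMap (m := m)) {y | IsNonconstant (wrap y)} := by
  refine Topology.IsInducing.subtypeVal.continuousOn_iff.2 ?_
  exact continuous_wrap.continuousOn.congr fun y hy => coe_wrapMap hy

theorem wrapMap_eq_basePoint {y : Fin (m + 1) → ℝ} (hy : ∀ i, 0 ≤ y i) {i : Fin (m + 1)}
    (hi : y i = 0) : wrapMap y = basePoint := by
  have hsingle := wrap_eq_single (minCoord_eq_zero hy hi)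
  exact Subtype.ext <| (coe_wrapMap (hsingle ▸ basePoint.2)).trans hsingle

theorem isBased_wrapMap : IsBased basePoint (wrapMap (m := m)) where
  continuousOn := continuousOn_wrapMap.mono fun _ => isNonconstant_wrap
  eq_of_apply_eq_zero _ hy _ := wrapMap_eq_basePoint hy.1

theorem continuousOn_wrapMap_tail :
    ContinuousOn (fun z => wrapMap (Fin.tail z)) (simplexBoundary (Fin (m + 2))) := by
  refine continuousOn_wrapMap.comp ?_ fun z => isNonconstant_wrap_tail
  exact (continuous_pi fun i => continuous_apply i.succ).continuousOn

end Nonconstant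

section Hopf

open ListChain

variable {k m : ℕ}

theorem linearMap_apply_eq_zero {ι κ : Type*} [Finite ι] [Finite κ] {c : ι → κ} {w : ι → ℝ}
    {i : κ} (h : ∀ v, w v ≠ 0 → c v ≠ i) : FunOnFinite.linearMap ℝ ℝ c w i = 0 := by
  classical
  have := Fintype.ofFinite ι
  rw [FunOnFinite.linearMap_apply_apply]
  refine Finset.sum_eq_zero fun v hv => ?_
  by_contra hne
  exact h v hne (Finset.mem_filter.1 hv).2

theorem linearMap_apply_comp {ι κ ι' : Type*} [Finite ι] [Finite κ] {c : ι → κ} {w : ι → ℝ}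
    {e : ι' → ι} (hw : Function.support w ⊆ range e) (hinj : Function.Injective (c ∘ e))
    (i : ι') : FunOnFinite.linearMap ℝ ℝ c w (c (e i)) = w (e i) := by
  classical
  have := Fintype.ofFinite ι
  rw [FunOnFinite.linearMap_apply_apply]
  refine Finset.sum_eq_single_of_mem _ (by simp) fun v hv hne => ?_
  by_contra hwv
  obtain ⟨j, rfl⟩ := hw hwv
  exact hne (congrArg e (hinj (Finset.mem_filter.1 hv).2))

/-- The simplicial map of the labels `c`, followed by the map of the boundary of the simplex to the
sphere that collapses all facets but one. -/
noncomputable def labelMap (c : Fin k → Fin (m + 2)) (w : Fin k → ℝ) : NonconstantVector m :=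
  wrapMap (Fin.tail (FunOnFinite.linearMap ℝ ℝ c w))

theorem skeletonMap_eq_labelMap
    {g : (Fin (m + 1) ↪o Fin k) → (Fin (m + 1) → ℝ) → NonconstantVector m}
    (hg : ∀ e, IsBased basePoint (g e)) {c : Fin k → Fin (m + 2)} (hc : Monotone c)
    {w : Fin k → ℝ} (hw : w ∈ stdSimplex ℝ (Fin k)) (hcard : (Function.support w).ncard ≤ m + 1)
    (hgw : ∀ e : Fin (m + 1) ↪o Fin k, range e = Function.support w →
      g e = if ∀ j, c (e j) = Fin.succ j then wrapMap else fun _ => basePoint) :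
    skeletonMap basePoint g w = labelMap c w := by
  unfold labelMap
  have hmem : FunOnFinite.linearMap ℝ ℝ c w ∈ stdSimplex ℝ (Fin (m + 2)) :=
    stdSimplex.image_linearMap _ (mem_image_of_mem _ hw)
  by_cases hall : ∀ j : Fin (m + 1), ∃ v, w v ≠ 0 ∧ c v = j.succ
  · choose v hv hcv using hall
    have hmono : StrictMono v := fun i j hij => hc.reflect_lt (by simpa [hcv] using hij)
    let e : Fin (m + 1) ↪o Fin k := OrderEmbedding.ofStrictMono v hmono
    have hrange : range e = Function.support w :=
      eq_of_subset_of_ncard_le (range_subset_iff.2 hv) (by rwa [ncard_range_orderEmbedding])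
    rw [skeletonMap_eq hg ⟨hw, hrange.ge⟩, hgw e hrange, if_pos (by exact hcv)]
    congr 1
    funext j
    have hinj : Function.Injective (c ∘ e) := fun i j hij =>
      Fin.succ_injective _ ((hcv i).symm.trans (Eq.trans hij (hcv j)))
    refine (linearMap_apply_comp hrange.ge hinj j).symm.trans ?_
    exact congrArg _ (hcv j)
  · push Not at hall
    obtain ⟨j, hj⟩ := hall
    refine Eq.trans ?_ (wrapMap_eq_basePoint (fun i => hmem.1 _) (linearMap_apply_eq_zero hj)).symm
    by_cases hcard' : (Function.support w).ncard = m + 1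
    · obtain ⟨e, he⟩ := exists_orderEmbedding_range_eq hcard'
      rw [skeletonMap_eq hg ⟨hw, he.ge⟩, hgw e he, if_neg]
      exact fun h => hj (e j) (he.le ⟨j, rfl⟩) (h j)
    · exact skeletonMap_of_ncard_ne hcard'

theorem map_ofFn_eq_range'_iff {e : Fin (m + 1) → Fin k} {c : Fin k → Fin (m + 2)} :
    (List.ofFn e).map (fun v => (c v : ℕ)) = List.range' 1 (m + 1) ↔ ∀ j, c (e j) = Fin.succ j := by
  have hrange : List.range' 1 (m + 1) = List.ofFn fun j : Fin (m + 1) => (j : ℕ) + 1 := by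
    exact List.ext_getElem (by simp) fun i _ _ => by rw [List.getElem_ofFn]; simp [add_comm]
  rw [hrange, List.map_ofFn, List.ofFn_inj, funext_iff]
  simp [Fin.ext_iff]

theorem ofFn_mem_nerve {Y : Type*} {U : Fin k → Set Y} {A : Set Y} {N : ℕ}
    (e : Fin (N + 1) ↪o Fin k) {x : Y} (hx : x ∈ A) (hU : ∀ i, x ∈ U (e i)) :
    List.ofFn e ∈ nerve U A := by
  refine ⟨x, hx, by simp, ?_, fun v hv => ?_⟩
  · rw [List.pairwise_ofFn]
    exact fun i j hij => e.monotone hij.le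
  · obtain ⟨i, rfl⟩ := List.mem_ofFn.1 hv
    exact hU i

theorem IsCoverOfOrderLE.ncard_support_le {ι : Type*} [Finite ι] {U : ι → Set X} {n : ℕ}
    (hU : IsCoverOfOrderLE n U) {w : ι → ℝ} {x : X} (hw : ∀ i, w i ≠ 0 → x ∈ U i) :
    (Function.support w).ncard ≤ n + 1 := by
  classical
  have := Fintype.ofFinite ι
  rw [ncard_eq_toFinset_card']
  exact hU.card_le x _ fun i hi => hw i (by simpa using hi)

variable {Y : Type*} {U : Fin k → Set Y} {A : Set Y} {c : Fin k → Fin (m + 2)}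
  {u : ListChain (Fin k) →ₗ[ℤ] ℤ} {f : ℤ → (Fin (m + 1) → ℝ) → NonconstantVector m}

/-- The map of the simplices with `m + 1` vertices to the sphere whose degrees are the values of
the cochain `u`, where `f d` is a map of degree `d`. -/
noncomputable def cochainMap (f : ℤ → (Fin (m + 1) → ℝ) → NonconstantVector m)
    (u : ListChain (Fin k) →ₗ[ℤ] ℤ) : (Fin k → ℝ) → NonconstantVector m :=
  skeletonMap basePoint fun e => f (u (simplex (List.ofFn e)))

theorem cochainMap_eq_labelMap (hf : ∀ d, IsBased basePoint (f d))
    (hf₀ : f 0 = fun _ => basePoint) (hf₁ : f 1 = wrapMap) (hc : Monotone c)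
    (hu : ∀ l ∈ nerve U A, l.length = m + 1 →
      u (simplex l) = faceCochain (m + 1) (fun v => c v) (simplex l))
    {x : Y} (hx : x ∈ A) {w : Fin k → ℝ} (hw : w ∈ stdSimplex ℝ (Fin k))
    (hwU : ∀ v, w v ≠ 0 → x ∈ U v) (hcard : (Function.support w).ncard ≤ m + 1) :
    cochainMap f u w = labelMap c w := by
  refine skeletonMap_eq_labelMap (fun e => hf _) hc hw hcard fun e he => ?_
  rw [hu _ (ofFn_mem_nerve e hx fun i => hwU _ (he.le ⟨i, rfl⟩)) List.length_ofFn,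
    faceCochain_simplex]
  simp only [map_ofFn_eq_range'_iff]
  split_ifs
  exacts [hf₁, hf₀]

theorem exists_extension_cochainMap (hf : ∀ d, IsBased basePoint (f d))
    (hfill : ∀ d : Fin (m + 2) → ℤ, ∑ i : Fin (m + 2), (-1) ^ (i : ℕ) * d i = 0 →
      HasFilling fun i => f (d i)) {e : Fin (m + 2) ↪o Fin k}
    (hu : u (augBoundary (simplex (List.ofFn e))) = 0) :
    ∃ G : (Fin k → ℝ) → NonconstantVector m, ContinuousOn G (face (range e)) ∧
      ∀ w ∈ face (range e), Function.support w ≠ range e → G w = cochainMap f u w := by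
  refine exists_extension_skeletonMap (fun e => hf _) (hfill _ ?_)
  rw [augBoundary_simplex, augBoundaryList_ofFn, map_sum] at hu
  simp only [map_smul, smul_eq_mul] at hu
  exact hu

variable [TopologicalSpace Y] {φ : Y → Fin k → ℝ}

theorem continuousOn_labelMap (hφ : Continuous φ) (hφs : ∀ x, φ x ∈ stdSimplex ℝ (Fin k))
    {s : Set (Fin k)} {i : Fin (m + 2)} (hs : ∀ v ∈ s, c v ≠ i) :
    ContinuousOn (fun x => labelMap c (φ x)) {x | Function.support (φ x) ⊆ s} :=
  continuousOn_wrapMap_tail.comp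
    ((FunOnFinite.continuous_linearMap ℝ ℝ c).comp hφ).continuousOn fun x hx =>
      ⟨stdSimplex.image_linearMap c (mem_image_of_mem _ (hφs x)), i,
        linearMap_apply_eq_zero fun v hv => hs v (hx hv)⟩

theorem exists_extension_of_ncard_support_eq
    (hf : ∀ d, IsBased basePoint (f d))
    (hfill : ∀ d : Fin (m + 2) → ℤ, ∑ i : Fin (m + 2), (-1) ^ (i : ℕ) * d i = 0 →
      HasFilling fun i => f (d i))
    (hA : ∀ x ∈ A, ∃ i, ∀ v, x ∈ U v → c v ≠ i)
    (hu : ∀ l ∈ nerve U univ, l.length = m + 2 → u (augBoundary (simplex l)) = 0)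
    (hφ : Continuous φ) (hφs : ∀ x, φ x ∈ stdSimplex ℝ (Fin k))
    (hφU : ∀ x v, φ x v ≠ 0 → x ∈ U v)
    (hAc : ∀ x₁ ∈ A, ∀ x, Function.support (φ x) ⊂ Function.support (φ x₁) →
      (Function.support (φ x)).ncard < m + 2 → cochainMap f u (φ x) = labelMap c (φ x))
    {s : Set (Fin k)} (hs : s.ncard = m + 2) {x₀ : Y} (hx₀ : Function.support (φ x₀) = s) :
    ∃ G : Y → NonconstantVector m, ContinuousOn G {x | Function.support (φ x) ⊆ s} ∧
      (∀ x, Function.support (φ x) ⊂ s → G x = cochainMap f u (φ x)) ∧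
        ∀ x ∈ A, Function.support (φ x) = s → G x = labelMap c (φ x) := by
  by_cases hsA : ∃ x₁ ∈ A, Function.support (φ x₁) = s
  · obtain ⟨x₁, hx₁, rfl⟩ := hsA
    obtain ⟨i, hi⟩ := hA x₁ hx₁
    exact ⟨fun x => labelMap c (φ x), continuousOn_labelMap hφ hφs fun v hv => hi v (hφU x₁ v hv),
      fun x hx => (hAc x₁ hx₁ x hx (hs ▸ ncard_lt_ncard hx)).symm, fun _ _ _ => rfl⟩
  · obtain ⟨e, rfl⟩ := exists_orderEmbedding_range_eq hs
    have hnerve := ofFn_mem_nerve e (mem_univ x₀) fun i => hφU x₀ _ (hx₀.ge ⟨i, rfl⟩)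
    obtain ⟨G, hG, hGS⟩ := exists_extension_cochainMap hf hfill (hu _ hnerve List.length_ofFn)
    exact ⟨fun x => G (φ x), hG.comp hφ.continuousOn fun x hx => ⟨hφs x, hx⟩,
      fun x hx => hGS _ ⟨hφs x, hx.subset⟩ hx.ne, fun x hx h => absurd ⟨x, hx, h⟩ hsA⟩

-- The Hopf extension theorem: `u` is a cocycle on the nerve of the cover that on the nerve of `A`
-- is the pullback of the fundamental cocycle of the sphere.
theorem exists_continuous_eq_labelMap (hm : 1 ≤ m)
    (hU : IsCoverOfOrderLE (m + 1) U) (hc : Monotone c)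
    (hA : ∀ x ∈ A, ∃ i, ∀ v, x ∈ U v → c v ≠ i)
    (huA : ∀ l ∈ nerve U A, l.length = m + 1 →
      u (simplex l) = faceCochain (m + 1) (fun v => c v) (simplex l))
    (hu : ∀ l ∈ nerve U univ, l.length = m + 2 → u (augBoundary (simplex l)) = 0)
    (hφ : Continuous φ) (hφs : ∀ x, φ x ∈ stdSimplex ℝ (Fin k))
    (hφU : ∀ x v, φ x v ≠ 0 → x ∈ U v) :
    ∃ h : Y → NonconstantVector m, Continuous h ∧ ∀ x ∈ A, h x = labelMap c (φ x) := by
  obtain ⟨f, hf, hf₀, hf₁, hfill⟩ := isBased_wrapMap.exists_multiples hm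
  have hcard (x : Y) : (Function.support (φ x)).ncard ≤ m + 2 := hU.ncard_support_le (hφU x)
  have hAc {x₁ x : Y} (hx₁ : x₁ ∈ A) (hx : Function.support (φ x) ⊆ Function.support (φ x₁))
      (hlt : (Function.support (φ x)).ncard < m + 2) : cochainMap f u (φ x) = labelMap c (φ x) :=
    cochainMap_eq_labelMap hf hf₀ hf₁ hc huA hx₁ (hφs x) (fun v hv => hφU x₁ v (hx hv))
      (Nat.le_of_lt_succ hlt)
  have : Inhabited (NonconstantVector m) := ⟨basePoint⟩
  choose! G hG hGS hGA using fun s hs (hx : ∃ x₀, Function.support (φ x₀) = s) =>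
    exists_extension_of_ncard_support_eq hf hfill hA hu hφ hφs hφU
      (fun x₁ hx₁ x hx => hAc hx₁ hx.subset) hs hx.choose_spec
  refine ⟨_, continuous_ite_ncard_support hφ hcard (S := fun x => cochainMap f u (φ x)) (G := G)
    (fun x₀ hx₀ => ?_) (fun x₀ hx₀ => hG _ hx₀ ⟨x₀, rfl⟩) (fun x₀ hx₀ => hGS _ hx₀ ⟨x₀, rfl⟩),
    fun x hx => ?_⟩
  · exact (continuousOn_skeletonMap (fun e => hf _) (Nat.le_of_lt_succ hx₀)).comp hφ.continuousOn
      fun x hx => ⟨hφs x, hx⟩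
  · split_ifs with hlt
    · exact hAc hx Subset.rfl hlt
    · exact hGA _ (le_antisymm (hcard x) (not_lt.1 hlt)) ⟨x, rfl⟩ x hx rfl

end Hopf

section Inessential

open ListChain

theorem IsIndexedCover.exists_continuous_stdSimplex [NormalSpace X] {ι : Type*} [Fintype ι]
    {U : ι → Set X} (hU : IsIndexedCover U) :
    ∃ φ : X → ι → ℝ, Continuous φ ∧ (∀ x, φ x ∈ stdSimplex ℝ ι) ∧
      ∀ x i, φ x i ≠ 0 → x ∈ U i := by
  obtain ⟨f, hf⟩ := hU.exists_partitionOfUnity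
  refine ⟨fun x i => f i x, continuous_pi fun i => (f i).continuous,
    fun x => ⟨fun i => f.nonneg i x, ?_⟩, fun x i hi => hf i x ((f.nonneg i x).lt_of_ne' hi)⟩
  rw [← finsum_eq_sum_of_fintype, f.sum_eq_one (mem_univ x)]

theorem exists_continuous_eqOn_of_segment_subset [NormalSpace X] {E : Type*} [AddCommGroup E]
    [Module ℝ E] [TopologicalSpace E] [IsTopologicalAddGroup E] [ContinuousSMul ℝ E] {V : Set E}
    (hV : IsOpen V) {A : Set X} (hA : IsClosed A) {f h : X → E} (hf : Continuous f)
    (hh : Continuous h) (hhV : ∀ x, h x ∈ V) (hseg : ∀ x ∈ A, segment ℝ (f x) (h x) ⊆ V) :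
    ∃ F : X → E, Continuous F ∧ (∀ x, F x ∈ V) ∧ EqOn F f A := by
  let H (x : X) (t : ℝ) : E := AffineMap.lineMap (f x) (h x) t
  have hH : Continuous fun p : X × ℝ => H p.1 p.2 := by
    simp only [H, AffineMap.lineMap_apply_module']
    fun_prop
  let B : Set X := Prod.fst '' {p : X × Icc (0 : ℝ) 1 | H p.1 p.2 ∉ V}
  have hB : IsClosed B := isClosedMap_fst_of_compactSpace _ <| hV.isClosed_compl.preimage <|
    hH.comp (continuous_fst.prodMk (continuous_subtype_val.comp continuous_snd))
  have hAB : Disjoint A B := by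
    rw [Set.disjoint_left]
    rintro _ hx ⟨⟨x, t⟩, ht, rfl⟩
    refine ht (hseg x hx ?_)
    rw [segment_eq_image_lineMap]
    exact mem_image_of_mem _ t.2
  obtain ⟨θ, hθA, hθB, hθ⟩ := exists_continuous_zero_one_of_isClosed hA hB hAB
  refine ⟨fun x => H x (θ x), hH.comp (continuous_id.prodMk θ.continuous), fun x => ?_,
    fun x hx => by simp [H, hθA hx]⟩
  by_cases hx : x ∈ B
  · simpa [H, hθB hx] using hhV x
  · by_contra h
    exact hx ⟨(x, ⟨θ x, hθ x⟩), h, rfl⟩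

variable {m : ℕ}

/-- The retraction of the nonconstant vectors onto the boundary of the simplex that first translates
along the diagonal until the smallest coordinate is zero and then rescales. -/
noncomputable def boundaryRetraction (x : Fin (m + 1) → ℝ) (i : Fin (m + 1)) : ℝ :=
  (x i - minCoord x) / ∑ j, (x j - minCoord x)

theorem sum_sub_minCoord_pos {x : Fin (m + 1) → ℝ} (hx : IsNonconstant x) :
    0 < ∑ j, (x j - minCoord x) := by
  refine (Finset.sum_nonneg fun j _ => sub_nonneg.2 (minCoord_le x j)).lt_of_ne' fun h => ?_
  rw [Finset.sum_eq_zero_iff_of_nonneg fun j _ => sub_nonneg.2 (minCoord_le x j)] at h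
  obtain ⟨i, j, hij⟩ := hx
  refine hij ?_
  rw [sub_eq_zero.1 (h i (Finset.mem_univ i)), sub_eq_zero.1 (h j (Finset.mem_univ j))]

theorem boundaryRetraction_mem {x : Fin (m + 1) → ℝ} (hx : IsNonconstant x) :
    boundaryRetraction x ∈ simplexBoundary (Fin (m + 1)) := by
  have hpos := sum_sub_minCoord_pos hx
  refine ⟨⟨fun i => div_nonneg (sub_nonneg.2 (minCoord_le x i)) hpos.le, ?_⟩, ?_⟩
  · simp only [boundaryRetraction]
    rw [← Finset.sum_div, div_self hpos.ne']
  · obtain ⟨i, hi⟩ := exists_eq_minCoord x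
    exact ⟨i, by simp [boundaryRetraction, hi]⟩

theorem boundaryRetraction_eq_self {x : Fin (m + 1) → ℝ}
    (hx : x ∈ simplexBoundary (Fin (m + 1))) : boundaryRetraction x = x := by
  obtain ⟨hx, i, hi⟩ := hx
  funext j
  simp [boundaryRetraction, minCoord_eq_zero hx.1 hi, hx.2]

theorem continuousOn_boundaryRetraction :
    ContinuousOn (boundaryRetraction (m := m)) {x | IsNonconstant x} := by
  have hmin := continuous_minCoord (m := m)
  refine continuousOn_pi.2 fun i => ContinuousOn.div ?_ ?_ fun x hx => (sum_sub_minCoord_pos hx).ne'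
  all_goals fun_prop

variable {f : X → Fin (m + 2) → ℝ}

theorem DimLE.exists_labelled_cocycle [CompactSpace X] (hm : 1 ≤ m) (hX : DimLE (m + 1) X)
    (hXX : DimLE (2 * m) (X × X)) (hf : Continuous f)
    (hfs : ∀ x, f x ∈ stdSimplex ℝ (Fin (m + 2))) :
    ∃ (k : ℕ) (U : Fin k → Set X) (c : Fin k → Fin (m + 2)) (u : ListChain (Fin k) →ₗ[ℤ] ℤ),
      IsCoverOfOrderLE (m + 1) U ∧ Monotone c ∧ (∀ v, ∀ x ∈ U v, 0 < f x (c v)) ∧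
      (∀ l ∈ nerve U {x | ∃ i, f x i = 0}, l.length = m + 1 →
        u (simplex l) = faceCochain (m + 1) (fun v => c v) (simplex l)) ∧
      ∀ l ∈ nerve U univ, l.length = m + 2 → u (augBoundary (simplex l)) = 0 := by
  let O (i : ℕ) : Set X := ⋃ h : i < m + 2, {x | 0 < f x ⟨i, h⟩}
  have hO (i : ℕ) : IsOpen (O i) := isOpen_iUnion fun h =>
    isOpen_lt continuous_const ((continuous_apply _).comp hf)
  have hcover (x : X) : ∃ i ≤ m + 1, x ∈ O i := by
    obtain ⟨i, -, hi⟩ := Finset.exists_lt_of_sum_lt (s := Finset.univ) (f := fun _ => 0) (g := f x)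
      (by simp [(hfs x).2])
    exact ⟨i, Nat.le_of_lt_succ i.2, mem_iUnion.2 ⟨i.2, hi⟩⟩
  have hA : ∀ x ∈ {x | ∃ i, f x i = 0}, ∃ i ≤ m + 1, x ∉ O i := by
    rintro x ⟨i, hi⟩
    refine ⟨i, Nat.le_of_lt_succ i.2, fun hx => ?_⟩
    obtain ⟨_, hx⟩ := mem_iUnion.1 hx
    exact hx.ne' hi
  obtain ⟨k, U, χ, hU, b, hbA, hb⟩ :=
    hX.exists_isLabelledCover_obstruction_eq hXX (by omega) hO hcover hA
  obtain ⟨c, rfl⟩ : ∃ c : Fin k → Fin (m + 2), χ = fun v => (c v : ℕ) :=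
    ⟨fun v => ⟨χ v, Nat.lt_succ_of_le (hU.label_le v)⟩, rfl⟩
  refine ⟨k, U, c, faceCochain (m + 1) (fun v => c v) - b, hU.toIsCoverOfOrderLE, hU.monotone,
    fun v x hx => ?_, fun l hl hlen => ?_, fun l hl hlen => ?_⟩
  · obtain ⟨_, h⟩ := mem_iUnion.1 (hU.subset v hx)
    exact h
  · rw [LinearMap.sub_apply, hbA l hl hlen, sub_zero]
  · have hobs := hb l hl hlen
    rw [boundary_apply, augmentation_simplex_eq_zero (by omega), zero_smul, sub_zero] at hobs
    rw [LinearMap.sub_apply, ← hobs, obstruction, LinearMap.comp_apply, sub_self]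

theorem DimLE.exists_continuous_simplexBoundary [CompactSpace X] [T2Space X] (hm : 1 ≤ m)
    (hX : DimLE (m + 1) X) (hXX : DimLE (2 * m) (X × X)) (hf : Continuous f)
    (hfs : ∀ x, f x ∈ stdSimplex ℝ (Fin (m + 2))) :
    ∃ g : X → Fin (m + 2) → ℝ, Continuous g ∧ (∀ x, g x ∈ simplexBoundary (Fin (m + 2))) ∧
      ∀ x, f x ∈ simplexBoundary (Fin (m + 2)) → g x = f x := by
  obtain ⟨k, U, c, u, hU, hc, hUf, huA, hu⟩ := hX.exists_labelled_cocycle hm hXX hf hfs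
  set A : Set X := {x | ∃ i, f x i = 0}
  have hA : IsClosed A := by
    simp only [A, Set.ofPred_exists]
    exact isClosed_iUnion_of_finite fun i =>
      isClosed_eq ((continuous_apply i).comp hf) continuous_const
  obtain ⟨φ, hφ, hφs, hφU⟩ := hU.exists_continuous_stdSimplex
  obtain ⟨h, hh, hhA⟩ := exists_continuous_eq_labelMap hm hU hc
    (fun x hx => hx.imp fun i hi v hv hvi => (hUf v x hv).ne' (hvi ▸ hi)) huA hu hφ hφs hφU
  let p (x : X) : Fin (m + 2) → ℝ := FunOnFinite.linearMap ℝ ℝ c (φ x)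
  have hp (x : X) : p x ∈ stdSimplex ℝ (Fin (m + 2)) :=
    stdSimplex.image_linearMap c (mem_image_of_mem _ (hφs x))
  have hp₀ {x : X} {i : Fin (m + 2)} (hi : f x i = 0) : p x i = 0 :=
    linearMap_apply_eq_zero fun v hv hvi => (hUf v x (hφU x v hv)).ne' (hvi ▸ hi)
  obtain ⟨h', hh', hh'V, hh'A⟩ := exists_continuous_eqOn_of_segment_subset
    isOpen_setOf_isNonconstant hA ((FunOnFinite.continuous_linearMap ℝ ℝ c).comp hφ)
    (continuous_subtype_val.comp hh) (fun x => (h x).2) fun x hx y hy => by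
      obtain ⟨i, hi⟩ := hx
      have hpx : p x ∈ simplexBoundary (Fin (m + 2)) := ⟨hp x, i, hp₀ hi⟩
      rw [Function.comp_apply, Function.comp_apply, hhA x ⟨i, hi⟩, labelMap,
        coe_wrapMap (isNonconstant_wrap_tail hpx)] at hy
      exact isNonconstant_of_mem_segment_wrap hpx hy
  obtain ⟨F, hF, hFV, hFA⟩ := exists_continuous_eqOn_of_segment_subset
    isOpen_setOf_isNonconstant hA hf hh' hh'V fun x hx y hy => by
      rw [hh'A hx] at hy
      obtain ⟨i, hi⟩ := hx
      refine isNonconstant_of_mem_simplexBoundary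
        ⟨(convex_stdSimplex ℝ _).segment_subset (hfs x) (hp x) hy, i, ?_⟩
      obtain ⟨a, b, -, -, -, rfl⟩ := hy
      simpa [hi] using .inr (hp₀ hi)
  refine ⟨fun x => boundaryRetraction (F x), continuousOn_boundaryRetraction.comp_continuous hF hFV,
    fun x => boundaryRetraction_mem (hFV x), fun x hx => ?_⟩
  beta_reduce
  rw [hFA hx.2, boundaryRetraction_eq_self hx]

end Inessential

section Drop

variable {k m : ℕ}

theorem linearMap_comp_eq_self {ι ι' : Type*} [Finite ι] [Finite ι'] {e : ι' → ι}
    (he : Function.Injective e) {w : ι → ℝ} (hw : Function.support w ⊆ range e) :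
    FunOnFinite.linearMap ℝ ℝ e (w ∘ e) = w := by
  funext v
  by_cases hv : v ∈ range e
  · obtain ⟨i, rfl⟩ := hv
    exact linearMap_apply_comp (e := id) (by simp) he i
  · rw [Function.notMem_support.1 fun h => hv (hw h)]
    exact linearMap_apply_eq_zero fun i _ hi => hv ⟨i, hi⟩

theorem linearMap_mem_face {ι ι' : Type*} [Fintype ι] [Fintype ι'] (e : ι' → ι) {z : ι' → ℝ}
    (hz : z ∈ stdSimplex ℝ ι') : FunOnFinite.linearMap ℝ ℝ e z ∈ face (range e) := by
  refine ⟨stdSimplex.image_linearMap e (mem_image_of_mem _ hz), fun v hv => ?_⟩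
  by_contra hne
  exact hv (linearMap_apply_eq_zero fun i _ hi => hne ⟨i, hi⟩)

theorem isCoverOfOrderLE_support {ψ : X → Fin k → ℝ} (hψ : Continuous ψ)
    (hψs : ∀ x, ψ x ∈ stdSimplex ℝ (Fin k)) (hcard : ∀ x, (Function.support (ψ x)).ncard ≤ m + 1) :
    IsCoverOfOrderLE m fun v => {x | 0 < ψ x v} where
  isOpen v := isOpen_lt continuous_const ((continuous_apply v).comp hψ)
  exists_mem x := by
    obtain ⟨v, -, hv⟩ := Finset.exists_lt_of_sum_lt (s := Finset.univ) (f := fun _ => 0) (g := ψ x)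
      (by simp [(hψs x).2])
    exact ⟨v, hv⟩
  card_le x s hs := by
    refine le_trans ?_ (hcard x)
    rw [← ncard_coe_finset]
    exact ncard_le_ncard fun v hv => (hs v hv).ne'

variable {Y : Type*} [TopologicalSpace Y] [CompactSpace Y] [T2Space Y]

theorem DimLE.exists_continuousOn_face (hm : 1 ≤ m) (hY : DimLE (m + 1) Y)
    (hYY : DimLE (2 * m) (Y × Y)) {φ : Y → Fin k → ℝ} (hφ : Continuous φ)
    (hφs : ∀ x, φ x ∈ stdSimplex ℝ (Fin k)) {s : Set (Fin k)} (hs : s.ncard = m + 2) :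
    ∃ g : Y → Fin k → ℝ, ContinuousOn g {x | Function.support (φ x) ⊆ s} ∧
      (∀ x, Function.support (φ x) ⊆ s → g x ∈ face s ∧ Function.support (g x) ≠ s) ∧
        ∀ x, Function.support (φ x) ⊂ s → g x = φ x := by
  obtain ⟨e, rfl⟩ := exists_orderEmbedding_range_eq hs
  let C : Set Y := {x | Function.support (φ x) ⊆ range e}
  have hC : IsClosed C := isClosed_support_subset hφ _
  have : CompactSpace C := isCompact_iff_compactSpace.1 hC.isCompact
  have hCC : Topology.IsClosedEmbedding (Prod.map Subtype.val Subtype.val : C × C → Y × Y) :=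
    hC.isClosedEmbedding_subtypeVal.prodMap hC.isClosedEmbedding_subtypeVal
  obtain ⟨f, hf, hfb, hfφ⟩ :=
    (hY.of_isClosedEmbedding hC.isClosedEmbedding_subtypeVal).exists_continuous_simplexBoundary hm
      (hYY.of_isClosedEmbedding hCC) (f := fun x : C => φ x ∘ e)
      ((continuous_comp_right e).comp (hφ.comp continuous_subtype_val))
      fun x => comp_mem_stdSimplex e.injective ⟨hφs x, x.2⟩
  let g : Y → Fin k → ℝ :=
    Function.extend Subtype.val (fun x : C => FunOnFinite.linearMap ℝ ℝ e (f x)) 0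
  have hg (x : C) : g x = FunOnFinite.linearMap ℝ ℝ e (f x) := Subtype.val_injective.extend_apply ..
  refine ⟨g, ?_, fun x hx => ?_, fun x hx => ?_⟩
  · rw [continuousOn_iff_continuous_domRestrict]
    exact ((FunOnFinite.continuous_linearMap ℝ ℝ e).comp hf).congr fun x => (hg x).symm
  · obtain ⟨hfs, i, hi⟩ := hfb ⟨x, hx⟩
    rw [hg ⟨x, hx⟩]
    refine ⟨linearMap_mem_face e hfs, fun heq => heq.ge ⟨i, rfl⟩ ?_⟩
    exact (linearMap_apply_comp (e := id) (by simp) e.injective i).trans hi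
  · obtain ⟨_, ⟨i, rfl⟩, hi⟩ := exists_of_ssubset hx
    have hφb : φ x ∘ e ∈ simplexBoundary (Fin (m + 2)) :=
      ⟨comp_mem_stdSimplex e.injective ⟨hφs x, hx.subset⟩, i, Function.notMem_support.1 hi⟩
    rw [hg ⟨x, hx.subset⟩, hfφ ⟨x, hx.subset⟩ hφb, linearMap_comp_eq_self e.injective hx.subset]

theorem DimLE.exists_continuous_ncard_support_le (hm : 1 ≤ m) (hY : DimLE (m + 1) Y)
    (hYY : DimLE (2 * m) (Y × Y)) {φ : Y → Fin k → ℝ} (hφ : Continuous φ)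
    (hφs : ∀ x, φ x ∈ stdSimplex ℝ (Fin k))
    (hcard : ∀ x, (Function.support (φ x)).ncard ≤ m + 2) :
    ∃ ψ : Y → Fin k → ℝ, Continuous ψ ∧
      ∀ x, ψ x ∈ face (Function.support (φ x)) ∧ (Function.support (ψ x)).ncard ≤ m + 1 := by
  choose! G hG hGface hGφ using fun (s : Set (Fin k)) (hs : s.ncard = m + 2) =>
    hY.exists_continuousOn_face hm hYY hφ hφs hs
  refine ⟨_, continuous_ite_ncard_support hφ hcard (S := φ) (G := G)
    (fun _ _ => hφ.continuousOn) (fun _ => hG _) (fun _ => hGφ _), fun x => ?_⟩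
  split_ifs with hlt
  · exact ⟨⟨hφs x, Subset.rfl⟩, Nat.le_of_lt_succ hlt⟩
  · have hcard' := le_antisymm (hcard x) (not_lt.1 hlt)
    obtain ⟨hface, hne⟩ := hGface _ hcard' x Subset.rfl
    have hssubset := hface.2.ssubset_of_ne hne
    exact ⟨hface, Nat.le_of_lt_succ ((ncard_lt_ncard hssubset).trans_eq hcard')⟩

theorem DimLE.of_dimLE_sq (hm : 1 ≤ m) (hY : DimLE (m + 1) Y) (hYY : DimLE (2 * m) (Y × Y)) :
    DimLE m Y := by
  intro k₀ U₀ hU₀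
  obtain ⟨k, U, hU, hUU₀⟩ := hY k₀ U₀ hU₀
  obtain ⟨φ, hφ, hφs, hφU⟩ := hU.exists_continuous_stdSimplex
  obtain ⟨ψ, hψ, hψφ⟩ := hY.exists_continuous_ncard_support_le hm hYY hφ hφs
    fun x => hU.ncard_support_le (hφU x)
  refine ⟨k, _, isCoverOfOrderLE_support hψ (fun x => (hψφ x).1.1) fun x => (hψφ x).2, fun v => ?_⟩
  refine (hUU₀ v).imp fun j hj x hx => hj (hφU x v ?_)
  exact (hψφ x).1.2 (ne_of_gt hx)

end Drop

section Topdim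

variable {Y : Type*} [TopologicalSpace Y] [CompactSpace Y]

theorem topDim_le_of_isClosedEmbedding {f : X → Y} (hf : Topology.IsClosedEmbedding f) :
    topDim X ≤ topDim Y := by
  have : CompactSpace X := hf.compactSpace
  induction hn : topDim Y with
  | top => exact le_top
  | coe n =>
    exact topDim_le_iff_dimLE.2 ((topDim_le_iff_dimLE.1 hn.le).of_isClosedEmbedding hf)

variable [T2Space Y]

theorem topDim_le_topDim_sq : topDim Y ≤ topDim (Y × Y) :=
  topDim_le_of_isClosedEmbedding (f := fun x => (x, x)) <|
    (continuous_id.prodMk continuous_id).isClosedEmbedding fun _ _ h => congrArg Prod.fst h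

theorem two_mul_topDim_le : 2 * topDim Y ≤ topDim (Y × Y) + 1 := by
  induction hm : topDim (Y × Y) with
  | top => exact le_top
  | coe m =>
    have hle : topDim Y ≤ m := topDim_le_topDim_sq.trans hm.le
    obtain ⟨n, hn⟩ := ENat.ne_top_iff_exists.1 (ne_top_of_le_ne_top (ENat.natCast_ne_top m) hle)
    rw [← hn] at hle ⊢
    norm_cast at hle ⊢
    by_contra! hlt
    obtain ⟨d, rfl⟩ : ∃ d, n = d + 1 := ⟨n - 1, by omega⟩
    have hm' : topDim (Y × Y) ≤ (2 * d : ℕ) := hm.le.trans (by exact_mod_cast (by omega))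
    have hd : DimLE d Y := DimLE.of_dimLE_sq (by omega) (topDim_le_iff_dimLE.1 hn.ge)
      (topDim_le_iff_dimLE.1 hm')
    have hle' : ((d + 1 : ℕ) : ℕ∞) ≤ d := hn.le.trans (topDim_le_iff_dimLE.2 hd)
    exact absurd (Nat.cast_le.1 hle') (by omega)

end Topdim

theorem topDim_sq_dichotomy_general {K : Type*} [TopologicalSpace K] [CompactSpace K] [T2Space K] :
    2 * topDim K ≤ topDim (K × K) + 1 ∧ topDim (K × K) ≤ 2 * topDim K ∧
      (topDim (K × K) = 2 * topDim K ∨ topDim (K × K) + 1 = 2 * topDim K) := by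
  have hupper : topDim (K × K) ≤ 2 * topDim K := two_mul (topDim K) ▸ topDim_prod_le
  refine ⟨two_mul_topDim_le, hupper, hupper.eq_or_lt.imp_right fun hlt => ?_⟩
  exact le_antisymm (Order.add_one_le_of_lt hlt) two_mul_topDim_le

/-- every finite dimensional compact metric space `K` satisfies
`2 dim K - 1 ≤ dim K² ≤ 2 dim K` (the first inequality stated additively as
`2 dim K ≤ dim K² + 1`); consequently either `dim K² = 2 dim K` or
`dim K² = 2 dim K - 1` (stated additively). -/
theorem topDim_sq_dichotomy {K : Type*} [MetricSpace K] [CompactSpace K]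
    (hfin : topDim K ≠ ⊤) :
    2 * topDim K ≤ topDim (K × K) + 1 ∧ topDim (K × K) ≤ 2 * topDim K ∧
      (topDim (K × K) = 2 * topDim K ∨ topDim (K × K) + 1 = 2 * topDim K) :=
  topDim_sq_dichotomy_general

end MeanDimPaper
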